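/- arXiv:math/0406284 — 3 statements merged into one kernel-verified Lean document; each statement's English description precedes it below -/
import Mathlib

section
/- Let g(n) denote the number of 3×3×3×3 magic cubes with magic sum n. Then the generating function ∑_{n≥0} g(n) t^n, as a formal power series with integer coefficients, equals r(t)/s(t); that is, s(t)·∑_{n≥0} g(n) t^n = r(t) holds in ℤ⟦t⟧, where s(t) = (t³+1)⁴ (t¹²+t⁹+t⁶+t³+1)(1−t³)⁹ (t⁶+t³+1) and r(t) = t⁵⁴+150t⁵¹+5837t⁴⁸+63127t⁴⁵+331124t⁴²+1056374t³⁹+2326380t³⁶+3842273t³³+5055138t³⁰+5512456t²⁷+5055138t²⁴+3842273t²¹+2326380t¹⁸+1056374t¹⁵+331124t¹²+63127t⁹+5837t⁶+150t³+1. -/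
/-!
Averaging over the lines and diagonals shows that the centre of a magic cube is a third of its
magic sum, so that the magic sum is `3 * m` with `m` the central entry. Subtracting `m` from every
entry leaves an array with zero line and diagonal sums. Its corners determine it, and opposite
corners carry opposite values; conversely any eight corner values, one from each opposite pair,
extend to such an array.

The cubes are sorted by the four amounts by which the entries next to the centre fall short of `m`,
one for each axis. These four deviations have equal parity and absolute value at most `m`, and the
permutations and reflections of the axes act on them by signed permutations. So it suffices to
count the cubes with descending nonnegative deviations, each quadruple weighted by the size of its
orbit. Write these deviations as `2 * b₁ + 2 * b₂ + 2 * b₃ + l`, `2 * b₂ + 2 * b₃ + l`,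
`2 * b₃ + l`, `l`, and `m = v + 2 * b₁ + 2 * b₂ + 2 * b₃ + l`.

For fixed `v, b₁, b₂, b₃, l` the cube is determined by its entries at the midpoints of the four
edges at one corner. They range over the lattice points of a given parity in a four-dimensional
box, each of whose sixteen corners is cut off by a bound on the `ℓ¹` distance; all other entries
are then automatically nonnegative. The simplices cut off overlap at most in pairs, at the two ends
of an edge of the box, so inclusion-exclusion stops after two steps. It expresses the count as a
combination of functions of single linear forms in `v, b₁, b₂, b₃, l`, each a polynomial plus a
multiple of a sign where the form is nonnegative, and zero elsewhere.

Summed over all `v, b₁, b₂, b₃, l` and graded by `m`, such a function of a linear form gives a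
rational function. Where the form has coefficients of both signs, Elliott's partial fraction
identity reduces to forms of constant sign, for which the rational function is explicit. Multiplied
by a common denominator, the asserted identity becomes one between integer polynomials. They agree
because they take the same value at `2 ^ 160`, which exceeds the sum of the absolute values of the
coefficients of their difference.
-/

open PowerSeries Finset

/-- The number of 3×3×3×3 magic cubes with magic sum `n`: arrays of nonnegative
integers indexed by `{1,2,3}⁴` all of whose axis-parallel line sums and all of whose
8 main diagonal sums equal `n`.  A main diagonal is indexed by `ε ∈ {0,1}⁴` with
`ε₁ = 0`, the `j`-th index running forward if `ε j = 0` and backward if `ε j = 1`. -/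
noncomputable def magicCube3333 (n : ℕ) : ℕ :=
  Nat.card {a : (Fin 4 → Fin 3) → ℕ //
    (∀ j : Fin 4, ∀ g : Fin 4 → Fin 3, ∑ t : Fin 3, a (Function.update g j t) = n) ∧
    (∀ ε : Fin 4 → Bool, ε 0 = false →
      ∑ t : Fin 3, a (fun j => if ε j then t.rev else t) = n)}

namespace MagicCube

section ConeSeries

variable {R M : Type*} [CommRing R] [AddCommMonoid M]

/-- The series `∑ H (∑ jᵢ • wᵢ) X ^ (∑ jᵢ (dᵢ + 1))` over all families `j` of natural numbers, for a
list of generators `(dᵢ, wᵢ)`. A generator of weight `w` carries its degree minus one, so that all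
degrees are positive and every coefficient is a finite sum. -/
noncomputable def coneSeries : List (ℕ × M) → (M → R) →ₗ[R] R⟦X⟧
  | [] =>
    { toFun := fun H => C (H 0)
      map_add' := fun _ _ => map_add C _ _
      map_smul' := fun _ _ => by simp [smul_eq_C_mul] }
  | g :: gs =>
    { toFun := fun H => mk fun n => ∑ j ∈ range (n + 1), coeff n (X ^ ((g.1 + 1) * j) *
        coneSeries gs (LinearMap.funLeft R R (· + j • g.2) H))
      map_add' := fun _ _ => by ext; simp [mul_add, sum_add_distrib]
      map_smul' := fun _ _ => by ext; simp [mul_sum] }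

theorem coneSeries_nil (H : M → R) : coneSeries [] H = C (H 0) := rfl

theorem coeff_coneSeries_cons (g : ℕ × M) (gs : List (ℕ × M)) (H : M → R) (n : ℕ) :
    coeff n (coneSeries (g :: gs) H) = ∑ j ∈ range (n + 1),
      coeff n (X ^ ((g.1 + 1) * j) * coneSeries gs fun k => H (k + j • g.2)) := by
  simp only [coneSeries, LinearMap.coe_mk, AddHom.coe_mk, coeff_mk]
  rfl

theorem coeff_X_pow_mul_coneSeries_cons (k : ℕ) (g : ℕ × M) (gs : List (ℕ × M)) (H : M → R)
    {n N : ℕ} (hN : n < N) :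
    coeff n (X ^ k * coneSeries (g :: gs) H) = ∑ j ∈ range N,
      coeff n (X ^ (k + (g.1 + 1) * j) * coneSeries gs fun x => H (x + j • g.2)) := by
  have hlt (j : ℕ) (hj : j ∉ range (n - k + 1)) : n < k + (g.1 + 1) * j := by
    have := Nat.le_mul_of_pos_left j (by omega : 0 < g.1 + 1)
    rw [mem_range] at hj
    omega
  rw [coeff_X_pow_mul']
  split_ifs with hk
  · rw [coeff_coneSeries_cons]
    rw [← sum_subset (range_subset_range.mpr (show n - k + 1 ≤ N by omega))
      fun j _ hj => by rw [coeff_X_pow_mul', if_neg (hlt j hj).not_ge]]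
    refine sum_congr rfl fun j _ => ?_
    rw [pow_add, mul_assoc, coeff_X_pow_mul' _ k, if_pos hk]
  · exact (sum_eq_zero fun j _ => by rw [coeff_X_pow_mul', if_neg (by nlinarith)]).symm

theorem coneSeries_cons (g : ℕ × M) (gs : List (ℕ × M)) (H : M → R) :
    coneSeries (g :: gs) H =
      coneSeries gs H + X ^ (g.1 + 1) * coneSeries (g :: gs) fun k => H (k + g.2) := by
  ext n
  have h := coeff_X_pow_mul_coneSeries_cons 0 g gs H (n.lt_succ_self.trans n.succ.lt_succ_self)
  rw [pow_zero, one_mul, sum_range_succ', add_comm] at h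
  rw [h, map_add, coeff_X_pow_mul_coneSeries_cons _ g gs _ n.lt_succ_self]
  simp [mul_add_one, add_comm, add_left_comm, add_smul]

/-- The error term of the recursion is pushed to arbitrarily high degree. -/
theorem eq_of_functional_equation (d : ℕ) (w : M) {F F' B : (M → R) → R⟦X⟧}
    (hF : ∀ H, F H = B H + X ^ (d + 1) * F fun k => H (k + w))
    (hF' : ∀ H, F' H = B H + X ^ (d + 1) * F' fun k => H (k + w)) : F = F' := by
  funext H
  ext n
  induction n using Nat.strong_induction_on generalizing H with
  | _ n ih =>
    rw [hF, hF', map_add, map_add, coeff_X_pow_mul', coeff_X_pow_mul']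
    split_ifs with h
    · rw [ih _ (by omega)]
    · rfl

theorem coneSeries_swap (x y : ℕ × M) (gs : List (ℕ × M)) :
    coneSeries (R := R) (x :: y :: gs) = coneSeries (y :: x :: gs) := by
  refine DFunLike.coe_injective <|
    eq_of_functional_equation x.1 x.2 (fun H => coneSeries_cons x (y :: gs) H) fun H => ?_
  rw [← sub_eq_iff_eq_add]
  refine congrFun (eq_of_functional_equation y.1 y.2
    (F := fun H => coneSeries (y :: x :: gs) H -
      X ^ (x.1 + 1) * coneSeries (y :: x :: gs) fun k => H (k + x.2))
    (fun H => ?_) (fun H => coneSeries_cons y gs H)) H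
  have hyx := coneSeries_cons y (x :: gs) H
  have hyx' := coneSeries_cons y (x :: gs) fun k => H (k + x.2)
  have hx := coneSeries_cons x gs H
  simp only [add_right_comm _ _ x.2] at hyx' ⊢
  linear_combination hyx - X ^ (x.1 + 1) * hyx' + hx

theorem coneSeries_perm {gs gs' : List (ℕ × M)} (h : gs.Perm gs') :
    coneSeries (R := R) gs = coneSeries gs' := by
  induction h with
  | nil => rfl
  | @cons g gs gs' _ ih =>
    exact DFunLike.coe_injective <| eq_of_functional_equation g.1 g.2
      (fun H => coneSeries_cons g gs H) fun H => by rw [ih, ← coneSeries_cons]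
  | swap x y gs => exact coneSeries_swap y x gs
  | trans _ _ ih₁ ih₂ => exact ih₁.trans ih₂

/-- Elliott's partial fraction identity
`1 / ((1 - x) (1 - y)) = (1 / (1 - x) + 1 / (1 - y) - 1) / (1 - x y)`. -/
theorem coneSeries_elliott (x y : ℕ × M) (gs : List (ℕ × M)) (H : M → R) :
    coneSeries (x :: y :: gs) H = coneSeries ((x.1 + y.1 + 1, x.2 + y.2) :: x :: gs) H +
      coneSeries ((x.1 + y.1 + 1, x.2 + y.2) :: y :: gs) H -
      coneSeries ((x.1 + y.1 + 1, x.2 + y.2) :: gs) H := by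
  set g : ℕ × M := (x.1 + y.1 + 1, x.2 + y.2) with hg
  refine congrFun (eq_of_functional_equation g.1 g.2 (F := coneSeries (x :: y :: gs))
    (F' := fun H => coneSeries (g :: x :: gs) H + coneSeries (g :: y :: gs) H -
      coneSeries (g :: gs) H)
    (B := fun H => coneSeries (x :: gs) H + coneSeries (y :: gs) H - coneSeries gs H)
    (fun H => ?_) fun H => ?_) H
  · have hxy := coneSeries_cons x (y :: gs) H
    have hyx := coneSeries_cons y (x :: gs) fun k => H (k + x.2)
    have hx := coneSeries_cons x gs H
    rw [← coneSeries_swap x y] at hyx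
    simp only [hg, ← add_assoc, add_right_comm _ y.2] at hyx ⊢
    linear_combination hxy + X ^ (x.1 + 1) * hyx - hx
  · linear_combination coneSeries_cons g (x :: gs) H + coneSeries_cons g (y :: gs) H -
      coneSeries_cons g gs H

theorem coneSeries_congr_of_mem (S : AddSubmonoid M) {gs : List (ℕ × M)} (hg : ∀ g ∈ gs, g.2 ∈ S)
    {H H' : M → R} (h : ∀ k ∈ S, H k = H' k) : coneSeries gs H = coneSeries gs H' := by
  induction gs generalizing H H' with
  | nil => rw [coneSeries_nil, coneSeries_nil, h 0 S.zero_mem]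
  | cons g gs ih =>
    simp only [List.mem_cons, forall_eq_or_imp] at hg
    ext n
    simp only [coeff_coneSeries_cons]
    refine sum_congr rfl fun j _ => ?_
    rw [ih hg.2 fun k hk => h _ (S.add_mem hk (S.nsmul_mem hg.1 j))]

end ConeSeries

/-- A list of generators with integer weights, sorted by the sign of the weight. -/
structure SignSplit where
  pos : List (ℕ × ℤ)
  neg : List (ℕ × ℤ)
  zero : List (ℕ × ℤ)

namespace SignSplit

/-- All generators of a sorted list. -/
def toList (s : SignSplit) : List (ℕ × ℤ) := s.pos ++ (s.neg ++ s.zero)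

/-- Inserts a generator according to the sign of its weight. -/
def place (s : SignSplit) (g : ℕ × ℤ) : SignSplit :=
  if 0 < g.2 then { s with pos := g :: s.pos }
  else if g.2 < 0 then { s with neg := g :: s.neg }
  else { s with zero := g :: s.zero }

/-- Sorts a list of generators by the sign of the weight. -/
def ofList (gs : List (ℕ × ℤ)) : SignSplit := gs.foldr (fun g s => s.place g) ⟨[], [], []⟩

/-- The part of being sorted by sign that Elliott's reduction relies on. -/
def Sorted (s : SignSplit) : Prop := ∀ g ∈ s.neg ++ s.zero, g.2 ≤ 0

theorem toList_place_perm (s : SignSplit) (g : ℕ × ℤ) :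
    (s.place g).toList.Perm (g :: s.toList) := by
  unfold place
  split_ifs
  · rfl
  · exact List.perm_middle
  · simpa [toList] using List.perm_middle (l₁ := s.pos ++ s.neg)

theorem Sorted.place {s : SignSplit} (hs : s.Sorted) (g : ℕ × ℤ) : (s.place g).Sorted := by
  simp only [Sorted, SignSplit.place, List.mem_append, or_imp, forall_and] at hs ⊢
  split_ifs with hpos hneg
  · exact hs
  · exact ⟨List.forall_mem_cons.2 ⟨hneg.le, hs.1⟩, hs.2⟩
  · exact ⟨hs.1, List.forall_mem_cons.2 ⟨not_lt.1 hpos, hs.2⟩⟩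

theorem toList_ofList_perm (gs : List (ℕ × ℤ)) : (ofList gs).toList.Perm gs := by
  induction gs with
  | nil => rfl
  | cons g gs ih => exact (toList_place_perm _ g).trans (ih.cons g)

theorem sorted_ofList (gs : List (ℕ × ℤ)) : (ofList gs).Sorted := by
  induction gs with
  | nil => simp [ofList, Sorted]
  | cons g gs ih => exact ih.place g

theorem neg_ofList_eq_nil {gs : List (ℕ × ℤ)} (h : ∀ g ∈ gs, 0 ≤ g.2) : (ofList gs).neg = [] := by
  induction gs with
  | nil => rfl
  | cons g gs ih =>
    simp only [List.mem_cons, forall_eq_or_imp] at h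
    change ((ofList gs).place g).neg = []
    unfold place
    split_ifs with hpos hneg
    · exact ih h.2
    · exact absurd hneg h.1.not_gt
    · exact ih h.2

end SignSplit

/-- A signed list of generator lists, obtained by applying Elliott's identity to a positive and a
negative generator for as long as there are both.  Lists left with only negative and zero generators
are dropped.  The first argument is fuel; when it runs out the list is returned as it stands. -/
def elliott : ℕ → SignSplit → List (ℤ × List (ℕ × ℤ))
  | fuel + 1, ⟨x :: P, y :: N, Z⟩ =>
    let g := (x.1 + y.1 + 1, x.2 + y.2)
    elliott fuel (.place ⟨x :: P, N, Z⟩ g) ++ elliott fuel (.place ⟨P, y :: N, Z⟩ g) ++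
      (elliott fuel (.place ⟨P, N, Z⟩ g)).map fun t => (-t.1, t.2)
  | _, ⟨[], _ :: _, _⟩ => []
  | _, s => [(1, s.toList)]

/-- The combination `∑ c • φ gs` over a signed list of pairs `(c, gs)`. -/
def signedSum {α A : Type*} [AddGroup A] (φ : α → A) (l : List (ℤ × α)) : A :=
  (l.map fun t => t.1 • φ t.2).sum

section SignedSum

variable {α A : Type*} [AddCommGroup A] (φ : α → A)

theorem signedSum_append (l l' : List (ℤ × α)) :
    signedSum φ (l ++ l') = signedSum φ l + signedSum φ l' := by simp [signedSum]

theorem signedSum_neg (l : List (ℤ × α)) :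
    signedSum φ (l.map fun t => (-t.1, t.2)) = -signedSum φ l := by
  simp [signedSum, List.sum_neg, Function.comp_def]

theorem signedSum_sum {ι : Type*} (s : Finset ι) (φ : ι → α → A) (l : List (ℤ × α)) :
    signedSum (fun a => ∑ i ∈ s, φ i a) l = ∑ i ∈ s, signedSum (φ i) l := by
  induction l with
  | nil => exact sum_const_zero.symm
  | cons t l ih => simp_all [signedSum, smul_sum, sum_add_distrib]

theorem map_signedSum {B : Type*} [AddCommGroup B] (f : A →+ B) (l : List (ℤ × α)) :
    f (signedSum φ l) = signedSum (fun a => f (φ a)) l := by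
  simp only [signedSum, map_list_sum, List.map_map, Function.comp_def, map_zsmul]

theorem coeff_signedSum (n : ℕ) (φ : α → ℤ⟦X⟧) (l : List (ℤ × α)) :
    coeff n (signedSum φ l) = signedSum (fun a => coeff n (φ a)) l :=
  map_signedSum φ (coeff (R := ℤ) n).toAddMonoidHom l

theorem mul_signedSum (c : ℤ) (φ : α → ℤ) (l : List (ℤ × α)) :
    c * signedSum φ l = signedSum (fun a => c * φ a) l :=
  map_signedSum φ (AddMonoidHom.mulLeft c) l

theorem signedSum_mul (φ : α → ℤ) (l : List (ℤ × α)) (c : ℤ) :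
    signedSum φ l * c = signedSum (fun a => φ a * c) l :=
  map_signedSum φ (AddMonoidHom.mulRight c) l

end SignedSum

variable {R : Type*} [CommRing R]

theorem coneSeries_eq_zero_of_nonpos {gs : List (ℕ × ℤ)} (hg : ∀ g ∈ gs, g.2 ≤ 0) {H : ℤ → R}
    (hH : ∀ k ≤ 0, H k = 0) : coneSeries gs H = 0 := by
  let S : AddSubmonoid ℤ :=
    { carrier := Set.Iic 0, add_mem' := add_nonpos (α := ℤ), zero_mem' := Set.self_mem_Iic }
  rw [coneSeries_congr_of_mem S hg (H' := 0) hH, map_zero]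

theorem coneSeries_elliott_eq {H : ℤ → R} (hH : ∀ k ≤ 0, H k = 0) (fuel : ℕ) {s : SignSplit}
    (hs : s.Sorted) : signedSum (coneSeries · H) (elliott fuel s) = coneSeries s.toList H := by
  fun_induction elliott fuel s with
  | case1 fuel x P y N Z g ih₁ ih₂ ih₃ =>
    have hs' (Q) : (⟨Q, N, Z⟩ : SignSplit).Sorted := fun g hg => hs g (List.mem_cons_of_mem y hg)
    have hplace {s : SignSplit} {gs} (h : s.toList.Perm gs) :
        coneSeries (R := R) (s.place g).toList = coneSeries (g :: gs) :=
      coneSeries_perm ((s.toList_place_perm g).trans (h.cons g))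
    have hyP : (⟨P, y :: N, Z⟩ : SignSplit).toList.Perm (y :: (P ++ (N ++ Z))) := List.perm_middle
    rw [signedSum_append, signedSum_append, signedSum_neg, ih₁ ((hs' _).place g),
      ih₂ (.place (s := ⟨P, y :: N, Z⟩) hs g), ih₃ ((hs' _).place g), hplace .rfl, hplace hyP,
      hplace .rfl, ← sub_eq_add_neg]
    exact (coneSeries_elliott x y _ H).symm.trans
      (DFunLike.congr_fun (coneSeries_perm (hyP.cons x)).symm H)
  | case2 _ y N Z => exact (coneSeries_eq_zero_of_nonpos hs hH).symm
  | case3 _ s _ _ => simp [signedSum]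

theorem eq_zero_of_eval_natCast_eq_zero {p : Polynomial ℤ} {N : ℕ}
    (hp : ∀ i, (p.coeff i).natAbs < N) (h0 : p.eval (N : ℤ) = 0) : p = 0 := by
  by_contra hne
  have hinj : Function.Injective (Int.castRingHom ℝ) := Int.cast_injective
  have hnorm (z : ℤ) : ‖(z : ℝ)‖₊ = z.natAbs := by
    rw [NNReal.natCast_natAbs]
    exact Subtype.ext (Int.norm_cast_real z)
  have hroot : (p.map (Int.castRingHom ℝ)).IsRoot N := by
    rw [Polynomial.IsRoot.def, Polynomial.eval_natCast_map, h0, map_zero]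
  have hlt := hroot.norm_lt_cauchyBound ((Polynomial.map_ne_zero_iff hinj).2 hne)
  have hle : (p.map (Int.castRingHom ℝ)).cauchyBound ≤ N := by
    have hlead : 1 ≤ ‖(p.leadingCoeff : ℝ)‖₊ := by
      rw [hnorm, Nat.one_le_cast, Nat.one_le_iff_ne_zero, Int.natAbs_ne_zero]
      exact Polynomial.leadingCoeff_ne_zero.2 hne
    rw [Polynomial.cauchyBound, Polynomial.leadingCoeff_map_of_injective hinj,
      ← Nat.sub_add_cancel (Nat.one_le_of_lt (hp 0)), Nat.cast_add, Nat.cast_one]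
    refine add_le_add_left ((div_le_self zero_le hlead).trans (Finset.sup_le fun i _ => ?_)) _
    rw [Polynomial.coeff_map, eq_intCast, hnorm]
    exact_mod_cast Nat.le_sub_one_of_lt (hp i)
  refine hlt.not_ge (hle.trans_eq ?_)
  simp

/-- What is known of a polynomial with integer coefficients: its value at `Digest.base`, and an
upper bound for the sum of the absolute values of its coefficients. -/
structure Digest where
  value : ℤ
  bound : ℕ

namespace Digest

/-- The evaluation point: only the zero polynomial has both value zero and bound below `base`. -/
def base : ℕ := 2 ^ 160

/-- The digest of a constant. -/
def const (z : ℤ) : Digest := ⟨z, z.natAbs⟩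

/-- The digest of `X ^ n`. -/
def monomial (n : ℕ) : Digest := ⟨(base ^ n : ℕ), 1⟩

instance : Zero Digest := ⟨⟨0, 0⟩⟩
instance : One Digest := ⟨⟨1, 1⟩⟩
instance : Add Digest := ⟨fun x y => ⟨x.value + y.value, x.bound + y.bound⟩⟩
instance : Sub Digest := ⟨fun x y => ⟨x.value - y.value, x.bound + y.bound⟩⟩
instance : Mul Digest := ⟨fun x y => ⟨x.value * y.value, x.bound * y.bound⟩⟩
instance : Pow Digest ℕ := ⟨fun x n => npowRec n x⟩

end Digest

/-- `F` is a polynomial with digest `x`; the bound is witnessed by a polynomial `q` dominating `F`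
coefficientwise, so that it multiplies. -/
def Represents (F : ℤ⟦X⟧) (x : Digest) : Prop :=
  ∃ (p : Polynomial ℤ) (q : Polynomial ℕ), (p : ℤ⟦X⟧) = F ∧ p.eval (Digest.base : ℤ) = x.value ∧
    (∀ i, (p.coeff i).natAbs ≤ q.coeff i) ∧ q.eval 1 = x.bound

namespace Represents

variable {F F' : ℤ⟦X⟧} {x x' : Digest}

theorem add (h : Represents F x) (h' : Represents F' x') : Represents (F + F') (x + x') := by
  obtain ⟨p, q, rfl, hx, hq, hb⟩ := h
  obtain ⟨p', q', rfl, hx', hq', hb'⟩ := h'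
  refine ⟨p + p', q + q', by simp, by simp [hx, hx']; rfl, fun i => ?_, by simp [hb, hb']; rfl⟩
  rw [Polynomial.coeff_add, Polynomial.coeff_add]
  exact (Int.natAbs_add_le _ _).trans (add_le_add (hq i) (hq' i))

theorem sub (h : Represents F x) (h' : Represents F' x') : Represents (F - F') (x - x') := by
  obtain ⟨p, q, rfl, hx, hq, hb⟩ := h
  obtain ⟨p', q', rfl, hx', hq', hb'⟩ := h'
  refine ⟨p - p', q + q', by simp, by simp [hx, hx']; rfl, fun i => ?_, by simp [hb, hb']; rfl⟩
  rw [Polynomial.coeff_sub, Polynomial.coeff_add]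
  exact (Int.natAbs_sub_le _ _).trans (add_le_add (hq i) (hq' i))

theorem mul (h : Represents F x) (h' : Represents F' x') : Represents (F * F') (x * x') := by
  obtain ⟨p, q, rfl, hx, hq, hb⟩ := h
  obtain ⟨p', q', rfl, hx', hq', hb'⟩ := h'
  refine ⟨p * p', q * q', by simp, by simp [hx, hx']; rfl, fun i => ?_, by simp [hb, hb']; rfl⟩
  rw [Polynomial.coeff_mul, Polynomial.coeff_mul]
  refine (Int.natAbs_sum_le _ _).trans (sum_le_sum fun j _ => ?_)
  rw [Int.natAbs_mul]
  exact Nat.mul_le_mul (hq _) (hq' _)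

theorem const (z : ℤ) : Represents (C z) (.const z) := by
  refine ⟨Polynomial.C z, Polynomial.C z.natAbs, Polynomial.coe_C z, by simp [Digest.const],
    fun i => ?_, by simp [Digest.const]⟩
  rw [Polynomial.coeff_C, Polynomial.coeff_C]
  split_ifs <;> simp

theorem zero : Represents 0 0 := by rw [← map_zero C]; exact const 0

theorem one : Represents 1 1 := by rw [← map_one C]; exact const 1

theorem X_pow (n : ℕ) : Represents (X ^ n) (.monomial n) := by
  refine ⟨Polynomial.X ^ n, Polynomial.X ^ n, by simp, by simp [Digest.monomial], fun i => ?_,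
    by simp [Digest.monomial]⟩
  rw [Polynomial.coeff_X_pow, Polynomial.coeff_X_pow]
  split_ifs <;> simp

theorem pow (h : Represents F x) (n : ℕ) : Represents (F ^ n) (x ^ n) := by
  induction n with
  | zero => rw [pow_zero]; exact one
  | succ n ih =>
    rw [pow_succ]
    exact ih.mul h

theorem listSum {α : Type*} {l : List α} {f : α → ℤ⟦X⟧} {g : α → Digest}
    (h : ∀ t ∈ l, Represents (f t) (g t)) : Represents (l.map f).sum (l.map g).sum := by
  induction l with
  | nil => exact zero
  | cons t l ih =>
    simp only [List.mem_cons, forall_eq_or_imp] at h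
    simpa only [List.map_cons, List.sum_cons] using h.1.add (ih h.2)

theorem listProd {α : Type*} {l : List α} {f : α → ℤ⟦X⟧} {g : α → Digest}
    (h : ∀ t ∈ l, Represents (f t) (g t)) : Represents (l.map f).prod (l.map g).prod := by
  induction l with
  | nil => exact one
  | cons t l ih =>
    simp only [List.mem_cons, forall_eq_or_imp] at h
    simpa only [List.map_cons, List.prod_cons] using h.1.mul (ih h.2)

theorem eq_zero (h : Represents F x) (hv : x.value = 0) (hb : x.bound < Digest.base) : F = 0 := by
  obtain ⟨p, q, rfl, hx, hq, hq1⟩ := h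
  rw [eq_zero_of_eval_natCast_eq_zero (fun i => ?_) (hx.trans hv), Polynomial.coe_zero]
  have hle : q.coeff i ≤ q.eval 1 := by
    rw [Polynomial.eval_eq_sum, Polynomial.sum]
    by_cases hi : i ∈ q.support
    · simpa using single_le_sum (f := fun i => q.coeff i) (fun _ _ => Nat.zero_le _) hi
    · simp [Polynomial.notMem_support_iff.1 hi]
  exact ((hq i).trans hle).trans_lt (hq1 ▸ hb)

end Represents

theorem Represents.smul {F : ℤ⟦X⟧} {x : Digest} (h : Represents F x) (z : ℤ) :
    Represents (z • F) (.const z * x) := by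
  have hz : z • F = C z * F := by rw [zsmul_eq_mul, ← map_intCast (C (R := ℤ)), Int.cast_id]
  exact hz ▸ (const z).mul h

theorem Represents.one_sub_X_pow (n : ℕ) : Represents (1 - X ^ n) (1 - .monomial n) :=
  one.sub (X_pow n)

/-- The exponents `m` of the factors `1 - X ^ m` of the common denominator `den`. -/
def denExponents : List ℕ := [1, 2, 3, 4, 5, 6, 7, 8, 10, 12]

/-- The common denominator of all rational functions in play, up to powers. -/
noncomputable def den : ℤ⟦X⟧ := (denExponents.map fun m => 1 - X ^ m).prod

/-- The quotient `den / (1 - X ^ m)`, for `m ∈ denExponents`. -/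
noncomputable def cofactor (m : ℕ) : ℤ⟦X⟧ := ((denExponents.erase m).map fun m => 1 - X ^ m).prod

theorem cofactor_mul {m : ℕ} (hm : m ∈ denExponents) : cofactor m * (1 - X ^ m) = den := by
  rw [den, ((List.perm_cons_erase hm).map _).prod_eq, List.map_cons, List.prod_cons, mul_comm]
  rfl

theorem den_ne_zero : den ≠ 0 := by
  refine List.prod_ne_zero fun h => ?_
  obtain ⟨m, hm, h0⟩ := List.mem_map.mp h
  have hm0 : m ≠ 0 := by rintro rfl; exact absurd hm (by decide)
  simpa [hm0] using congrArg (coeff 0) h0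

/-- The digest of `den`. -/
def Digest.den : Digest := (denExponents.map fun m => 1 - .monomial m).prod

/-- The digest of `cofactor m`. -/
def Digest.cofactor (m : ℕ) : Digest := ((denExponents.erase m).map fun m => 1 - .monomial m).prod

theorem Represents.den : Represents den .den := listProd fun _ _ => one_sub_X_pow _

theorem Represents.cofactor (m : ℕ) : Represents (cofactor m) (.cofactor m) :=
  listProd fun _ _ => one_sub_X_pow _

/-- The binomial coefficient `k.choose j`, for `k ≥ 0`. -/
def binom (j : ℕ) (k : ℤ) : ℤ := (k.toNat.choose j : ℤ)

/-- The sign `(-1) ^ k`, for `k ≥ 0`. -/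
def signChar (k : ℤ) : ℤ := (-1) ^ k.toNat

theorem coneSeries_congr_of_nonneg {gs : List (ℕ × ℤ)} (hg : ∀ g ∈ gs, 0 ≤ g.2) {H H' : ℤ → ℤ}
    (h : ∀ k : ℕ, H k = H' k) : coneSeries gs H = coneSeries gs H' :=
  coneSeries_congr_of_mem (AddSubmonoid.nonneg ℤ) hg fun k hk => by
    lift k to ℕ using hk
    exact h k

/-- Vandermonde's identity expands the `binom j (k + g.2)` that `coneSeries_cons` produces. -/
theorem coneSeries_cons_binom {g : ℕ × ℤ} {gs : List (ℕ × ℤ)} (hg : ∀ g' ∈ g :: gs, 0 ≤ g'.2)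
    (j : ℕ) : (1 - X ^ (g.1 + 1)) * coneSeries (g :: gs) (binom j) = coneSeries gs (binom j) +
      X ^ (g.1 + 1) *
        ∑ i ∈ range j, (g.2.toNat.choose (j - i) : ℤ) • coneSeries (g :: gs) (binom i) := by
  have hv : coneSeries (g :: gs) (fun k => binom j (k + g.2)) =
      ∑ i ∈ range (j + 1), (g.2.toNat.choose (j - i) : ℤ) • coneSeries (g :: gs) (binom i) := by
    simp only [← map_zsmul, ← map_sum]
    refine coneSeries_congr_of_nonneg hg fun k => ?_
    simp only [Finset.sum_apply, Pi.smul_apply, smul_eq_mul, binom, Int.toNat_natCast,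
      Int.toNat_add (Int.natCast_nonneg k) (hg g List.mem_cons_self), Nat.add_choose_eq,
      Finset.Nat.sum_antidiagonal_eq_sum_range_succ_mk, Nat.cast_sum, Nat.cast_mul, mul_comm]
  have h := coneSeries_cons g gs (binom j)
  rw [hv, sum_range_succ, Nat.sub_self, Nat.choose_zero_right, Nat.cast_one, one_smul] at h
  linear_combination h

/-- The sum `∑ C(v, t + i + 1) den ^ (t + i) yᵢ` over the entries of a list. -/
def vandermonde (v : ℕ) : ℕ → List Digest → Digest
  | _, [] => 0
  | t, y :: ys => .const (v.choose (t + 1)) * (.den ^ t * y) + vandermonde v (t + 1) ys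

/-- The effect on the list `jet gs` of adding the generator `g` to `gs`. -/
def jetStep (g : ℕ × ℤ) : List Digest → List Digest
  | [] => []
  | x :: xs =>
    let ys := jetStep g xs
    .cofactor (g.1 + 1) * (x + .monomial (g.1 + 1) * vandermonde g.2.toNat 0 ys) :: ys

/-- The digests of `den ^ (gs.length + j) * coneSeries gs (binom j)` for `j = 4, 3, 2, 1, 0`. -/
def jet (gs : List (ℕ × ℤ)) : List Digest := gs.foldr jetStep [0, 0, 0, 0, 1]

/-- The `j`-th entry from the end of a list represents the series `coneSeries gs (binom j)`,
multiplied by a power of `den` that clears its denominator. -/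
def JetRepresents (gs : List (ℕ × ℤ)) : List Digest → Prop
  | [] => True
  | x :: xs => Represents (den ^ (gs.length + xs.length) * coneSeries gs (binom xs.length)) x ∧
      JetRepresents gs xs

theorem length_jetStep (g : ℕ × ℤ) (xs : List Digest) : (jetStep g xs).length = xs.length := by
  induction xs with
  | nil => rfl
  | cons x xs ih => rw [jetStep, List.length_cons, List.length_cons, ih]

theorem JetRepresents.represents_vandermonde {gs : List (ℕ × ℤ)} (v : ℕ) {ys : List Digest}
    (h : JetRepresents gs ys) {t e : ℕ} (he : e + 1 = gs.length + ys.length + t) :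
    Represents (den ^ e * ∑ i ∈ range ys.length,
      (v.choose (ys.length + t - i) : ℤ) • coneSeries gs (binom i)) (vandermonde v t ys) := by
  induction ys generalizing t with
  | nil =>
    rw [List.length_nil, range_zero, sum_empty, mul_zero]
    exact Represents.zero
  | cons y ys ih =>
    rw [List.length_cons] at he ⊢
    convert (((Represents.den.pow t).mul h.1).smul (v.choose (t + 1))).add
      (ih h.2 (t := t + 1) (by omega)) using 1
    on_goal 2 => rfl
    have hd : den ^ t * den ^ (gs.length + ys.length) = den ^ e := by
      rw [← pow_add]
      congr 1
      omega
    rw [sum_range_succ, mul_add, add_comm, ← mul_assoc, hd,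
      show ys.length + 1 + t - ys.length = t + 1 by omega, mul_smul_comm]
    simp only [add_assoc, add_comm t 1]

theorem JetRepresents.step {g : ℕ × ℤ} {gs : List (ℕ × ℤ)} (hg : ∀ g' ∈ g :: gs, 0 ≤ g'.2)
    (hd : g.1 + 1 ∈ denExponents) {xs : List Digest} (h : JetRepresents gs xs) :
    JetRepresents (g :: gs) (jetStep g xs) := by
  induction xs with
  | nil => trivial
  | cons x xs ih =>
    refine ⟨?_, ih h.2⟩
    have hv := (ih h.2).represents_vandermonde g.2.toNat (t := 0) (e := gs.length + xs.length)
      (by rw [length_jetStep, List.length_cons]; omega)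
    convert (Represents.cofactor (g.1 + 1)).mul
      (h.1.add ((Represents.X_pow (g.1 + 1)).mul hv)) using 1
    rw [length_jetStep, List.length_cons, add_right_comm, pow_succ]
    linear_combination den ^ (gs.length + xs.length) * (cofactor (g.1 + 1) *
      coneSeries_cons_binom hg xs.length - coneSeries (g :: gs) (binom xs.length) *
      cofactor_mul hd)

theorem jetRepresents_jet {gs : List (ℕ × ℤ)}
    (hg : ∀ g ∈ gs, 0 ≤ g.2 ∧ g.1 + 1 ∈ denExponents) : JetRepresents gs (jet gs) := by
  induction gs with
  | nil =>
    simp [jet, JetRepresents, coneSeries_nil, binom, Represents.zero, Represents.one]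
  | cons g gs ih =>
    exact (ih fun g' h => hg g' (.tail g h)).step (fun g' h => (hg g' h).1)
      (hg g List.mem_cons_self).2

/-- The digest of `den ^ gs.length * coneSeries gs signChar`.  A generator of degree `m` and odd
weight contributes the factor `1 / (1 + X ^ m) = (1 - X ^ m) / (1 - X ^ (2 * m))`. -/
def Digest.signSeries : List (ℕ × ℤ) → Digest
  | [] => 1
  | g :: gs => (if Even g.2 then cofactor (g.1 + 1)
      else (1 - monomial (g.1 + 1)) * cofactor (2 * (g.1 + 1))) * signSeries gs

theorem represents_signSeries {gs : List (ℕ × ℤ)}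
    (hg : ∀ g ∈ gs, 0 ≤ g.2 ∧ g.1 + 1 ∈ denExponents)
    (hs : ∀ g ∈ gs, Even g.2 ∨ 2 * (g.1 + 1) ∈ denExponents) :
    Represents (den ^ gs.length * coneSeries gs signChar) (.signSeries gs) := by
  induction gs with
  | nil =>
    rw [coneSeries_nil, Digest.signSeries]
    simpa [signChar] using Represents.one
  | cons g gs ih =>
    have ih := ih (fun g' h => hg g' (.tail g h)) fun g' h => hs g' (.tail g h)
    obtain ⟨hg0, hd⟩ := hg g List.mem_cons_self
    have hshift : coneSeries (g :: gs) (fun k => signChar (k + g.2)) =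
        (-1) ^ g.2.toNat * coneSeries (g :: gs) signChar := by
      rw [← Int.cast_one, ← Int.cast_neg, ← Int.cast_pow, ← zsmul_eq_mul, ← map_zsmul]
      refine coneSeries_congr_of_nonneg (fun g' h => (hg g' h).1) fun k => ?_
      simp only [signChar, Int.toNat_add (Int.natCast_nonneg k) hg0, Pi.smul_apply, smul_eq_mul,
        pow_add, mul_comm]
    have hcons := coneSeries_cons g gs signChar
    rw [hshift] at hcons
    have heven : Even g.2 ↔ Even g.2.toNat := by
      rw [← Int.even_coe_nat, Int.toNat_of_nonneg hg0]
    rw [Digest.signSeries, List.length_cons, pow_succ]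
    split_ifs with hv
    · rw [(heven.1 hv).neg_one_pow] at hcons
      convert (Represents.cofactor (g.1 + 1)).mul ih using 1
      linear_combination den ^ gs.length * (cofactor (g.1 + 1) * hcons -
        coneSeries (g :: gs) signChar * cofactor_mul hd)
    · rw [(Nat.not_even_iff_odd.1 (heven.not.1 hv)).neg_one_pow] at hcons
      have hd2 := cofactor_mul ((hs g List.mem_cons_self).resolve_left hv)
      convert ((Represents.one_sub_X_pow (g.1 + 1)).mul
        (.cofactor (2 * (g.1 + 1)))).mul ih using 1
      linear_combination den ^ gs.length * ((1 - X ^ (g.1 + 1)) * cofactor (2 * (g.1 + 1)) * hcons -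
        coneSeries (g :: gs) signChar * hd2)

/-- The combination of the binomial coefficients `binom j` with the given coefficients, the one of
`binom 0` coming last. -/
def binomSum : List ℤ → ℤ → ℤ
  | [], _ => 0
  | a :: as, k => a * binom as.length k + binomSum as k

/-- The digest of `den ^ (gs.length + as.length) * coneSeries gs (binomSum as)`, from that of the
jet of `gs`. -/
def Digest.binomSum : List ℤ → List Digest → Digest
  | a :: as, x :: xs => den * (const a * x + Digest.binomSum as xs)
  | _, _ => 0

theorem JetRepresents.represents_binomSum {gs : List (ℕ × ℤ)} {xs : List Digest}
    (h : JetRepresents gs xs) {as : List ℤ} (has : as.length = xs.length) :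
    Represents (den ^ (gs.length + as.length) * coneSeries gs (binomSum as))
      (.binomSum as xs) := by
  induction xs generalizing as with
  | nil =>
    obtain rfl := List.length_eq_zero_iff.1 has
    rw [show binomSum [] = 0 from rfl, map_zero, mul_zero]
    exact Represents.zero
  | cons x xs ih =>
    obtain _ | ⟨a, as⟩ := as
    · exact absurd has (Nat.zero_ne_add_one _)
    replace has : as.length = xs.length := Nat.succ_injective has
    have hcons : binomSum (a :: as) = a • binom xs.length + binomSum as := by
      rw [← has]
      rfl
    convert Represents.den.mul ((h.1.smul a).add (ih h.2 has)) using 1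
    on_goal 2 => rfl
    rw [hcons, map_add, map_zsmul, List.length_cons, has, ← add_assoc, pow_succ']
    simp only [mul_add, mul_assoc, mul_smul_comm]

/-- The quasi-polynomial functions in play: `s` is the amplitude of the sign, and the coefficients
`as` refer to binomial coefficients as in `binomSum`. -/
def quasi (as : List ℤ) (s k : ℤ) : ℤ := if k < 0 then 0 else binomSum as k + s * signChar k

/-- The generators for which `Digest.leaf` is correct. -/
def IsLeaf (s : ℤ) (gs : List (ℕ × ℤ)) : Prop :=
  gs.length ≤ 5 ∧ (∀ g ∈ gs, 0 ≤ g.2 ∧ g.1 + 1 ∈ denExponents) ∧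
    (s = 0 ∨ ∀ g ∈ gs, Even g.2 ∨ 2 * (g.1 + 1) ∈ denExponents)

instance (s : ℤ) (gs : List (ℕ × ℤ)) : Decidable (IsLeaf s gs) := by
  unfold IsLeaf
  infer_instance

/-- The digest of `den ^ 10 * coneSeries gs (quasi as s)`. -/
def Digest.leaf (as : List ℤ) (s : ℤ) (gs : List (ℕ × ℤ)) : Digest :=
  den ^ (5 - gs.length) * (Digest.binomSum as (jet gs) + den ^ 5 * (const s * signSeries gs))

theorem coneSeries_quasi {gs : List (ℕ × ℤ)} (hg : ∀ g ∈ gs, 0 ≤ g.2) (as : List ℤ) (s : ℤ) :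
    coneSeries gs (quasi as s) =
      coneSeries gs (binomSum as) + s • coneSeries gs signChar := by
  rw [← map_zsmul, ← map_add]
  exact coneSeries_congr_of_nonneg hg fun k => if_neg (Int.natCast_nonneg k).not_gt

theorem length_jet (gs : List (ℕ × ℤ)) : (jet gs).length = 5 := by
  induction gs with
  | nil => rfl
  | cons g gs ih => exact (length_jetStep g _).trans ih

theorem Digest.const_zero_mul (x : Digest) : const 0 * x = 0 :=
  congrArg₂ Digest.mk (zero_mul x.value) (zero_mul x.bound)

theorem represents_leaf {as : List ℤ} {s : ℤ} {gs : List (ℕ × ℤ)} (has : as.length = 5)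
    (h : IsLeaf s gs) : Represents (den ^ 10 * coneSeries gs (quasi as s)) (.leaf as s gs) := by
  obtain ⟨hl, hg, hs⟩ := h
  have hsgn : Represents (den ^ gs.length * (s • coneSeries gs signChar))
      (.const s * .signSeries gs) := by
    obtain rfl | hs := hs
    · rw [zero_smul, mul_zero, Digest.const_zero_mul]
      exact Represents.zero
    · rw [mul_smul_comm]
      exact (represents_signSeries hg hs).smul s
  convert (Represents.den.pow (5 - gs.length)).mul
    (((jetRepresents_jet hg).represents_binomSum (has.trans (length_jet gs).symm)).add
      ((Represents.den.pow 5).mul hsgn)) using 1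
  on_goal 2 => rfl
  have hpow : den ^ 10 = den ^ (5 - gs.length) * den ^ gs.length * den ^ 5 := by
    rw [← pow_add, ← pow_add, Nat.sub_add_cancel hl]
  rw [coneSeries_quasi (fun g h => (hg g h).1), hpow, has]
  ring

/-- An integer linear form in the five variables `v, b₁, b₂, b₃, l`, given by its coefficients. -/
abbrev Form := ℤ × ℤ × ℤ × ℤ × ℤ

/-- The value of a linear form. -/
def Form.eval (x : Form) (v b₁ b₂ b₃ l : ℕ) : ℤ :=
  x.1 * v + x.2.1 * b₁ + x.2.2.1 * b₂ + x.2.2.2.1 * b₃ + x.2.2.2.2 * l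

/-- The function `quasi poly sign` of a linear form, as a function of `v, b₁, b₂, b₃, l`. -/
structure QuasiForm where
  form : Form
  poly : List ℤ
  sign : ℤ

/-- The ball counts in `card_fibre`: `32 * ballCount D` is `quasi [16, 40, 28, 2, -1] 1 D`. -/
def ballTerms : List (ℤ × QuasiForm) :=
  [(-6, 2, 3, 2, 1, 0), (-3, 2, 3, 1, 1, 0), (-3, 2, 3, 1, -1, 0), (-3, 2, 2, 1, 1, 1),
   (-3, 2, 3, 1, 1, 1), (-6, 2, 3, 2, 1, 1), (-6, 2, 2, 0, -1, 0), (-3, 2, 2, 1, -1, 0),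
   (-3, 2, 2, 1, 1, 0), (-3, 2, 3, 1, -1, -1), (-3, 2, 2, 1, -1, -1),
   (-6, 2, 2, 0, -1, -1)].map fun t =>
    (t.1, ⟨t.2, [16, 40, 28, 2, -1], 1⟩)

/-- The edge counts in `card_fibre`: `edgeCount E` is `quasi [1, 2, 1, 0, 0] 0 E`. -/
def edgeTerms : List (ℤ × QuasiForm) :=
  [(768, 1, 1, 0, -1, -1), (576, 1, 1, 0, 0, 0), (96, 1, 1, -1, -1, -1), (768, 1, 1, 0, -1, 0),
   (192, 1, 1, 0, -2, -1), (192, 1, 1, -1, -2, -1), (96, 1, 0, -1, -1, 0), (96, 1, 1, -1, -1, 0),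
   (192, 1, 0, -1, -2, -1), (96, 1, 0, -1, -1, -1)].map fun t => (t.1, ⟨t.2, [1, 2, 1, 0, 0], 0⟩)

/-- The product of the four sides of the parity box in `card_fibre`, expanded by the polarization
identity `24 x₀ x₁ x₂ x₃ = ∑ ± (∑ i ∈ S, x i) ^ 4` over the subsets `S` of `Fin 4`; the lists are
the coefficients of `(k + #S) ^ 4`. -/
def powerTerms : List (ℤ × QuasiForm) :=
  [(-2, ⟨(2, 4, 3, 2, 1), [24, 60, 50, 15, 1], 0⟩), (-2, ⟨(2, 3, 3, 2, 1), [24, 60, 50, 15, 1], 0⟩),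
   (-4, ⟨(2, 3, 2, 2, 1), [24, 60, 50, 15, 1], 0⟩),
   (2, ⟨(4, 7, 6, 4, 2), [24, 84, 110, 65, 16], 0⟩),
   (4, ⟨(4, 7, 5, 4, 2), [24, 84, 110, 65, 16], 0⟩),
   (4, ⟨(4, 6, 5, 4, 2), [24, 84, 110, 65, 16], 0⟩),
   (2, ⟨(4, 6, 4, 4, 2), [24, 84, 110, 65, 16], 0⟩),
   (-4, ⟨(6, 10, 8, 6, 3), [24, 108, 194, 175, 81], 0⟩),
   (-2, ⟨(6, 10, 7, 6, 3), [24, 108, 194, 175, 81], 0⟩),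
   (-2, ⟨(6, 9, 7, 6, 3), [24, 108, 194, 175, 81], 0⟩),
   (2, ⟨(8, 13, 10, 8, 4), [24, 132, 302, 369, 256], 0⟩)]

/-- The difference of the numbers of points of the two parities in the box in `card_fibre`. -/
def signTerms : List (ℤ × QuasiForm) :=
  [(6, ⟨(0, 0, 0, 1, 0), [0, 0, 0, 0, 0], 1⟩), (6, ⟨(0, 0, 0, 1, 1), [0, 0, 0, 0, 0], 1⟩),
   (6, ⟨(0, 0, 1, 1, 0), [0, 0, 0, 0, 0], 1⟩), (6, ⟨(0, 0, 1, 1, 1), [0, 0, 0, 0, 0], 1⟩),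
   (6, ⟨(0, 1, 0, 1, 0), [0, 0, 0, 0, 0], 1⟩), (6, ⟨(0, 1, 0, 1, 1), [0, 0, 0, 0, 0], 1⟩),
   (6, ⟨(0, 1, 1, 1, 0), [0, 0, 0, 0, 0], 1⟩), (6, ⟨(0, 1, 1, 1, 1), [0, 0, 0, 0, 0], 1⟩)]

/-- The number of points of the parity box in `card_fibre`. -/
def boxTerms : List (ℤ × QuasiForm) := powerTerms ++ signTerms

/-- A signed sum of `quasi` functions with the value `96 * #(fibre v b₁ b₂ b₃ l)`. -/
def terms : List (ℤ × QuasiForm) := ballTerms ++ (edgeTerms ++ boxTerms)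

/-- The weight of the gaps `b₁, b₂, b₃, l`, which depends only on which of them vanish, as a signed
sum of indicators of coordinate subspaces: `false` imposes the vanishing of the corresponding gap,
and `true` imposes nothing. -/
def strata : List (ℤ × Bool × Bool × Bool × Bool) :=
  [(1, false, false, false, false), (-16, false, false, false, true),
   (-32, false, false, true, false), (64, false, false, true, true),
   (-24, false, true, false, false), (96, false, true, false, true),
   (96, false, true, true, false), (-192, false, true, true, true),
   (-8, true, false, false, false), (64, true, false, false, true),
   (96, true, false, true, false), (-192, true, false, true, true),
   (48, true, true, false, false), (-192, true, true, false, true),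
   (-192, true, true, true, false), (384, true, true, true, true)]

/-- The list `gs`, preceded by the generator `g` if `b` holds. -/
def optGen (b : Bool) (g : ℕ × ℤ) (gs : List (ℕ × ℤ)) : List (ℕ × ℤ) := if b then g :: gs else gs

/-- The generators for the linear form `x` on the coordinate subspace `z`; the variables
`v, b₁, b₂, b₃, l` have degrees `1, 2, 2, 2, 1`. -/
def gens (x : Form) (z : Bool × Bool × Bool × Bool) : List (ℕ × ℤ) :=
  (0, x.1) :: optGen z.1 (1, x.2.1) (optGen z.2.1 (1, x.2.2.1) (optGen z.2.2.1 (1, x.2.2.2.1)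
    (optGen z.2.2.2 (0, x.2.2.2.2) [])))

/-- The leaves of Elliott's reduction. The fuel is ample for the lists in use. -/
def leaves (gs : List (ℕ × ℤ)) : List (ℤ × List (ℕ × ℤ)) := elliott 40 (.ofList gs)

theorem coneSeries_eq_signedSum_leaves {gs : List (ℕ × ℤ)} {H : ℤ → ℤ}
    (h : (∀ k ≤ 0, H k = 0) ∨ ∀ g ∈ gs, 0 ≤ g.2) :
    signedSum (coneSeries · H) (leaves gs) = coneSeries gs H := by
  rw [← coneSeries_perm (SignSplit.toList_ofList_perm gs)]
  obtain h | h := h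
  · exact coneSeries_elliott_eq h _ (SignSplit.sorted_ofList gs)
  · have hneg := SignSplit.neg_ofList_eq_nil h
    rw [leaves]
    generalize SignSplit.ofList gs = s at hneg ⊢
    obtain ⟨P, N, Z⟩ := s
    obtain rfl : N = [] := hneg
    cases P <;> simp [elliott, signedSum]

theorem quasi_eq_zero_of_nonpos {as : List ℤ} {s : ℤ} (h : quasi as s 0 = 0) {k : ℤ} (hk : k ≤ 0) :
    quasi as s k = 0 := by
  obtain hk | rfl := hk.lt_or_eq
  · exact if_pos hk
  · exact h

/-- What the evaluation of the series of `t` on the subspace `z` by leaves requires. -/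
def IsReducible (t : QuasiForm) (z : Bool × Bool × Bool × Bool) : Prop :=
  t.poly.length = 5 ∧ (quasi t.poly t.sign 0 = 0 ∨ ∀ g ∈ gens t.form z, 0 ≤ g.2) ∧
    ∀ l ∈ leaves (gens t.form z), IsLeaf t.sign l.2

instance (t : QuasiForm) (z : Bool × Bool × Bool × Bool) : Decidable (IsReducible t z) := by
  unfold IsReducible
  infer_instance

/-- The digest of a signed sum. -/
def Digest.signedSum {α : Type*} (f : α → Digest) (l : List (ℤ × α)) : Digest :=
  (l.map fun t => const t.1 * f t.2).sum

theorem Represents.signedSum {α : Type*} {f : α → ℤ⟦X⟧} {c : ℤ⟦X⟧} {x : α → Digest}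
    {l : List (ℤ × α)} (h : ∀ t ∈ l, Represents (c * f t.2) (x t.2)) :
    Represents (c * signedSum f l) (.signedSum x l) := by
  rw [MagicCube.signedSum, ← List.sum_map_mul_left]
  exact listSum fun t ht => by rw [mul_smul_comm]; exact (h t ht).smul t.1

/-- The sum of `weight b₁ b₂ b₃ l * (96 * #(fibre v b₁ b₂ b₃ l)) * X ^ (v + 2 b₁ + 2 b₂ + 2 b₃ + l)`
over all `v, b₁, b₂, b₃, l`. -/
noncomputable def fibreSeries : ℤ⟦X⟧ :=
  signedSum (fun z => signedSum (fun t => coneSeries (gens t.form z) (quasi t.poly t.sign)) terms)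
    strata

/-- The digest of `den ^ 10 * fibreSeries`. -/
def Digest.fibreSeries : Digest :=
  signedSum (fun z => signedSum (fun t =>
    signedSum (leaf t.poly t.sign) (leaves (gens t.form z))) terms) strata

set_option maxRecDepth 100000 in
theorem isReducible_of_mem : ∀ z ∈ strata, ∀ t ∈ terms, IsReducible t.2 z.2 := by decide +kernel

theorem represents_fibreSeries : Represents (den ^ 10 * fibreSeries) .fibreSeries := by
  refine .signedSum fun z hz => .signedSum fun t ht => ?_
  obtain ⟨hlen, h0, hleaf⟩ := isReducible_of_mem z hz t ht
  rw [← coneSeries_eq_signedSum_leaves (h0.imp_left fun h k => quasi_eq_zero_of_nonpos h)]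
  exact .signedSum fun l hl => represents_leaf hlen (hleaf l hl)

/-- The coefficients of the numerator, as a polynomial in `t ^ 3`. -/
def numCoeffs : List ℤ := [1, 150, 5837, 63127, 331124, 1056374, 2326380, 3842273, 5055138, 5512456,
  5055138, 3842273, 2326380, 1056374, 331124, 63127, 5837, 150, 1]

theorem represents_foldr (as : List ℤ) : Represents (as.foldr (fun a F => C a + X * F) 0)
    (as.foldr (fun a x => .const a + .monomial 1 * x) 0) := by
  induction as with
  | nil => exact Represents.zero
  | cons a as ih =>
    exact (Represents.const a).add ((pow_one (X : ℤ⟦X⟧) ▸ Represents.X_pow 1).mul ih)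

/-- The digest of the difference of the two sides of `mul_fibreSeries`, multiplied by `den ^ 10`. -/
def Digest.discrepancy : Digest :=
  (monomial 1 + 1) ^ 4 * (monomial 4 + monomial 3 + monomial 2 + monomial 1 + 1) *
    (1 - monomial 1) ^ 9 * (monomial 2 + monomial 1 + 1) * fibreSeries -
    const 96 * numCoeffs.foldr (fun a x => const a + monomial 1 * x) 0 * den ^ 10

set_option maxRecDepth 100000 in
theorem discrepancy_value : Digest.discrepancy.value = 0 := by decide +kernel

set_option maxRecDepth 100000 in
theorem discrepancy_bound : Digest.discrepancy.bound < Digest.base := by decide +kernel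

theorem represents_discrepancy : Represents ((X + 1) ^ 4 * (X ^ 4 + X ^ 3 + X ^ 2 + X + 1) *
    (1 - X) ^ 9 * (X ^ 2 + X + 1) * (den ^ 10 * fibreSeries) -
    C 96 * numCoeffs.foldr (fun a F => C a + X * F) 0 * den ^ 10) .discrepancy := by
  have hX (n : ℕ) := Represents.X_pow n
  have hX1 : Represents X (.monomial 1) := by simpa using hX 1
  have h1 := Represents.one
  refine .sub (.mul (.mul (.mul (.mul ?_ ?_) ?_) ?_) represents_fibreSeries)
    (((Represents.const 96).mul (represents_foldr numCoeffs)).mul (Represents.den.pow 10))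
  · exact (hX1.add h1).pow 4
  · exact ((((hX 4).add (hX 3)).add (hX 2)).add hX1).add h1
  · exact (h1.sub hX1).pow 9
  · exact ((hX 2).add hX1).add h1

theorem mul_fibreSeries : (X + 1) ^ 4 * (X ^ 4 + X ^ 3 + X ^ 2 + X + 1) * (1 - X) ^ 9 *
    (X ^ 2 + X + 1) * fibreSeries = C 96 * numCoeffs.foldr (fun a F => C a + X * F) 0 := by
  refine mul_left_cancel₀ (pow_ne_zero 10 den_ne_zero) ?_
  linear_combination represents_discrepancy.eq_zero discrepancy_value discrepancy_bound

/-- Whether a gap `j` satisfies the condition imposed by an entry of `strata`. -/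
def allowed (b : Bool) (j : ℕ) : ℤ := if b ∨ j = 0 then 1 else 0

theorem coeff_X_pow_mul_coneSeries_optGen (b : Bool) (k : ℕ) (g : ℕ × ℤ) (gs : List (ℕ × ℤ))
    (H : ℤ → ℤ) {n N : ℕ} (hN : n < N) :
    coeff n (X ^ k * coneSeries (optGen b g gs) H) = ∑ j ∈ range N, allowed b j *
      coeff n (X ^ (k + (g.1 + 1) * j) * coneSeries gs fun x => H (x + j • g.2)) := by
  cases b
  · rw [sum_eq_single_of_mem 0 (mem_range.2 (Nat.zero_lt_of_lt hN))
      fun j _ hj => by simp [allowed, hj]]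
    simp [allowed, optGen]
  · simpa [allowed, optGen] using coeff_X_pow_mul_coneSeries_cons k g gs H hN

/-- The indicator of the coordinate subspace `z` of the space of gaps. -/
def onStratum (z : Bool × Bool × Bool × Bool) (b₁ b₂ b₃ l : ℕ) : ℤ :=
  allowed z.1 b₁ * (allowed z.2.1 b₂ * (allowed z.2.2.1 b₃ * allowed z.2.2.2 l))

theorem coeff_coneSeries_gens (n : ℕ) (x : Form) (z : Bool × Bool × Bool × Bool) (H : ℤ → ℤ) :
    coeff n (coneSeries (gens x z) H) = ∑ v ∈ range (n + 1), ∑ b₁ ∈ range (n + 1),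
      ∑ b₂ ∈ range (n + 1), ∑ b₃ ∈ range (n + 1), ∑ l ∈ range (n + 1),
        if v + 2 * b₁ + 2 * b₂ + 2 * b₃ + l = n then
          onStratum z b₁ b₂ b₃ l * H (x.eval v b₁ b₂ b₃ l) else 0 := by
  have hn := Nat.lt_succ_self n
  rw [gens, ← one_mul (coneSeries _ H), ← pow_zero X, coeff_X_pow_mul_coneSeries_cons _ _ _ _ hn]
  simp only [coeff_X_pow_mul_coneSeries_optGen _ _ _ _ _ hn, coneSeries_nil, mul_sum]
  refine sum_congr rfl fun v _ => sum_congr rfl fun b₁ _ => sum_congr rfl fun b₂ _ =>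
    sum_congr rfl fun b₃ _ => sum_congr rfl fun l _ => ?_
  rw [mul_comm (X ^ _), coeff_C_mul, coeff_X_pow, mul_ite, mul_one, mul_zero]
  simp only [onStratum, mul_ite, mul_zero, mul_assoc, Form.eval]
  refine if_congr ⟨fun h => ?_, fun h => ?_⟩ ?_ rfl
  · omega
  · omega
  · congr 5
    simp only [nsmul_eq_mul]
    ring

/-- The number of signed permutations of the axis deviations with the gaps `b₁, b₂, b₃, l`, as
encoded by `strata`. -/
def weight (b₁ b₂ b₃ l : ℕ) : ℤ := signedSum (fun z => onStratum z b₁ b₂ b₃ l) strata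

theorem coeff_fibreSeries (n : ℕ) : coeff n fibreSeries = ∑ v ∈ range (n + 1),
    ∑ b₁ ∈ range (n + 1), ∑ b₂ ∈ range (n + 1), ∑ b₃ ∈ range (n + 1), ∑ l ∈ range (n + 1),
      if v + 2 * b₁ + 2 * b₂ + 2 * b₃ + l = n then weight b₁ b₂ b₃ l *
        signedSum (fun t => quasi t.poly t.sign (t.form.eval v b₁ b₂ b₃ l)) terms else 0 := by
  simp only [fibreSeries, coeff_signedSum, coeff_coneSeries_gens, signedSum_sum]
  refine sum_congr rfl fun v _ => sum_congr rfl fun b₁ _ => sum_congr rfl fun b₂ _ =>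
    sum_congr rfl fun b₃ _ => sum_congr rfl fun l _ => ?_
  split_ifs
  · simp only [← mul_signedSum, weight, signedSum_mul]
  · simp [signedSum]

section Simplices

variable (ι : Type*) [Fintype ι] [DecidableEq ι]

/-- The families of natural numbers indexed by `ι` whose sum belongs to `S`. -/
def familiesWithSum (S : Finset ℕ) : Finset (ι → ℕ) := S.biUnion fun s => piAntidiag univ s

/-- The number of families with sum less than `D` and congruent to `D` modulo `2`: the lattice
points cut off from a corner of a parity box. -/
def ballCount (D : ℤ) : ℕ := #(familiesWithSum ι {s ∈ range D.toNat | ((s : ℤ) - D) % 2 = 0})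

/-- The number of families with sum less than `E - 1`: the lattice points cut off from both ends of
an edge of a parity box. -/
def edgeCount (E : ℤ) : ℕ := #(familiesWithSum ι (range (E - 1).toNat))

variable {ι}

theorem mem_familiesWithSum {S : Finset ℕ} {e : ι → ℕ} :
    e ∈ familiesWithSum ι S ↔ ∑ i, e i ∈ S := by
  simp [familiesWithSum]

theorem card_familiesWithSum (S : Finset ℕ) :
    #(familiesWithSum ι S) = ∑ s ∈ S, (Fintype.card ι).multichoose s := by
  rw [familiesWithSum, card_biUnion]
  · refine sum_congr rfl fun s _ => ?_
    simpa [finsuppAntidiag] using card_finsuppAntidiag_nat_eq_multichoose (s := (univ : Finset ι)) s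
  · intro s _ t _ hst
    refine disjoint_left.2 fun e he he' => hst ?_
    rw [mem_piAntidiag] at he he'
    exact he.1.symm.trans he'.1

end Simplices

theorem multichoose_four (s : ℕ) : Nat.multichoose 4 s = (s + 3).choose 3 := by
  rw [Nat.multichoose_eq, show 4 + s - 1 = s + 3 by omega, Nat.choose_symm_add]

theorem quasi_natCast (as : List ℤ) (s : ℤ) (k : ℕ) :
    quasi as s k = binomSum as k + s * signChar k := if_neg (Int.natCast_nonneg k).not_gt

theorem edgeCount_eq (E : ℤ) : (edgeCount (Fin 4) E : ℤ) = quasi [1, 2, 1, 0, 0] 0 E := by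
  have hchoose (n : ℕ) : ∑ s ∈ range n, (s + 3).choose 3 = (n + 3).choose 4 := by
    induction n with
    | zero => rfl
    | succ n ih => rw [sum_range_succ, ih, add_comm, ← Nat.choose_succ_succ' (n + 3) 3]
  simp only [edgeCount, card_familiesWithSum, Fintype.card_fin, multichoose_four, hchoose]
  obtain hE | hE := lt_or_ge E 0
  · rw [quasi, if_pos hE, Int.toNat_of_nonpos (by omega)]
    rfl
  lift E to ℕ using hE
  obtain _ | E := E
  · decide
  · rw [quasi_natCast, Nat.cast_succ, add_sub_cancel_right]
    simp [binomSum, binom, Nat.choose_succ_succ']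
    ring

theorem ballCount_natCast_add_two (n : ℕ) :
    ballCount (Fin 4) (n + 2 : ℕ) = ballCount (Fin 4) n + (n + 3).choose 3 := by
  simp only [ballCount, card_familiesWithSum, Int.toNat_natCast, Fintype.card_fin,
    ← multichoose_four]
  rw [range_add_one, filter_insert, if_neg (by push_cast; omega), range_add_one, filter_insert,
    if_pos (by push_cast; omega), sum_insert (by simp), add_comm]
  simp only [Nat.cast_add, Nat.cast_ofNat, ← sub_sub, Int.sub_emod_right]

theorem ballCount_eq (D : ℤ) :
    32 * (ballCount (Fin 4) D : ℤ) = quasi [16, 40, 28, 2, -1] 1 D := by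
  obtain hD | hD := lt_or_ge D 0
  · rw [ballCount, Int.toNat_of_nonpos hD.le, quasi, if_pos hD]
    rfl
  lift D to ℕ using hD
  induction D using Nat.twoStepInduction with
  | zero => decide
  | one => decide
  | more n ih _ =>
    rw [ballCount_natCast_add_two]
    simp only [quasi_natCast, binomSum, binom, signChar, Int.toNat_natCast, pow_succ] at ih ⊢
    simp [Nat.choose_succ_succ'] at ih ⊢
    linear_combination ih

section Hypercube

variable {ι : Type*} [DecidableEq ι]

/-- Any two elements of `V` are equal or adjacent in the hypercube. -/
def IsClique (V : Finset (ι → Bool)) : Prop :=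
  ∀ T ∈ V, ∀ T' ∈ V, ∀ i, T i ≠ T' i → ∀ j, T j ≠ T' j → i = j

theorem IsClique.exists_bot {V : Finset (ι → Bool)} (hV : IsClique V) (hne : V.Nonempty) :
    ∃ T₀ ∈ V, ∀ T ∈ V, T ≠ T₀ → ∃ i, T₀ i = false ∧ T = Function.update T₀ i true := by
  obtain ⟨T₀, hT₀⟩ := V.exists_minimal hne
  refine ⟨T₀, hT₀.prop, fun T hT hTne => ?_⟩
  obtain ⟨i, hi⟩ := Function.ne_iff.1 hTne
  have hupd : T = Function.update T₀ i (T i) := by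
    refine Function.eq_update_iff.2 ⟨rfl, fun j hj => ?_⟩
    by_contra hne
    exact hj (hV T hT T₀ hT₀.prop j hne i hi)
  cases hTi : T i <;> cases hT₀i : T₀ i <;> simp only [hTi, hT₀i, ne_eq, not_true] at hi hupd
  · have hle : T ≤ T₀ := by
      rw [hupd]
      exact update_le_self_iff.2 (Bool.false_le _)
    exact absurd (hT₀.eq_of_le hT hle) hTne
  · exact ⟨i, hT₀i, hupd⟩

variable [Fintype ι]

/-- The edges of the hypercube `ι → Bool` with both ends in `V`. An edge is given by its lower end
and its direction. -/
def edges (V : Finset (ι → Bool)) : Finset ((ι → Bool) × ι) :=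
  {e ∈ V ×ˢ univ | e.1 e.2 = false ∧ Function.update e.1 e.2 true ∈ V}

theorem mem_edges {V : Finset (ι → Bool)} {T : ι → Bool} {i : ι} :
    (T, i) ∈ edges V ↔ T ∈ V ∧ T i = false ∧ Function.update T i true ∈ V := by
  simp [edges]

/-- A clique in the hypercube is empty, a vertex or an edge. -/
theorem IsClique.card_edges_add_one {V : Finset (ι → Bool)} (hV : IsClique V) (hne : V.Nonempty) :
    #(edges V) + 1 = #V := by
  obtain ⟨T₀, hT₀, hup⟩ := hV.exists_bot hne
  have hlower {T i} (h : (T, i) ∈ edges V) : T = T₀ := by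
    obtain ⟨hT, hTi, hT'⟩ := mem_edges.1 h
    by_contra hne
    obtain ⟨j, hj, rfl⟩ := hup T hT hne
    have hij : i ≠ j := by
      rintro rfl
      simp at hTi
    refine hij (hV _ hT' T₀ hT₀ i ?_ j ?_)
    · rw [Function.update_of_ne hij] at hTi
      simp [hTi]
    · simp [Function.update_of_ne hij.symm, hj]
  rw [← card_erase_add_one hT₀]
  congr 1
  refine card_bij (fun e _ => Function.update e.1 e.2 true) ?_ ?_ ?_
  · rintro ⟨T, i⟩ h
    obtain rfl := hlower h
    obtain ⟨_, hTi, hT'⟩ := mem_edges.1 h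
    exact mem_erase.2 ⟨fun heq => by simp [hTi] at heq, hT'⟩
  · rintro ⟨T, i⟩ h ⟨T', j⟩ h' heq
    obtain rfl := hlower h
    obtain rfl := hlower h'
    refine congrArg (Prod.mk _) ?_
    by_contra hij
    have heq := congrFun heq i
    simp [Function.update_of_ne hij, (mem_edges.1 h).2.1] at heq
  · intro T hT
    obtain ⟨hne, hT⟩ := mem_erase.1 hT
    obtain ⟨i, hi, rfl⟩ := hup T hT hne
    exact ⟨(T₀, i), mem_edges.2 ⟨hT₀, hi, hT⟩, rfl⟩

end Hypercube

section ParityBox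

variable {ι : Type*} (U : ι → ℕ) (T : ι → Bool)

/-- The coordinates of `f` in the box `[0, U]`, measured from the corner `T`. -/
def reflect (f : ι → ℕ) (i : ι) : ℕ := if T i then U i - f i else f i

variable {U} in
theorem reflect_le {f : ι → ℕ} (hf : f ≤ U) : reflect U T f ≤ U := fun i => by
  rw [reflect]
  split_ifs
  · exact Nat.sub_le _ _
  · exact hf i

variable {U} in
theorem reflect_reflect {f : ι → ℕ} (hf : f ≤ U) : reflect U T (reflect U T f) = f := by
  funext i
  have : f i ≤ U i := hf i
  simp only [reflect]
  split_ifs <;> omega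

variable [Fintype ι]

/-- The `ℓ¹` distance from `f` to the corner `T` of the box `[0, U]`. -/
def cornerDist (f : ι → ℕ) : ℕ := ∑ i, reflect U T f i

variable {U} in
theorem cornerDist_parity {f : ι → ℕ} (hf : f ≤ U) :
    (cornerDist U T f + ∑ i, f i + ∑ i, if T i then U i else 0) % 2 = 0 := by
  rw [cornerDist, ← sum_add_distrib, ← sum_add_distrib]
  refine Nat.mod_eq_zero_of_dvd (dvd_sum fun i _ => ?_)
  have : f i ≤ U i := hf i
  rw [reflect]
  split_ifs <;> omega

theorem cornerDist_update [DecidableEq ι] {f : ι → ℕ} {i : ι} (hf : f i ≤ U i)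
    (hi : T i = false) :
    (cornerDist U (Function.update T i true) f : ℤ) = cornerDist U T f + U i - 2 * f i := by
  have hoff : ∑ j ∈ univ.erase i, reflect U (Function.update T i true) f j =
      ∑ j ∈ univ.erase i, reflect U T f j :=
    sum_congr rfl fun j hj => by simp [reflect, Function.update_of_ne (ne_of_mem_erase hj)]
  rw [cornerDist, cornerDist, ← add_sum_erase _ _ (mem_univ i),
    ← add_sum_erase _ (reflect U T f) (mem_univ i), hoff]
  simp [reflect, hi]
  omega

variable [DecidableEq ι]

/-- The lattice points of the box `[0, U]` whose coordinate sum is congruent to `π` modulo `2`. -/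
def parityBox (π : ℕ) : Finset (ι → ℕ) :=
  {f ∈ Fintype.piFinset fun i => range (U i + 1) | (∑ i, f i + π) % 2 = 0}

variable {U} in
theorem mem_parityBox {π : ℕ} {f : ι → ℕ} :
    f ∈ parityBox U π ↔ f ≤ U ∧ (∑ i, f i + π) % 2 = 0 := by
  simp [parityBox, Pi.le_def]

/-- Measuring from the corner `T` turns the box `parityBox U π` into `parityBox U π'`. -/
theorem card_filter_parityBox {π π' : ℕ}
    (hπ : (π + π' + ∑ i, if T i then U i else 0) % 2 = 0)
    (P : (ι → ℕ) → Prop) [DecidablePred P] :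
    #{f ∈ parityBox U π | P (reflect U T f)} = #{e ∈ parityBox U π' | P e} := by
  refine card_nbij' (reflect U T) (reflect U T) ?_ ?_ ?_ ?_ <;> intro f hf <;>
    simp only [mem_coe, mem_filter, mem_parityBox] at hf ⊢ <;>
    obtain ⟨⟨hle, hpar⟩, hP⟩ := hf
  · have := cornerDist_parity T hle
    rw [cornerDist] at this
    exact ⟨⟨reflect_le T hle, by omega⟩, hP⟩
  · have := cornerDist_parity T hle
    rw [cornerDist] at this
    rw [reflect_reflect T hle]
    exact ⟨⟨reflect_le T hle, by omega⟩, hP⟩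
  · exact reflect_reflect T hle
  · exact reflect_reflect T hle

/-- A corner cut off at a distance not exceeding any side of the box is a simplex. -/
theorem card_filter_sum_lt {D : ℤ} (hD : ∀ i, D ≤ U i) {π : ℕ} (hπ : (D + π) % 2 = 0) :
    #{e ∈ parityBox U π | ((∑ i, e i : ℕ) : ℤ) < D} = ballCount ι D := by
  rw [ballCount]
  congr 1
  ext e
  simp only [mem_filter, mem_parityBox, mem_familiesWithSum, mem_range]
  refine ⟨fun h => by omega, fun h => ⟨⟨fun i => ?_, by omega⟩, by omega⟩⟩
  change e i ≤ U i
  have := single_le_sum (f := e) (fun _ _ => Nat.zero_le _) (mem_univ i)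
  have := hD i
  omega

/-- The points cut off at both ends of an edge in the direction `i`.  With `s` the coordinate sum of
`f`, replacing the coordinate `f i` by `(D - 2 - s) / 2` maps these points onto a simplex. -/
theorem card_filter_sum_lt_and {D D' : ℤ} (hD : ∀ j, D ≤ U j) {i : ι} (hD' : D' ≤ U i) {π : ℕ}
    (hπ : (D + π) % 2 = 0) (hπ' : (D + D' + U i) % 2 = 0) :
    #{e ∈ parityBox U π | ((∑ j, e j : ℕ) : ℤ) < D ∧ ((∑ j, e j : ℕ) : ℤ) + U i - 2 * e i < D'} =
      edgeCount ι ((D + D' - U i) / 2) := by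
  have hsum (e : ι → ℕ) (x : ℕ) : ∑ j, Function.update e i x j + e i = ∑ j, e j + x := by
    rw [sum_update_of_mem (mem_univ i), ← sum_erase_add _ e (mem_univ i), sdiff_singleton_eq_erase]
    ring
  rw [edgeCount]
  refine card_nbij' (fun f => Function.update f i ((D - 2 - (∑ j, f j : ℕ)) / 2).toNat)
    (fun e => Function.update e i (D - 2 - (∑ j, e j : ℕ) - e i).toNat) ?_ ?_ ?_ ?_ <;>
    intro f hf <;>
    simp only [mem_coe, mem_filter, mem_parityBox, mem_familiesWithSum, mem_range] at hf ⊢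
  · have := hsum f ((D - 2 - (∑ j, f j : ℕ)) / 2).toNat
    have : f i ≤ U i := hf.1.1 i
    omega
  · have := hsum f (D - 2 - (∑ j, f j : ℕ) - f i).toNat
    have := hD i
    have hle (j) := single_le_sum (f := f) (fun _ _ => Nat.zero_le _) (mem_univ j)
    have := hle i
    refine ⟨⟨fun j => ?_, by omega⟩, by omega, by simp only [Function.update_self]; omega⟩
    obtain rfl | hj := eq_or_ne j i
    · simp only [Function.update_self]
      omega
    · have := hle j
      have := hD j
      simp only [Function.update_of_ne hj]
      omega
  · have := hsum f ((D - 2 - (∑ j, f j : ℕ)) / 2).toNat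
    have : f i ≤ U i := hf.1.1 i
    refine (Function.update_idem _ _ _).trans (Function.update_eq_self_iff.2 ?_)
    simp only [Function.update_self]
    omega
  · have := hsum f (D - 2 - (∑ j, f j : ℕ) - f i).toNat
    have := hD i
    refine (Function.update_idem _ _ _).trans (Function.update_eq_self_iff.2 ?_)
    omega

end ParityBox

section TruncatedBox

variable {ι : Type*} [Fintype ι] [DecidableEq ι] {U : ι → ℕ} {D : (ι → Bool) → ℤ} {π : ℕ}

variable (U D) in
/-- The corners `T` of the box `[0, U]` at a distance less than `D T` from `f`. -/
def violated (f : ι → ℕ) : Finset (ι → Bool) := {T | (cornerDist U T f : ℤ) < D T}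

theorem mem_violated {f : ι → ℕ} {T : ι → Bool} :
    T ∈ violated U D f ↔ (cornerDist U T f : ℤ) < D T := by
  simp [violated]

theorem isClique_violated (hD : ∀ T i, D T ≤ U i) {f : ι → ℕ} (hf : f ≤ U) :
    IsClique (violated U D f) := by
  intro T hT T' hT' i hi j hj
  by_contra hij
  have hside (k) (hk : T k ≠ T' k) : reflect U T f k + reflect U T' f k = U k := by
    have : f k ≤ U k := hf k
    rw [reflect, reflect]
    cases hTk : T k <;> cases hTk' : T' k <;> simp [hTk, hTk'] at hk ⊢ <;> omega
  have hle : ∑ k ∈ {i, j}, (reflect U T f k + reflect U T' f k) ≤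
      cornerDist U T f + cornerDist U T' f := by
    rw [cornerDist, cornerDist, ← sum_add_distrib]
    exact sum_le_sum_of_subset (subset_univ _)
  rw [sum_pair hij, hside i hi, hside j hj] at hle
  rw [mem_violated] at hT hT'
  have := hD T i
  have := hD T' j
  omega

theorem card_filter_mem_violated {T : ι → Bool} (hD : ∀ i, D T ≤ U i)
    (hπ : (D T + π + (∑ i, if T i then U i else 0 : ℕ)) % 2 = 0) :
    #{f ∈ parityBox U π | T ∈ violated U D f} = ballCount ι (D T) := by
  rw [← card_filter_sum_lt U (π := (D T).natAbs) hD (by omega),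
    ← card_filter_parityBox U T (π := π) (π' := (D T).natAbs) (by omega)
      fun e => ((∑ i, e i : ℕ) : ℤ) < D T]
  simp only [mem_violated, cornerDist]

theorem card_filter_mem_edges_violated {T : ι → Bool} {i : ι}
    (hi : T i = false) (hD : ∀ j, D T ≤ U j) (hD' : D (Function.update T i true) ≤ U i)
    (hπ : (D T + π + (∑ i, if T i then U i else 0 : ℕ)) % 2 = 0)
    (hπ' : (D T + D (Function.update T i true) + U i) % 2 = 0) :
    #{f ∈ parityBox U π | (T, i) ∈ edges (violated U D f)} =
      edgeCount ι ((D T + D (Function.update T i true) - U i) / 2) := by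
  rw [← card_filter_sum_lt_and U (π := (D T).natAbs) hD hD' (by omega) hπ',
    ← card_filter_parityBox U T (π := π) (π' := (D T).natAbs) (by omega) fun e =>
      ((∑ j, e j : ℕ) : ℤ) < D T ∧
        ((∑ j, e j : ℕ) : ℤ) + U i - 2 * e i < D (Function.update T i true)]
  refine congrArg card (filter_congr fun f hf => ?_)
  have hfi : f i ≤ U i := (mem_parityBox.1 hf).1 i
  have hri : reflect U T f i = f i := by simp [reflect, hi]
  rw [mem_edges, mem_violated, mem_violated, cornerDist_update U T hfi hi, hri]
  exact and_congr_right' (and_iff_right hi)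

theorem sum_ite_update (U : ι → ℕ) {T : ι → Bool} {i : ι} (hi : T i = false) :
    (∑ j, if Function.update T i true j then U j else 0) = (∑ j, if T j then U j else 0) + U i := by
  rw [← add_sum_erase _ _ (mem_univ i), ← add_sum_erase _ (fun j => if T j then U j else 0)
    (mem_univ i), add_comm]
  refine congrArg₂ _ ?_ (by simp)
  rw [sum_congr rfl fun j hj => by rw [Function.update_of_ne (ne_of_mem_erase hj)]]
  simp [hi]

theorem sum_card_violated (hD : ∀ T i, D T ≤ U i)
    (hπ : ∀ T, (D T + π + (∑ i, if T i then U i else 0 : ℕ)) % 2 = 0) :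
    ∑ f ∈ parityBox U π, #(violated U D f) = ∑ T, ballCount ι (D T) := by
  have h := sum_card_bipartiteAbove_eq_sum_card_bipartiteBelow (s := parityBox U π) (t := univ)
    fun f T => T ∈ violated U D f
  simpa only [bipartiteAbove, bipartiteBelow, filter_univ_mem,
    fun T => card_filter_mem_violated (hD T) (hπ T)] using h

theorem sum_card_edges_violated (hD : ∀ T i, D T ≤ U i)
    (hπ : ∀ T, (D T + π + (∑ i, if T i then U i else 0 : ℕ)) % 2 = 0) :
    ∑ f ∈ parityBox U π, #(edges (violated U D f)) = ∑ T, ∑ i, if T i = false then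
      edgeCount ι ((D T + D (Function.update T i true) - U i) / 2) else 0 := by
  have hedge (T i) : #{f ∈ parityBox U π | (T, i) ∈ edges (violated U D f)} =
      if T i = false then edgeCount ι ((D T + D (Function.update T i true) - U i) / 2) else 0 := by
    split_ifs with hi
    · refine card_filter_mem_edges_violated hi (hD T) (hD _ i) (hπ T) ?_
      have := hπ T
      have := hπ (Function.update T i true)
      have := sum_ite_update U hi
      omega
    · exact card_eq_zero.2 (filter_eq_empty_iff.2 fun f _ h => hi (mem_edges.1 h).2.1)
  have h := sum_card_bipartiteAbove_eq_sum_card_bipartiteBelow (s := parityBox U π) (t := univ)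
    fun f e => e ∈ edges (violated U D f)
  simpa only [bipartiteAbove, bipartiteBelow, filter_univ_mem, hedge, Fintype.sum_prod_type] using h

/-- At most two corners are violated at a point, and then they are the ends of an edge, so that
inclusion-exclusion stops at the edges. -/
theorem card_filter_violated_eq_empty (hD : ∀ T i, D T ≤ U i)
    (hπ : ∀ T, (D T + π + (∑ i, if T i then U i else 0 : ℕ)) % 2 = 0) :
    (#{f ∈ parityBox U π | violated U D f = ∅} : ℤ) =
      #(parityBox U π) - ∑ T, (ballCount ι (D T) : ℤ) + ∑ T, ∑ i, if T i = false then
        (edgeCount ι ((D T + D (Function.update T i true) - U i) / 2) : ℤ) else 0 := by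
  have hpoint : ∀ f ∈ parityBox U π, (if violated U D f = ∅ then 1 else 0 : ℤ) =
      1 - #(violated U D f) + #(edges (violated U D f)) := by
    intro f hf
    split_ifs with h
    · simp [h, edges]
    · have := (isClique_violated hD (mem_parityBox.1 hf).1).card_edges_add_one
        (nonempty_iff_ne_empty.2 h)
      omega
  have hcorners := congrArg (Nat.cast (R := ℤ)) (sum_card_violated hD hπ)
  have hedges := congrArg (Nat.cast (R := ℤ)) (sum_card_edges_violated hD hπ)
  push_cast at hcorners hedges
  rw [card_filter, Nat.cast_sum]
  simp only [Nat.cast_ite, Nat.cast_one, Nat.cast_zero]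
  rw [sum_congr rfl hpoint, sum_add_distrib, sum_sub_distrib, hcorners, hedges, sum_const,
    nsmul_one]

theorem sum_range_neg_one_pow (n : ℕ) :
    ∑ x ∈ range (n + 1), (-1 : ℤ) ^ x = if n % 2 = 0 then 1 else 0 := by
  simp only [neg_one_geom_sum, Nat.even_iff]
  split_ifs <;> omega

/-- Averaging over the character `f ↦ (-1) ^ ∑ i, f i`. -/
theorem two_mul_card_parityBox (U : ι → ℕ) (π : ℕ) : 2 * (#(parityBox U π) : ℤ) =
    ∏ i, ((U i : ℤ) + 1) + (-1) ^ π * ∏ i, if U i % 2 = 0 then 1 else 0 := by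
  have h (f : ι → ℕ) : 2 * (if (∑ i, f i + π) % 2 = 0 then 1 else 0 : ℤ) =
      1 + (-1) ^ π * ∏ i, (-1 : ℤ) ^ f i := by
    rw [prod_pow_eq_pow_sum, ← pow_add, add_comm π, neg_one_pow_eq_pow_mod_two]
    obtain h | h := Nat.mod_two_eq_zero_or_one (∑ i, f i + π) <;> simp [h]
  rw [parityBox, card_filter]
  push_cast
  rw [mul_sum, sum_congr rfl fun f _ => h f, sum_add_distrib, ← mul_sum, ← prod_univ_sum]
  simp only [sum_range_neg_one_pow, Fintype.card_piFinset, sum_const, card_range]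
  simp

end TruncatedBox

theorem sum_piFinset_const_succ {α M : Type*} [AddCommMonoid M] {n : ℕ} (S : Finset α)
    (F : (Fin (n + 1) → α) → M) :
    ∑ x ∈ Fintype.piFinset (fun _ => S), F x =
      ∑ a ∈ S, ∑ x ∈ Fintype.piFinset (fun _ => S), F (Matrix.vecCons a x) := by
  rw [← sum_product']
  symm
  refine sum_equiv (Fin.consEquiv fun _ => α) (fun x => ?_) fun _ _ => rfl
  simp [Fintype.mem_piFinset, Fin.forall_fin_succ, Fin.consEquiv]

theorem sum_piFinset_four {α M : Type*} [AddCommMonoid M] (S : Finset α) (F : (Fin 4 → α) → M) :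
    ∑ x ∈ Fintype.piFinset (fun _ => S), F x =
      ∑ a ∈ S, ∑ b ∈ S, ∑ c ∈ S, ∑ d ∈ S, F ![a, b, c, d] := by
  simp only [sum_piFinset_const_succ, Fintype.piFinset_of_isEmpty, univ_unique, sum_singleton]
  rfl

theorem sum_fin_four_arrow {α M : Type*} [Fintype α] [AddCommMonoid M] (F : (Fin 4 → α) → M) :
    ∑ x, F x = ∑ a, ∑ b, ∑ c, ∑ d, F ![a, b, c, d] := by
  rw [← sum_piFinset_four, Fintype.piFinset_univ]

/-- The sides of the box containing `fibre v b₁ b₂ b₃ l`, as linear forms. -/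
def sideForm : Fin 4 → Form :=
  ![(2, 4, 3, 2, 1), (2, 3, 3, 2, 1), (2, 3, 2, 2, 1), (2, 3, 2, 2, 1)]

/-- The depth to which each corner of the box is truncated, as a linear form. -/
def cornerForm (T : Fin 4 → Bool) : Form :=
  match T 0, T 1, T 2, T 3 with
  | false, false, false, false => (2, 3, 2, 1, 0)
  | false, false, true, true => (2, 3, 2, 1, 0)
  | false, true, false, true => (2, 3, 1, 1, 0)
  | false, true, true, false => (2, 3, 1, -1, 0)
  | false, true, true, true => (2, 2, 1, 1, 1)
  | true, false, true, true => (2, 3, 1, 1, 1)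
  | true, true, false, true => (2, 3, 2, 1, 1)
  | true, true, true, false => (2, 3, 2, 1, 1)
  | true, true, true, true => (2, 2, 0, -1, 0)
  | true, true, false, false => (2, 2, 0, -1, 0)
  | true, false, true, false => (2, 2, 1, -1, 0)
  | true, false, false, true => (2, 2, 1, 1, 0)
  | true, false, false, false => (2, 3, 1, -1, -1)
  | false, true, false, false => (2, 2, 1, -1, -1)
  | false, false, true, false => (2, 2, 0, -1, -1)
  | false, false, false, true => (2, 2, 0, -1, -1)

/-- Half of the linear form to which `edgeCount` is applied on the edge in direction `i` above
`T`. -/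
def edgeForm (T : Fin 4 → Bool) (i : Fin 4) : Form :=
  let x := cornerForm T + cornerForm (Function.update T i true) - sideForm i
  (x.1 / 2, x.2.1 / 2, x.2.2.1 / 2, x.2.2.2.1 / 2, x.2.2.2.2 / 2)

theorem two_nsmul_edgeForm : ∀ T i, T i = false →
    2 • edgeForm T i = cornerForm T + cornerForm (Function.update T i true) - sideForm i := by
  decide

theorem cornerForm_le_sideForm : ∀ T i, cornerForm T ≤ sideForm i := by
  decide

theorem quasi_eq_add_pow_four (c : ℤ) {k : ℤ} (hk : 0 ≤ k) :
    quasi [24, 24 * c + 36, 12 * c ^ 2 + 24 * c + 14, 4 * c ^ 3 + 6 * c ^ 2 + 4 * c + 1, c ^ 4] 0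
      k = (k + c) ^ 4 := by
  lift k to ℕ using hk
  simp only [quasi_natCast, binomSum, binom, Int.toNat_natCast]
  induction k generalizing c with
  | zero => simp
  | succ k ih =>
    have := ih (c + 1)
    simp [Nat.choose_succ_succ'] at this ⊢
    linear_combination this

theorem quasi_sign (n : ℕ) : quasi [0, 0, 0, 0, 0] 1 n = (-1) ^ n := by
  simp [quasi_natCast, binomSum, signChar]

section Fibre

variable (v b₁ b₂ b₃ l : ℕ)

theorem Form.eval_add (x y : Form) :
    (x + y).eval v b₁ b₂ b₃ l = x.eval v b₁ b₂ b₃ l + y.eval v b₁ b₂ b₃ l := by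
  simp only [Form.eval, Prod.fst_add, Prod.snd_add]
  ring

theorem Form.eval_mono {x y : Form} (h : x ≤ y) : x.eval v b₁ b₂ b₃ l ≤ y.eval v b₁ b₂ b₃ l := by
  obtain ⟨h₀, h₁, h₂, h₃, h₄⟩ := h
  unfold Form.eval
  gcongr

/-- The sides of the box containing `fibre v b₁ b₂ b₃ l`. -/
def boxSize : Fin 4 → ℕ :=
  ![2 * v + 4 * b₁ + 3 * b₂ + 2 * b₃ + l, 2 * v + 3 * b₁ + 3 * b₂ + 2 * b₃ + l,
    2 * v + 3 * b₁ + 2 * b₂ + 2 * b₃ + l, 2 * v + 3 * b₁ + 2 * b₂ + 2 * b₃ + l]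

theorem boxSize_eq_eval (i : Fin 4) :
    (boxSize v b₁ b₂ b₃ l i : ℤ) = (sideForm i).eval v b₁ b₂ b₃ l := by
  fin_cases i <;> simp [boxSize, sideForm, Form.eval]

/-- The depth to which the corner `T` of the box is truncated. -/
def cornerBound (T : Fin 4 → Bool) : ℤ := (cornerForm T).eval v b₁ b₂ b₃ l

/-- The points of the parity box that survive the truncation of its sixteen corners.  They
correspond to the magic cubes of sum `3 * (v + 2 * b₁ + 2 * b₂ + 2 * b₃ + l)` whose axis deviations
have the gaps `b₁, b₂, b₃, l`; see `card_layer`. -/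
def fibre : Finset (Fin 4 → ℕ) :=
  {f ∈ parityBox (boxSize v b₁ b₂ b₃ l) (b₁ + b₃) |
    violated (boxSize v b₁ b₂ b₃ l) (cornerBound v b₁ b₂ b₃ l) f = ∅}

variable {v b₁ b₂ b₃ l}

theorem cornerBound_le (T : Fin 4 → Bool) (i : Fin 4) :
    cornerBound v b₁ b₂ b₃ l T ≤ boxSize v b₁ b₂ b₃ l i := by
  rw [boxSize_eq_eval]
  exact Form.eval_mono _ _ _ _ _ (cornerForm_le_sideForm T i)

theorem cornerBound_parity (T : Fin 4 → Bool) :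
    (cornerBound v b₁ b₂ b₃ l T + (b₁ + b₃ : ℕ) +
      (∑ i, if T i then boxSize v b₁ b₂ b₃ l i else 0 : ℕ)) % 2 = 0 := by
  rw [Fin.sum_univ_four]
  simp only [cornerBound, cornerForm, boxSize, Form.eval]
  cases T 0 <;> cases T 1 <;> cases T 2 <;> cases T 3 <;> simp <;> omega

theorem edgeCount_cornerBound {T : Fin 4 → Bool} {i : Fin 4} (hi : T i = false) :
    (edgeCount (Fin 4) ((cornerBound v b₁ b₂ b₃ l T +
      cornerBound v b₁ b₂ b₃ l (Function.update T i true) - boxSize v b₁ b₂ b₃ l i) / 2) : ℤ) =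
      quasi [1, 2, 1, 0, 0] 0 ((edgeForm T i).eval v b₁ b₂ b₃ l) := by
  have h := congrArg (Form.eval · v b₁ b₂ b₃ l)
    (sub_eq_iff_eq_add.1 (two_nsmul_edgeForm T i hi).symm)
  simp only [Form.eval_add, two_nsmul, ← boxSize_eq_eval] at h
  rw [edgeCount_eq, cornerBound, cornerBound]
  congr 1
  omega

variable (v b₁ b₂ b₃ l)

theorem sum_ballCount : -96 * ∑ T, (ballCount (Fin 4) (cornerBound v b₁ b₂ b₃ l T) : ℤ) =
    signedSum (fun t => quasi t.poly t.sign (t.form.eval v b₁ b₂ b₃ l)) ballTerms := by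
  have h (T) : -96 * (ballCount (Fin 4) (cornerBound v b₁ b₂ b₃ l T) : ℤ) =
      -3 * quasi [16, 40, 28, 2, -1] 1 ((cornerForm T).eval v b₁ b₂ b₃ l) := by
    rw [← ballCount_eq, cornerBound]
    ring
  simp only [mul_sum, h, sum_fin_four_arrow, signedSum, ballTerms, List.map_map, Function.comp_def]
  generalize quasi [16, 40, 28, 2, -1] 1 = q
  simp [cornerForm]
  ring

theorem sum_edgeCount : 96 * ∑ T, ∑ i, (if T i = false then
      (edgeCount (Fin 4) ((cornerBound v b₁ b₂ b₃ l T +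
        cornerBound v b₁ b₂ b₃ l (Function.update T i true) - boxSize v b₁ b₂ b₃ l i) / 2) : ℤ)
      else 0) =
    signedSum (fun t => quasi t.poly t.sign (t.form.eval v b₁ b₂ b₃ l)) edgeTerms := by
  simp +contextual only [edgeCount_cornerBound]
  simp only [sum_fin_four_arrow, signedSum, edgeTerms, List.map_map, Function.comp_def]
  generalize quasi [1, 2, 1, 0, 0] 0 = q
  simp [edgeForm, cornerForm, sideForm, Fin.sum_univ_four]
  ring

theorem prod_boxSize_add_one : 48 * ∏ i, ((boxSize v b₁ b₂ b₃ l i : ℤ) + 1) =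
    signedSum (fun t => quasi t.poly t.sign (t.form.eval v b₁ b₂ b₃ l)) powerTerms := by
  have h1 {k : ℤ} (hk : 0 ≤ k) : quasi [24, 60, 50, 15, 1] 0 k = (k + 1) ^ 4 :=
    quasi_eq_add_pow_four 1 hk
  have h2 {k : ℤ} (hk : 0 ≤ k) : quasi [24, 84, 110, 65, 16] 0 k = (k + 2) ^ 4 :=
    quasi_eq_add_pow_four 2 hk
  have h3 {k : ℤ} (hk : 0 ≤ k) : quasi [24, 108, 194, 175, 81] 0 k = (k + 3) ^ 4 :=
    quasi_eq_add_pow_four 3 hk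
  have h4 {k : ℤ} (hk : 0 ≤ k) : quasi [24, 132, 302, 369, 256] 0 k = (k + 4) ^ 4 :=
    quasi_eq_add_pow_four 4 hk
  simp (disch := positivity) only [signedSum, powerTerms, List.map_cons, List.map_nil,
    List.sum_cons, List.sum_nil, Form.eval, h1, h2, h3, h4]
  simp [Fin.prod_univ_four, boxSize]
  ring

/-- The product vanishes unless `b₁`, `b₂` and `l` are all even. -/
theorem prod_boxSize_even :
    8 * ((-1 : ℤ) ^ (b₁ + b₃) * ∏ i, if boxSize v b₁ b₂ b₃ l i % 2 = 0 then 1 else 0) =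
      (-1) ^ b₃ * ((1 + (-1) ^ b₁) * (1 + (-1) ^ b₂) * (1 + (-1) ^ l)) := by
  have hmod : ∀ i, boxSize v b₁ b₂ b₃ l i % 2 =
      ![(b₂ + l) % 2, (b₁ + b₂ + l) % 2, (b₁ + l) % 2, (b₁ + l) % 2] i := by
    simp only [Fin.forall_fin_succ, boxSize]
    simp
    omega
  simp only [hmod, Fin.prod_univ_four, pow_add, Matrix.cons_val]
  obtain h1 | h1 := Nat.even_or_odd b₁ <;> obtain h2 | h2 := Nat.even_or_odd b₂ <;>
    obtain h3 | h3 := Nat.even_or_odd l <;>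
    simp only [h1.neg_one_pow, h2.neg_one_pow, h3.neg_one_pow] <;>
    (simp only [Nat.even_iff, Nat.odd_iff] at h1 h2 h3
     norm_num [Nat.add_mod, h1, h2, h3, mul_comm])

theorem signTerms_eq : 6 * ((-1 : ℤ) ^ b₃ * ((1 + (-1) ^ b₁) * (1 + (-1) ^ b₂) * (1 + (-1) ^ l))) =
    signedSum (fun t => quasi t.poly t.sign (t.form.eval v b₁ b₂ b₃ l)) signTerms := by
  have h (s₁ s₂ s₃ : ℕ) : quasi [0, 0, 0, 0, 0] 1 (Form.eval (0, s₁, s₂, 1, s₃) v b₁ b₂ b₃ l) =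
      (-1) ^ (s₁ * b₁ + s₂ * b₂ + b₃ + s₃ * l) := by
    rw [← quasi_sign]
    simp [Form.eval]
  have h₀₀₀ := h 0 0 0
  have h₀₀₁ := h 0 0 1
  have h₀₁₀ := h 0 1 0
  have h₀₁₁ := h 0 1 1
  have h₁₀₀ := h 1 0 0
  have h₁₀₁ := h 1 0 1
  have h₁₁₀ := h 1 1 0
  have h₁₁₁ := h 1 1 1
  simp only [Nat.cast_zero, Nat.cast_one] at h₀₀₀ h₀₀₁ h₀₁₀ h₀₁₁ h₁₀₀ h₁₀₁ h₁₁₀ h₁₁₁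
  simp only [signedSum, signTerms, List.map_cons, List.map_nil, List.sum_cons, List.sum_nil,
    h₀₀₀, h₀₀₁, h₀₁₀, h₀₁₁, h₁₀₀, h₁₀₁, h₁₁₀, h₁₁₁]
  simp
  ring

theorem sum_card_parityBox : 96 * (#(parityBox (boxSize v b₁ b₂ b₃ l) (b₁ + b₃)) : ℤ) =
    signedSum (fun t => quasi t.poly t.sign (t.form.eval v b₁ b₂ b₃ l)) boxTerms := by
  rw [boxTerms, signedSum_append, ← prod_boxSize_add_one, ← signTerms_eq, ← prod_boxSize_even v]
  linear_combination 48 * two_mul_card_parityBox (boxSize v b₁ b₂ b₃ l) (b₁ + b₃)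

theorem card_fibre : 96 * (#(fibre v b₁ b₂ b₃ l) : ℤ) =
    signedSum (fun t => quasi t.poly t.sign (t.form.eval v b₁ b₂ b₃ l)) terms := by
  rw [fibre, card_filter_violated_eq_empty cornerBound_le cornerBound_parity, terms,
    signedSum_append, signedSum_append, ← sum_ballCount, ← sum_edgeCount, ← sum_card_parityBox]
  ring

end Fibre

theorem coeff_fibreSeries_eq_sum_card (n : ℕ) : coeff n fibreSeries =
    96 * ∑ v ∈ range (n + 1), ∑ b₁ ∈ range (n + 1), ∑ b₂ ∈ range (n + 1), ∑ b₃ ∈ range (n + 1),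
      ∑ l ∈ range (n + 1), if v + 2 * b₁ + 2 * b₂ + 2 * b₃ + l = n then
        weight b₁ b₂ b₃ l * #(fibre v b₁ b₂ b₃ l) else 0 := by
  simp only [coeff_fibreSeries, ← card_fibre, mul_sum, mul_ite, mul_zero, mul_left_comm]

section Arrays

variable {ι : Type*}

/-- The reflection of the index set reversing the coordinates selected by `T`. -/
def turn (T : ι → Bool) (g : ι → Fin 3) : ι → Fin 3 := fun i => if T i then (g i).rev else g i

theorem turn_turn (S T : ι → Bool) (g : ι → Fin 3) :
    turn S (turn T g) = turn (fun i => T i ^^ S i) g := by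
  ext i
  unfold turn
  by_cases hS : S i <;> by_cases hT : T i <;> simp [hS, hT]

theorem turn_turn_self (T : ι → Bool) (g : ι → Fin 3) : turn T (turn T g) = g := by
  ext i
  rw [turn_turn]
  simp [turn]

theorem turn_const_one (T : ι → Bool) : (turn T fun _ => 1) = fun _ => 1 := by
  ext i
  unfold turn
  split <;> rfl

theorem turn_const_two (T : ι → Bool) : (turn T fun _ => 2) = turn (fun i => !T i) fun _ => 0 := by
  ext i
  simp only [turn]
  cases T i <;> rfl

theorem exists_eq_turn_zero {g : ι → Fin 3} (hg : ∀ i, g i ≠ 1) :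
    ∃ T, g = turn T fun _ => 0 := by
  have key : ∀ t : Fin 3, t ≠ 1 → t = if decide (t = 2) = true then Fin.rev 0 else 0 := by decide
  exact ⟨fun i => decide (g i = 2), funext fun i => key _ (hg i)⟩

/-- All main diagonal sums of `A` equal `s`. Each diagonal is listed in both directions. -/
def DiagSum (s : ℤ) (A : (ι → Fin 3) → ℤ) : Prop :=
  ∀ T : ι → Bool, ∑ t, A (turn T fun _ => t) = s

variable [DecidableEq ι]

/-- All axis-parallel line sums of `A` equal `s`. -/
def LineSum (s : ℤ) (A : (ι → Fin 3) → ℤ) : Prop :=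
  ∀ (j : ι) (g : ι → Fin 3), ∑ t, A (Function.update g j t) = s

theorem LineSum.eq_zero [Finite ι] {A : (ι → Fin 3) → ℤ} (hA : LineSum 0 A)
    (h : ∀ T, A (turn T fun _ => 0) = 0) (g : ι → Fin 3) : A g = 0 := by
  have := Fintype.ofFinite ι
  induction hn : #{i | g i = 1} using Nat.strong_induction_on generalizing g with
  | _ n ih =>
    obtain ⟨j, hj⟩ | hg := em (∃ j, g j = 1)
    · have hlt (t : Fin 3) (ht : t ≠ 1) : #{i | Function.update g j t i = 1} < n := by
        rw [← hn]
        refine card_lt_card ((ssubset_iff_of_subset fun i => ?_).2 ⟨j, ?_⟩)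
        · by_cases hij : i = j <;> simp [hij, ht]
        · simp [hj, ht]
      have hs := hA j g
      rw [Fin.sum_univ_three, ih _ (hlt 0 (by decide)) _ rfl, ih _ (hlt 2 (by decide)) _ rfl,
        ← hj, Function.update_eq_self] at hs
      simpa using hs
    · push Not at hg
      obtain ⟨T, rfl⟩ := exists_eq_turn_zero hg
      exact h T

variable [Fintype ι]

/-- Three integers with sum zero are determined by the two outer ones: the value at position `t` is
`endWeight t false` times the first plus `endWeight t true` times the last. -/
def endWeight (t : Fin 3) (b : Bool) : ℤ := ![if b then 0 else 1, -1, if b then 1 else 0] t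

/-- The array with vanishing line sums whose corner values are given by `c`. -/
def extend (c : (ι → Bool) → ℤ) (g : ι → Fin 3) : ℤ := ∑ T, (∏ i, endWeight (g i) (T i)) * c T

theorem sum_endWeight (b : Bool) : ∑ t, endWeight t b = 0 := by
  cases b <;> rfl

theorem lineSum_extend (c : (ι → Bool) → ℤ) : LineSum 0 (extend c) := by
  intro j g
  simp only [extend]
  rw [sum_comm]
  refine sum_eq_zero fun T _ => ?_
  have h (t) : ∏ i, endWeight (Function.update g j t i) (T i) =
      endWeight t (T j) * ∏ i ∈ {j}ᶜ, endWeight (g i) (T i) := by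
    rw [Fintype.prod_eq_mul_prod_compl j, Function.update_self]
    refine congrArg _ (prod_congr rfl fun i hi => ?_)
    rw [Function.update_of_ne (by simpa using hi)]
  simp only [h, ← sum_mul, sum_endWeight, zero_mul]

theorem extend_turn_zero (c : (ι → Bool) → ℤ) (T : ι → Bool) :
    extend c (turn T fun _ => 0) = c T := by
  have h (S : ι → Bool) :
      ∏ i, endWeight (turn T (fun _ => 0) i) (S i) = if T = S then 1 else 0 := by
    have key : ∀ a b : Bool, endWeight (if a then Fin.rev 0 else 0) b = if a = b then 1 else 0 := by
      decide
    simp only [turn, key, funext_iff, prod_boole, mem_univ, forall_const]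
  simp [extend, h]

theorem LineSum.eq_extend {A : (ι → Fin 3) → ℤ} (hA : LineSum 0 A) :
    A = extend fun T => A (turn T fun _ => 0) := by
  refine funext fun g => sub_eq_zero.1 ?_
  refine LineSum.eq_zero (A := fun g => A g - extend (fun T => A (turn T fun _ => 0)) g)
    (fun j g => ?_) (fun T => ?_) g
  · rw [sum_sub_distrib, hA j g, lineSum_extend _ j g, sub_zero]
  · rw [extend_turn_zero, sub_self]

theorem extend_one (c : (ι → Bool) → ℤ) :
    extend c (fun _ => 1) = (-1) ^ Fintype.card ι * ∑ T, c T := by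
  simp [extend, endWeight, mul_sum]

theorem sum_arrow_not (c : (ι → Bool) → ℤ) : ∑ T : ι → Bool, c (fun i => !T i) = ∑ T, c T :=
  (Equiv.arrowCongr (Equiv.refl ι) Equiv.boolNot).sum_comp c

theorem diagSum_extend {c : (ι → Bool) → ℤ} (hc : ∀ T, c (fun i => !T i) = -c T) :
    DiagSum 0 (extend c) := by
  have h0 : ∑ T, c T = 0 := by
    have h := sum_arrow_not c
    simp only [hc, sum_neg_distrib] at h
    linarith
  intro T
  rw [Fin.sum_univ_three, turn_const_one, turn_const_two, extend_turn_zero, extend_turn_zero,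
    extend_one, h0, hc]
  ring

/-- The lines give the centre as the sum of the corners up to sign, and the diagonals give the sum
of the corners as a multiple of the centre. -/
theorem LineSum.apply_one_eq_zero {A : (ι → Fin 3) → ℤ} (hι : Fintype.card ι ≠ 1)
    (hA : LineSum 0 A) (hD : DiagSum 0 A) : A (fun _ => 1) = 0 := by
  have h₁ := congrFun hA.eq_extend fun _ => 1
  rw [extend_one] at h₁
  have h₂ : ∑ T : ι → Bool, ∑ t, A (turn T fun _ => t) = 0 := sum_eq_zero fun T _ => hD T
  simp only [Fin.sum_univ_three, sum_add_distrib, turn_const_one, turn_const_two,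
    sum_arrow_not fun T => A (turn T fun _ => 0), sum_const, card_univ, Fintype.card_fun,
    Fintype.card_bool, nsmul_eq_mul, Nat.cast_pow, Nat.cast_ofNat] at h₂
  have hne : (2 * (-1) ^ Fintype.card ι + 2 ^ Fintype.card ι : ℤ) ≠ 0 := fun h => hι <| by
    have habs : 2 ^ Fintype.card ι = 2 := by
      simpa [Int.natAbs_mul, Int.natAbs_pow] using
        congrArg Int.natAbs (eq_neg_of_add_eq_zero_right h)
    exact Nat.pow_right_injective le_rfl (habs.trans (pow_one 2).symm)
  have hsq : ((-1) ^ Fintype.card ι * (-1) ^ Fintype.card ι : ℤ) = 1 := by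
    rw [← mul_pow, neg_mul_neg, one_mul, one_pow]
  refine (mul_eq_zero.1 ?_).resolve_left hne
  linear_combination h₂ + 2 * (-1) ^ Fintype.card ι * h₁ +
    2 * (∑ T, A (turn T fun _ => 0)) * hsq

end Arrays

section Coordinates

/-- The corner values of an array with zero line and diagonal sums in terms of eight of them;
`false` stands for index `0` and `true` for index `2`. The centre of such an array vanishes, so
opposite corners carry opposite values. -/
def corner (p : Fin 8 → ℤ) (T : Fin 4 → Bool) : ℤ :=
  match T 0, T 1, T 2, T 3 with
  | false, false, false, false => p 0
  | true, false, false, false => p 1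
  | false, true, false, false => p 2
  | false, false, true, false => p 3
  | false, false, false, true => p 4
  | true, true, false, false => p 5
  | true, false, true, false => p 6
  | true, false, false, true => p 7
  | false, true, true, false => -p 7
  | false, true, false, true => -p 6
  | false, false, true, true => -p 5
  | true, true, true, false => -p 4
  | true, true, false, true => -p 3
  | true, false, true, true => -p 2
  | false, true, true, true => -p 1
  | true, true, true, true => -p 0

theorem corner_not (p : Fin 8 → ℤ) (T : Fin 4 → Bool) : corner p (fun i => !T i) = -corner p T := by
  simp only [corner]
  cases T 0 <;> cases T 1 <;> cases T 2 <;> cases T 3 <;> simp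

theorem exists_eq_corner {c : (Fin 4 → Bool) → ℤ} (hc : ∀ T, c (fun i => !T i) = -c T) :
    ∃ p, c = corner p := by
  refine ⟨![c ![false, false, false, false], c ![true, false, false, false],
    c ![false, true, false, false], c ![false, false, true, false], c ![false, false, false, true],
    c ![true, true, false, false], c ![true, false, true, false], c ![true, false, false, true]],
    funext fun T => ?_⟩
  have h := hc T
  have hnot : (fun i => !T i) = ![!T 0, !T 1, !T 2, !T 3] := by ext i; fin_cases i <;> rfl
  have hT : T = ![T 0, T 1, T 2, T 3] := by ext i; fin_cases i <;> rfl
  rw [hnot, hT] at h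
  conv_lhs => rw [hT]
  revert h
  simp only [corner]
  cases T 0 <;> cases T 1 <;> cases T 2 <;> cases T 3 <;> intro h <;> simp at h ⊢ <;> linarith

theorem exists_eq_extend_corner {A : (Fin 4 → Fin 3) → ℤ} (hA : LineSum 0 A) (hD : DiagSum 0 A) :
    ∃ p, A = extend (corner p) := by
  obtain ⟨p, hp⟩ := exists_eq_corner (c := fun T => A (turn T fun _ => 0)) fun T => by
    have h := hD T
    rw [Fin.sum_univ_three, turn_const_one, turn_const_two,
      hA.apply_one_eq_zero (by decide) hD] at h
    linarith
  exact ⟨p, hp ▸ hA.eq_extend⟩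

theorem extend_corner_apply (p : Fin 8 → ℤ) (a b c d : Fin 3) :
    extend (corner p) ![a, b, c, d] = ∑ s, ∑ t, ∑ u, ∑ w,
      endWeight a s * endWeight b t * endWeight c u * endWeight d w * corner p ![s, t, u, w] := by
  rw [extend, sum_fin_four_arrow]
  simp [Fin.prod_univ_four]

/-- The descending vector with consecutive gaps `2 * b₁`, `2 * b₂`, `2 * b₃` and last entry `l`. -/
def gapVec (b₁ b₂ b₃ l : ℕ) : Fin 4 → ℕ :=
  ![2 * b₁ + 2 * b₂ + 2 * b₃ + l, 2 * b₂ + 2 * b₃ + l, 2 * b₃ + l, l]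

/-- For the magic cube `m + extend (corner p)` with `m = v + 2 * b₁ + 2 * b₂ + 2 * b₃ + l`: its
entries next to the centre fall short of `m` by the entries of `gapVec b₁ b₂ b₃ l`, and `f i` is its
entry at the midpoint of the `i`-th edge issuing from the corner `(0, 0, 0, 0)`. -/
structure IsChart (v b₁ b₂ b₃ l : ℕ) (p : Fin 8 → ℤ) (f : Fin 4 → ℕ) : Prop where
  axis : ∀ k, extend (corner p) (Function.update (fun _ => 1) k 0) = -gapVec b₁ b₂ b₃ l k
  edge : ∀ i, (f i : ℤ) = v + 2 * b₁ + 2 * b₂ + 2 * b₃ + l +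
    extend (corner p) (Function.update (fun _ => 0) i 1)

theorem extend_corner_axis (p : Fin 8 → ℤ) (k : Fin 4) :
    extend (corner p) (Function.update (fun _ => 1) k 0) =
      ![p 1 - p 0 - p 2 - p 3 - p 4 + p 5 + p 6 + p 7,
        p 2 - p 0 - p 1 - p 3 - p 4 + p 5 - p 6 - p 7,
        p 3 - p 0 - p 1 - p 2 - p 4 - p 5 + p 6 - p 7,
        p 4 - p 0 - p 1 - p 2 - p 3 - p 5 - p 6 + p 7] k := by
  have e : Function.update (fun _ => 1 : Fin 4 → Fin 3) k 0 =
      ![if k = 0 then 0 else 1, if k = 1 then 0 else 1, if k = 2 then 0 else 1,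
        if k = 3 then 0 else 1] := by
    revert k; decide
  rw [e, extend_corner_apply]
  fin_cases k <;> simp [endWeight, corner] <;> ring

theorem extend_corner_edge (p : Fin 8 → ℤ) (i : Fin 4) :
    extend (corner p) (Function.update (fun _ => 0) i 1) = -(p 0 + ![p 1, p 2, p 3, p 4] i) := by
  have e : Function.update (fun _ => 0 : Fin 4 → Fin 3) i 1 =
      ![if i = 0 then 1 else 0, if i = 1 then 1 else 0, if i = 2 then 1 else 0,
        if i = 3 then 1 else 0] := by
    revert i; decide
  rw [e, extend_corner_apply]
  fin_cases i <;> simp [endWeight, corner] <;> ring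

variable {v b₁ b₂ b₃ l : ℕ} {p : Fin 8 → ℤ} {f : Fin 4 → ℕ}

theorem isChart_iff : IsChart v b₁ b₂ b₃ l p f ↔
    2 * p 0 = 4 * v + 7 * b₁ + 6 * b₂ + 5 * b₃ + 2 * l - (f 0 + f 1 + f 2 + f 3) ∧
    p 1 = v + 2 * b₁ + 2 * b₂ + 2 * b₃ + l - f 0 - p 0 ∧
    p 2 = v + 2 * b₁ + 2 * b₂ + 2 * b₃ + l - f 1 - p 0 ∧
    p 3 = v + 2 * b₁ + 2 * b₂ + 2 * b₃ + l - f 2 - p 0 ∧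
    p 4 = v + 2 * b₁ + 2 * b₂ + 2 * b₃ + l - f 3 - p 0 ∧
    p 5 = 2 * v + 3 * b₁ + 2 * b₂ + 2 * b₃ + l - f 2 - f 3 - p 0 ∧
    p 6 = 2 * v + 3 * b₁ + 3 * b₂ + 2 * b₃ + l - f 1 - f 3 - p 0 ∧
    p 7 = 2 * v + 3 * b₁ + 3 * b₂ + 3 * b₃ + l - f 1 - f 2 - p 0 := by
  have h : IsChart v b₁ b₂ b₃ l p f ↔ _ ∧ _ := ⟨fun h => ⟨h.axis, h.edge⟩, fun h => ⟨h.1, h.2⟩⟩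
  simp only [h, extend_corner_axis, extend_corner_edge, Fin.forall_fin_succ, gapVec]
  simp
  omega

theorem IsChart.unique {q : Fin 8 → ℤ} (hp : IsChart v b₁ b₂ b₃ l p f)
    (hq : IsChart v b₁ b₂ b₃ l q f) : p = q := by
  rw [isChart_iff] at hp hq
  ext i
  fin_cases i <;> simp <;> omega

/-- The parity condition on the box makes the value at the corner `(0, 0, 0, 0)` an integer. -/
theorem exists_isChart (hf : f ∈ fibre v b₁ b₂ b₃ l) : ∃ p, IsChart v b₁ b₂ b₃ l p f := by
  rw [fibre, mem_filter, mem_parityBox, Fin.sum_univ_four] at hf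
  obtain ⟨x, hx⟩ : ∃ x : ℤ,
      2 * x = 4 * v + 7 * b₁ + 6 * b₂ + 5 * b₃ + 2 * l - (f 0 + f 1 + f 2 + f 3) :=
    ⟨(4 * v + 7 * b₁ + 6 * b₂ + 5 * b₃ + 2 * l - (f 0 + f 1 + f 2 + f 3)) / 2,
      by have := hf.1.2; omega⟩
  let m : ℤ := v + 2 * b₁ + 2 * b₂ + 2 * b₃ + l
  exact ⟨![x, m - f 0 - x, m - f 1 - x, m - f 2 - x, m - f 3 - x,
    2 * v + 3 * b₁ + 2 * b₂ + 2 * b₃ + l - f 2 - f 3 - x,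
    2 * v + 3 * b₁ + 3 * b₂ + 2 * b₃ + l - f 1 - f 3 - x,
    2 * v + 3 * b₁ + 3 * b₂ + 3 * b₃ + l - f 1 - f 2 - x],
    isChart_iff.2 ⟨hx, rfl, rfl, rfl, rfl, rfl, rfl, rfl⟩⟩

theorem cornerDist_natCast {U f : Fin 4 → ℕ} (hf : f ≤ U) (T : Fin 4 → Bool) :
    (cornerDist U T f : ℤ) = ∑ i, if T i then (U i : ℤ) - f i else f i := by
  rw [cornerDist, Nat.cast_sum]
  refine sum_congr rfl fun i _ => ?_
  unfold reflect
  split_ifs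
  · exact Nat.cast_sub (hf i)
  · rfl

/-- The corner of the cube whose entry is bounded by the truncation of the box at `T`: all bits are
flipped when `T` has an odd number of `true` bits. -/
def twist (T : Fin 4 → Bool) (i : Fin 4) : Bool := T i ^^ (T 0 ^^ T 1 ^^ T 2 ^^ T 3)

theorem twist_twist : ∀ T, twist (twist T) = T := by
  decide

theorem IsChart.corner_twist (h : IsChart v b₁ b₂ b₃ l p f) (T : Fin 4 → Bool) :
    2 * (corner p (twist T) - (v + 2 * b₁ + 2 * b₂ + 2 * b₃ + l)) =
      (cornerForm T).eval v b₁ b₂ b₃ l -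
        ∑ i, if T i then (boxSize v b₁ b₂ b₃ l i : ℤ) - f i else f i := by
  obtain ⟨h₀, h₁, h₂, h₃, h₄, h₅, h₆, h₇⟩ := isChart_iff.1 h
  simp only [cornerForm, Form.eval, boxSize, corner, twist, h₁, h₂, h₃, h₄, h₅, h₆, h₇,
    Fin.sum_univ_four]
  clear h h₁ h₂ h₃ h₄ h₅ h₆ h₇
  cases T 0 <;> cases T 1 <;> cases T 2 <;> cases T 3 <;> simp <;> linarith

theorem IsChart.mem_violated (h : IsChart v b₁ b₂ b₃ l p f) (hf : f ≤ boxSize v b₁ b₂ b₃ l)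
    (T : Fin 4 → Bool) :
    T ∈ violated (boxSize v b₁ b₂ b₃ l) (cornerBound v b₁ b₂ b₃ l) f ↔
      v + 2 * b₁ + 2 * b₂ + 2 * b₃ + l < corner p (twist T) := by
  have hT := h.corner_twist T
  rw [MagicCube.mem_violated, cornerDist_natCast hf, cornerBound]
  omega

theorem IsChart.violated_eq_empty (h : IsChart v b₁ b₂ b₃ l p f) (hf : f ≤ boxSize v b₁ b₂ b₃ l) :
    violated (boxSize v b₁ b₂ b₃ l) (cornerBound v b₁ b₂ b₃ l) f = ∅ ↔
      ∀ T, corner p T ≤ v + 2 * b₁ + 2 * b₂ + 2 * b₃ + l := by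
  simp only [eq_empty_iff_forall_notMem, h.mem_violated hf, not_lt]
  exact ⟨fun h T => twist_twist T ▸ h (twist T), fun h T => h _⟩

/-- The upper bounds of the box are the nonnegativity of four further edge midpoints. -/
theorem IsChart.le_boxSize (h : IsChart v b₁ b₂ b₃ l p f)
    (hp : ∀ g, 0 ≤ v + 2 * b₁ + 2 * b₂ + 2 * b₃ + l + extend (corner p) g) :
    f ≤ boxSize v b₁ b₂ b₃ l := by
  rw [isChart_iff] at h
  have h₀ := hp ![1, 0, 0, 2]
  have h₁ := hp ![0, 1, 0, 2]
  have h₂ := hp ![0, 0, 1, 2]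
  have h₃ := hp ![0, 0, 2, 1]
  simp [extend_corner_apply, endWeight, corner] at h₀ h₁ h₂ h₃
  intro i
  fin_cases i <;> simp [boxSize] <;> omega

theorem IsChart.mem_fibre_of_nonneg (h : IsChart v b₁ b₂ b₃ l p f)
    (hp : ∀ g, 0 ≤ v + 2 * b₁ + 2 * b₂ + 2 * b₃ + l + extend (corner p) g) :
    f ∈ fibre v b₁ b₂ b₃ l := by
  have hf := h.le_boxSize hp
  rw [fibre, mem_filter, mem_parityBox, h.violated_eq_empty hf, Fin.sum_univ_four]
  refine ⟨⟨hf, ?_⟩, fun T => ?_⟩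
  · rw [isChart_iff] at h
    omega
  · have hT := hp (turn (fun i => !T i) fun _ => 0)
    rw [extend_turn_zero, corner_not] at hT
    linarith

theorem endWeight_cases (t : Fin 3) :
    t = 0 ∧ endWeight t false = 1 ∧ endWeight t true = 0 ∨
    t = 1 ∧ endWeight t false = -1 ∧ endWeight t true = -1 ∨
    t = 2 ∧ endWeight t false = 0 ∧ endWeight t true = 1 := by
  revert t; decide

set_option maxHeartbeats 800000 in
-- one linear system for each of the 65 entries
theorem IsChart.nonneg_of_le_boxSize (h : IsChart v b₁ b₂ b₃ l p f)
    (hf : f ≤ boxSize v b₁ b₂ b₃ l) (a b c d : Fin 3) (hg : a = 1 ∨ b = 1 ∨ c = 1 ∨ d = 1) :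
    0 ≤ v + 2 * b₁ + 2 * b₂ + 2 * b₃ + l + extend (corner p) ![a, b, c, d] := by
  have hf' (i) : (f i : ℤ) ≤ boxSize v b₁ b₂ b₃ l i := Int.ofNat_le.2 (hf i)
  simp only [Fin.forall_fin_succ, boxSize] at hf'
  simp at hf'
  obtain ⟨h₀, h₁, h₂, h₃, h₄, h₅, h₆, h₇⟩ := isChart_iff.1 h
  rw [extend_corner_apply]
  simp only [Fintype.sum_bool, corner, Matrix.cons_val]
  rcases endWeight_cases a with ⟨rfl, ha, ha'⟩ | ⟨rfl, ha, ha'⟩ | ⟨rfl, ha, ha'⟩ <;>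
  rcases endWeight_cases b with ⟨rfl, hb, hb'⟩ | ⟨rfl, hb, hb'⟩ | ⟨rfl, hb, hb'⟩ <;>
  rcases endWeight_cases c with ⟨rfl, hc, hc'⟩ | ⟨rfl, hc, hc'⟩ | ⟨rfl, hc, hc'⟩ <;>
  rcases endWeight_cases d with ⟨rfl, hd, hd'⟩ | ⟨rfl, hd, hd'⟩ | ⟨rfl, hd, hd'⟩ <;>
  first
  | exact absurd hg (by decide)
  | simp only [ha, hb, hc, hd, ha', hb', hc', hd']
    linarith

theorem IsChart.nonneg_of_mem_fibre (h : IsChart v b₁ b₂ b₃ l p f) (hf : f ∈ fibre v b₁ b₂ b₃ l)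
    (g : Fin 4 → Fin 3) : 0 ≤ v + 2 * b₁ + 2 * b₂ + 2 * b₃ + l + extend (corner p) g := by
  rw [fibre, mem_filter, mem_parityBox] at hf
  obtain ⟨⟨hU, -⟩, hv⟩ := hf
  by_cases hg : ∀ i, g i ≠ 1
  · obtain ⟨T, rfl⟩ := exists_eq_turn_zero hg
    have hT := (h.violated_eq_empty hU).1 hv fun i => !T i
    rw [corner_not] at hT
    rw [extend_turn_zero]
    linarith
  · have e : g = ![g 0, g 1, g 2, g 3] := by ext i; fin_cases i <;> rfl
    rw [e]
    refine h.nonneg_of_le_boxSize hU _ _ _ _ ?_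
    by_contra! hne
    exact hg fun i => by fin_cases i <;> simp [hne]

end Coordinates

section Magic

variable {ι : Type*} [DecidableEq ι] {m n : ℕ} {a : (ι → Fin 3) → ℕ}

/-- The array `a` of natural numbers is a magic hypercube with magic sum `n`. -/
def Magic (n : ℕ) (a : (ι → Fin 3) → ℕ) : Prop :=
  LineSum n (fun g => (a g : ℤ)) ∧ DiagSum n fun g => (a g : ℤ)

theorem magic_iff : Magic (3 * m) a ↔
    LineSum 0 (fun g => (a g : ℤ) - m) ∧ DiagSum 0 fun g => (a g : ℤ) - m := by
  simp only [Magic, LineSum, DiagSum, sum_sub_distrib, sum_const, card_univ, Fintype.card_fin,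
    sub_eq_zero, nsmul_eq_mul, Nat.cast_mul, Nat.cast_ofNat]

theorem Magic.apply_le [Nonempty ι] (h : Magic n a) (g : ι → Fin 3) : a g ≤ n := by
  obtain ⟨j⟩ := ‹Nonempty ι›
  have hle := single_le_sum (f := fun t => (a (Function.update g j t) : ℤ))
    (fun t _ => by positivity) (mem_univ (g j))
  rw [h.1 j g, Function.update_eq_self] at hle
  exact_mod_cast hle

theorem Magic.perm (h : Magic n a) (σ : Equiv.Perm ι) : Magic n fun g => a (g ∘ σ) := by
  refine ⟨fun j g => ?_, fun T => h.2 (T ∘ σ)⟩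
  simp only [Function.update_comp_equiv]
  exact h.1 _ _

theorem turn_update (T : ι → Bool) (g : ι → Fin 3) (j : ι) (t : Fin 3) :
    turn T (Function.update g j t) =
      Function.update (turn T g) j (if T j then t.rev else t) := by
  ext i
  obtain rfl | hij := eq_or_ne i j
  · simp [turn]
  · simp [turn, hij]

theorem Magic.turn (h : Magic n a) (T : ι → Bool) : Magic n fun g => a (turn T g) := by
  refine ⟨fun j g => ?_, fun S => ?_⟩
  · simp only [turn_update]
    rw [← h.1 j (MagicCube.turn T g)]
    cases T j
    · rfl
    · exact Equiv.sum_comp Fin.revPerm fun t => (a (Function.update (MagicCube.turn T g) j t) : ℤ)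
  · simp only [turn_turn]
    exact h.2 _

theorem Magic.exists_corner {a : (Fin 4 → Fin 3) → ℕ} (h : Magic (3 * m) a) :
    ∃ p, ∀ g, (a g : ℤ) = m + extend (corner p) g := by
  rw [magic_iff] at h
  obtain ⟨p, hp⟩ := exists_eq_extend_corner h.1 h.2
  exact ⟨p, fun g => by rw [← hp]; ring⟩

end Magic

section Layers

variable {m v b₁ b₂ b₃ l : ℕ} {a : (Fin 4 → Fin 3) → ℕ}

open Classical in
/-- The finite set of magic cubes with magic sum `3 * m`. -/
noncomputable def cubes (m : ℕ) : Finset ((Fin 4 → Fin 3) → ℕ) :=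
  (Fintype.piFinset fun _ => range (3 * m + 1)).filter (Magic (3 * m))

theorem mem_cubes : a ∈ cubes m ↔ Magic (3 * m) a := by
  simp only [cubes, mem_filter, Fintype.mem_piFinset, mem_range, and_iff_right_iff_imp]
  exact fun h g => Nat.lt_succ_of_le (h.apply_le g)

/-- By how much the entry next to the centre at index `0` of the `k`-th axis falls short of the
central value `m`. -/
def deflect (m : ℕ) (a : (Fin 4 → Fin 3) → ℕ) (k : Fin 4) : ℤ :=
  m - a (Function.update (fun _ => 1) k 0)

/-- The magic cubes of magic sum `3 * m` with prescribed deviations next to the centre. -/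
noncomputable def layer (m : ℕ) (L : Fin 4 → ℤ) : Finset ((Fin 4 → Fin 3) → ℕ) :=
  (cubes m).filter fun a => deflect m a = L

theorem mem_layer {L : Fin 4 → ℤ} : a ∈ layer m L ↔ Magic (3 * m) a ∧ deflect m a = L := by
  rw [layer, mem_filter, mem_cubes]

/-- The entries at the midpoints of the four edges issuing from the corner `(0, 0, 0, 0)`. -/
def edgeEntries (a : (Fin 4 → Fin 3) → ℕ) (i : Fin 4) : ℕ := a (Function.update (fun _ => 0) i 1)

theorem isChart_edgeEntries {p : Fin 8 → ℤ} (hm : m = v + 2 * b₁ + 2 * b₂ + 2 * b₃ + l)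
    (hp : ∀ g, (a g : ℤ) = m + extend (corner p) g)
    (hL : deflect m a = fun i => (gapVec b₁ b₂ b₃ l i : ℤ)) :
    IsChart v b₁ b₂ b₃ l p (edgeEntries a) where
  axis k := by
    have hk := congrFun hL k
    rw [deflect, hp] at hk
    linarith
  edge i := by rw [edgeEntries, hp, hm]; push_cast; rfl

theorem edgeEntries_mem_fibre (hm : m = v + 2 * b₁ + 2 * b₂ + 2 * b₃ + l)
    (ha : a ∈ layer m fun i => (gapVec b₁ b₂ b₃ l i : ℤ)) : edgeEntries a ∈ fibre v b₁ b₂ b₃ l := by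
  obtain ⟨ha, hL⟩ := mem_layer.1 ha
  obtain ⟨p, hp⟩ := ha.exists_corner
  refine (isChart_edgeEntries hm hp hL).mem_fibre_of_nonneg fun g => ?_
  have hg := hp g
  rw [hm] at hg
  push_cast at hg
  rw [← hg]
  positivity

theorem injOn_edgeEntries (hm : m = v + 2 * b₁ + 2 * b₂ + 2 * b₃ + l) :
    Set.InjOn edgeEntries (layer m fun i => (gapVec b₁ b₂ b₃ l i : ℤ)) := by
  intro a ha a' ha' e
  obtain ⟨ha, hL⟩ := mem_layer.1 ha
  obtain ⟨ha', hL'⟩ := mem_layer.1 ha'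
  obtain ⟨p, hp⟩ := ha.exists_corner
  obtain ⟨p', hp'⟩ := ha'.exists_corner
  obtain rfl := (isChart_edgeEntries hm hp hL).unique (e ▸ isChart_edgeEntries hm hp' hL')
  ext g
  exact_mod_cast (hp g).trans (hp' g).symm

theorem exists_mem_layer {f : Fin 4 → ℕ} (hm : m = v + 2 * b₁ + 2 * b₂ + 2 * b₃ + l)
    (hf : f ∈ fibre v b₁ b₂ b₃ l) :
    ∃ a ∈ layer m fun i => (gapVec b₁ b₂ b₃ l i : ℤ), edgeEntries a = f := by
  obtain ⟨p, hp⟩ := exists_isChart hf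
  have hm' : (m : ℤ) = v + 2 * b₁ + 2 * b₂ + 2 * b₃ + l := by exact_mod_cast hm
  have hn (g) := Int.toNat_of_nonneg (hp.nonneg_of_mem_fibre hf g)
  simp only [← hm'] at hn
  refine ⟨fun g => (m + extend (corner p) g).toNat, mem_layer.2 ⟨?_, funext fun k => ?_⟩,
    funext fun i => ?_⟩
  · rw [magic_iff]
    simp only [hn, add_sub_cancel_left]
    exact ⟨lineSum_extend _, diagSum_extend (corner_not p)⟩
  · rw [deflect, hn, hp.axis]
    ring
  · have hi := hp.edge i
    rw [← hm', ← hn] at hi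
    exact_mod_cast hi.symm

theorem card_layer (hm : m = v + 2 * b₁ + 2 * b₂ + 2 * b₃ + l) :
    #(layer m fun i => (gapVec b₁ b₂ b₃ l i : ℤ)) = #(fibre v b₁ b₂ b₃ l) :=
  card_nbij edgeEntries (fun _ => edgeEntries_mem_fibre hm) (injOn_edgeEntries hm)
    fun _ => exists_mem_layer hm

theorem Magic.apply_axis (h : Magic (3 * m) a) (k : Fin 4) :
    (a (Function.update (fun _ => 1) k 0) : ℤ) + a (Function.update (fun _ => 1) k 2) = 2 * m := by
  have hk := h.1 k fun _ => 1
  rw [magic_iff] at h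
  have hc : (a fun _ => 1 : ℤ) - m = 0 := h.1.apply_one_eq_zero (by decide) h.2
  rw [Fin.sum_univ_three, Function.update_eq_self_iff.2 rfl] at hk
  push_cast at hk
  linarith

theorem deflect_turn (h : Magic (3 * m) a) (T : Fin 4 → Bool) :
    deflect m (fun g => a (turn T g)) = fun k => if T k then -deflect m a k else deflect m a k := by
  ext k
  have hk := h.apply_axis k
  simp only [deflect, turn_update, turn_const_one]
  cases T k
  · rfl
  · simp only [if_true, show (0 : Fin 3).rev = 2 from rfl]
    linarith

theorem deflect_perm (m : ℕ) (a : (Fin 4 → Fin 3) → ℕ) (σ : Equiv.Perm (Fin 4)) :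
    deflect m (fun g => a (g ∘ σ)) = deflect m a ∘ σ.symm := by
  ext k
  simp only [deflect, Function.update_comp_equiv]
  rfl

theorem card_layer_perm (m : ℕ) (L : Fin 4 → ℤ) (σ : Equiv.Perm (Fin 4)) :
    #(layer m (L ∘ σ)) = #(layer m L) := by
  refine card_nbij' (fun a g => a (g ∘ σ)) (fun a g => a (g ∘ σ.symm)) (fun a ha => ?_)
    (fun a ha => ?_) (fun a _ => ?_) fun a _ => ?_
  · obtain ⟨ha, hL⟩ := mem_layer.1 ha
    exact mem_layer.2 ⟨ha.perm σ, by ext; simp [deflect_perm, hL]⟩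
  · obtain ⟨ha, hL⟩ := mem_layer.1 ha
    exact mem_layer.2 ⟨ha.perm σ.symm, by ext; simp [deflect_perm, hL]⟩
  all_goals ext; simp [Function.comp_assoc]

theorem card_layer_abs (m : ℕ) (L : Fin 4 → ℤ) : #(layer m fun k => |L k|) = #(layer m L) := by
  let T (k : Fin 4) : Bool := decide (L k < 0)
  have habs : (fun k => |L k|) = fun k => if T k then -L k else L k := by
    ext k
    by_cases h : L k < 0
    · simp [T, h, abs_of_neg h]
    · simp [T, h, abs_of_nonneg (not_lt.1 h)]
  rw [habs]
  refine card_nbij' (fun a g => a (turn T g)) (fun a g => a (turn T g)) (fun a ha => ?_)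
    (fun a ha => ?_) (fun a _ => ?_) fun a _ => ?_
  · obtain ⟨ha, hL⟩ := mem_layer.1 ha
    refine mem_layer.2 ⟨ha.turn T, ?_⟩
    rw [deflect_turn ha, hL]
    ext k
    by_cases hk : T k <;> simp [hk]
  · obtain ⟨ha, hL⟩ := mem_layer.1 ha
    exact mem_layer.2 ⟨ha.turn T, by rw [deflect_turn ha, hL]⟩
  all_goals simp only [turn_turn_self]

theorem card_cubes_eq_sum_card_layer (m : ℕ) :
    #(cubes m) = ∑ L ∈ Fintype.piFinset fun _ => Icc (-m : ℤ) m, #(layer m L) := by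
  refine card_eq_sum_card_fiberwise fun a ha => Fintype.mem_piFinset.2 fun k => ?_
  have hk := (mem_cubes.1 ha).apply_axis k
  rw [mem_Icc, deflect]
  omega

/-- The deviations are given by the corners, with coefficients congruent modulo `2`. -/
theorem layer_parity {L : Fin 4 → ℤ} (h : (layer m L).Nonempty) (i j : Fin 4) :
    L i % 2 = L j % 2 := by
  obtain ⟨a, ha⟩ := h
  obtain ⟨hmagic, rfl⟩ := mem_layer.1 ha
  obtain ⟨p, hp⟩ := hmagic.exists_corner
  simp only [deflect, hp, extend_corner_axis]
  fin_cases i <;> fin_cases j <;> simp <;> omega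

end Layers

section SignedPermutations

variable {ι M : Type*} [Fintype ι] [DecidableEq ι] [AddCommMonoid M]

/-- The number of integers with absolute value `x`. -/
def signWeight (x : ℕ) : ℕ := if x = 0 then 1 else 2

theorem card_insert_neg (x : ℕ) : #({(x : ℤ), -(x : ℤ)} : Finset ℤ) = signWeight x := by
  obtain rfl | hx := eq_or_ne x 0
  · rfl
  · rw [card_pair (by omega), signWeight, if_neg hx]

theorem sum_piFinset_Icc_of_abs {F : (ι → ℤ) → M} (hF : ∀ L, (F fun i => |L i|) = F L) (m : ℕ) :
    ∑ L ∈ Fintype.piFinset fun _ => Icc (-m : ℤ) m, F L =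
      ∑ L ∈ Fintype.piFinset fun _ => range (m + 1), (∏ i, signWeight (L i)) • F fun i => L i := by
  rw [← sum_fiberwise_of_maps_to (g := fun L i => (L i).natAbs)
    (t := Fintype.piFinset fun _ : ι => range (m + 1))]
  · refine sum_congr rfl fun L hL => ?_
    have hfib : {K ∈ Fintype.piFinset fun _ : ι => Icc (-m : ℤ) m | (fun i => (K i).natAbs) = L} =
        Fintype.piFinset fun i => {(L i : ℤ), -(L i : ℤ)} := by
      ext K
      simp only [mem_filter, Fintype.mem_piFinset, mem_Icc, mem_insert, mem_singleton, funext_iff,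
        ← forall_and, mem_range] at hL ⊢
      exact forall_congr' fun i => by have := hL i; omega
    have hconst : ∀ K ∈ Fintype.piFinset fun i => {(L i : ℤ), -(L i : ℤ)},
        F K = F fun i => L i := fun K hK => by
      rw [← hF]
      refine congrArg F (funext fun i => ?_)
      have hi := Fintype.mem_piFinset.1 hK i
      rw [mem_insert, mem_singleton] at hi
      obtain hi | hi := hi <;> simp [hi]
    rw [hfib, sum_congr rfl hconst, sum_const, Fintype.card_piFinset]
    simp only [card_insert_neg]
  · intro L hL
    simp only [Fintype.mem_piFinset, mem_Icc, mem_range] at hL ⊢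
    exact fun i => by have := hL i; omega

/-- The distinct rearrangements of `L`. -/
def rearrangements {α : Type*} [DecidableEq α] (L : ι → α) : Finset (ι → α) :=
  univ.image fun σ : Equiv.Perm ι => L ∘ σ

theorem card_rearrangements_le {α : Type*} [DecidableEq α] [Nonempty α] {L K : ι → α}
    (h : ∀ i j, K i = K j → L i = L j) : #(rearrangements L) ≤ #(rearrangements K) := by
  obtain ⟨e, rfl⟩ := (Function.factorsThrough_iff L).1 fun i j => h i j
  have himage : rearrangements (e ∘ K) = (rearrangements K).image (e ∘ ·) := by
    simp only [rearrangements, image_image]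
    rfl
  exact himage ▸ card_image_le

theorem card_rearrangements_congr {α : Type*} [DecidableEq α] [Nonempty α] {L K : ι → α}
    (h : ∀ i j, L i = L j ↔ K i = K j) : #(rearrangements L) = #(rearrangements K) :=
  (card_rearrangements_le fun i j => (h i j).2).antisymm
    (card_rearrangements_le fun i j => (h i j).1)

end SignedPermutations

section Sorting

variable {n : ℕ} {α M : Type*} [LinearOrder α] [AddCommMonoid M]

/-- The descending rearrangement of `L`. -/
def sortDesc (L : Fin n → α) : Fin n → α := L ∘ Tuple.sort (OrderDual.toDual ∘ L)

theorem antitone_sortDesc (L : Fin n → α) : Antitone (sortDesc L) :=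
  monotone_toDual_comp_iff.1 (Tuple.monotone_sort (OrderDual.toDual ∘ L))

theorem sortDesc_comp_perm (L : Fin n → α) (σ : Equiv.Perm (Fin n)) :
    sortDesc (L ∘ σ) = sortDesc L :=
  Tuple.comp_perm_comp_sort_eq_comp_sort (f := OrderDual.toDual ∘ L) (σ := σ)

theorem sortDesc_eq_self {L : Fin n → α} (hL : Antitone L) : sortDesc L = L :=
  Tuple.unique_antitone (τ := 1) (antitone_sortDesc L) hL

theorem sortDesc_eq_iff {L K : Fin n → α} (hL : Antitone L) :
    sortDesc K = L ↔ K ∈ rearrangements L := by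
  simp only [rearrangements, mem_image, mem_univ, true_and]
  refine ⟨?_, ?_⟩
  · rintro rfl
    exact ⟨(Tuple.sort (OrderDual.toDual ∘ K)).symm, by ext; simp [sortDesc]⟩
  · rintro ⟨σ, rfl⟩
    rw [sortDesc_comp_perm, sortDesc_eq_self hL]

theorem sum_piFinset_of_perm {F : (Fin n → α) → M}
    (hF : ∀ L (σ : Equiv.Perm (Fin n)), F (L ∘ σ) = F L) (S : Finset α) :
    ∑ L ∈ Fintype.piFinset fun _ => S, F L =
      ∑ L ∈ Fintype.piFinset fun _ => S with Antitone L, #(rearrangements L) • F L := by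
  rw [← sum_fiberwise_of_maps_to (g := sortDesc)
    (t := {L ∈ Fintype.piFinset fun _ : Fin n => S | Antitone L})]
  · refine sum_congr rfl fun L hL => ?_
    rw [mem_filter, Fintype.mem_piFinset] at hL
    have hfib : {K ∈ Fintype.piFinset fun _ : Fin n => S | sortDesc K = L} = rearrangements L := by
      ext K
      simp only [mem_filter, sortDesc_eq_iff hL.2, and_iff_right_iff_imp]
      intro hK
      obtain ⟨σ, -, rfl⟩ := mem_image.1 hK
      exact Fintype.mem_piFinset.2 fun i => hL.1 _
    have hconst : ∀ K ∈ rearrangements L, F K = F L := fun K hK => by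
      obtain ⟨σ, -, rfl⟩ := mem_image.1 hK
      exact hF L σ
    rw [hfib, sum_congr rfl hconst, sum_const]
  · intro L hL
    rw [Fintype.mem_piFinset] at hL
    exact mem_filter.2 ⟨Fintype.mem_piFinset.2 fun i => hL _, antitone_sortDesc L⟩

end Sorting

section Gaps

variable {m : ℕ}

theorem antitone_gapVec (b₁ b₂ b₃ l : ℕ) : Antitone (gapVec b₁ b₂ b₃ l) :=
  antitone_iff_forall_lt.2 fun i j _ => by
    fin_cases i <;> fin_cases j <;> simp [gapVec] at *

theorem gapVec_le (b₁ b₂ b₃ l : ℕ) (i : Fin 4) :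
    gapVec b₁ b₂ b₃ l i ≤ 2 * b₁ + 2 * b₂ + 2 * b₃ + l := by
  fin_cases i <;> simp [gapVec]

theorem gapVec_mod_two (b₁ b₂ b₃ l : ℕ) (i j : Fin 4) :
    gapVec b₁ b₂ b₃ l i % 2 = gapVec b₁ b₂ b₃ l j % 2 := by
  fin_cases i <;> fin_cases j <;> simp [gapVec] <;> omega

theorem add_gaps_eq {L : Fin 4 → ℕ} (hL : Antitone L) (hpar : ∀ i j, L i % 2 = L j % 2)
    (hm : L 0 ≤ m) : (m - L 0) + 2 * ((L 0 - L 1) / 2) + 2 * ((L 1 - L 2) / 2) +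
      2 * ((L 2 - L 3) / 2) + L 3 = m := by
  have h₁ : L 1 ≤ L 0 := hL (by decide)
  have h₂ : L 2 ≤ L 1 := hL (by decide)
  have h₃ : L 3 ≤ L 2 := hL (by decide)
  have p₁ := hpar 0 1
  have p₂ := hpar 1 2
  have p₃ := hpar 2 3
  omega

theorem gapVec_of_antitone {L : Fin 4 → ℕ} (hL : Antitone L) (hpar : ∀ i j, L i % 2 = L j % 2) :
    gapVec ((L 0 - L 1) / 2) ((L 1 - L 2) / 2) ((L 2 - L 3) / 2) (L 3) = L := by
  have h₁ : L 1 ≤ L 0 := hL (by decide)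
  have h₂ : L 2 ≤ L 1 := hL (by decide)
  have h₃ : L 3 ≤ L 2 := hL (by decide)
  have p₁ := hpar 0 1
  have p₂ := hpar 1 2
  have p₃ := hpar 2 3
  ext i
  fin_cases i <;> simp [gapVec] <;> omega

/-- The gaps parametrize the descending quadruples of numbers of equal parity. -/
theorem sum_antitone_eq_sum_gapVec {G : (Fin 4 → ℕ) → ℤ}
    (hG : ∀ L, G L ≠ 0 → ∀ i j, L i % 2 = L j % 2) (m : ℕ) :
    ∑ L ∈ Fintype.piFinset fun _ => range (m + 1) with Antitone L, G L =
      ∑ v ∈ range (m + 1), ∑ b₁ ∈ range (m + 1), ∑ b₂ ∈ range (m + 1), ∑ b₃ ∈ range (m + 1),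
        ∑ l ∈ range (m + 1), if v + 2 * b₁ + 2 * b₂ + 2 * b₃ + l = m then
          G (gapVec b₁ b₂ b₃ l) else 0 := by
  rw [← sum_filter_of_ne (p := fun L => ∀ i j, L i % 2 = L j % 2) fun L _ => hG L]
  trans ∑ x ∈ range (m + 1) ×ˢ range (m + 1) ×ˢ range (m + 1) ×ˢ range (m + 1) ×ˢ range (m + 1)
    with x.1 + 2 * x.2.1 + 2 * x.2.2.1 + 2 * x.2.2.2.1 + x.2.2.2.2 = m,
    G (gapVec x.2.1 x.2.2.1 x.2.2.2.1 x.2.2.2.2)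
  · refine sum_nbij' (fun L => (m - L 0, (L 0 - L 1) / 2, (L 1 - L 2) / 2, (L 2 - L 3) / 2, L 3))
      (fun x => gapVec x.2.1 x.2.2.1 x.2.2.2.1 x.2.2.2.2) ?_ ?_ ?_ ?_ ?_
    · intro L hL
      simp only [mem_filter, Fintype.mem_piFinset, mem_range] at hL
      have hsum := add_gaps_eq hL.1.2 hL.2 (Nat.lt_succ_iff.1 (hL.1.1 0))
      simp only [mem_filter, mem_product, mem_range]
      omega
    · rintro ⟨v, b₁, b₂, b₃, l⟩ hx
      simp only [mem_filter, mem_product, mem_range] at hx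
      simp only [mem_filter, Fintype.mem_piFinset, mem_range]
      exact ⟨⟨fun i => (gapVec_le _ _ _ _ i).trans_lt (by omega), antitone_gapVec _ _ _ _⟩,
        gapVec_mod_two _ _ _ _⟩
    · intro L hL
      simp only [mem_filter] at hL
      exact gapVec_of_antitone hL.1.2 hL.2
    · rintro ⟨v, b₁, b₂, b₃, l⟩ hx
      simp only [mem_filter, mem_product, mem_range] at hx
      simp only [gapVec, Matrix.cons_val, Prod.mk.injEq]
      exact ⟨by omega, by omega, by omega, by omega, trivial⟩
    · intro L hL
      simp only [mem_filter] at hL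
      rw [gapVec_of_antitone hL.1.2 hL.2]
  · rw [sum_filter]
    simp only [sum_product]

/-- The number of distinct rearrangements of a descending quadruple, given which consecutive
entries coincide. -/
def multinomial : Bool → Bool → Bool → ℕ
  | false, false, false => 24
  | true, false, false => 12
  | false, true, false => 12
  | false, false, true => 12
  | true, true, false => 4
  | false, true, true => 4
  | true, false, true => 6
  | true, true, true => 1

theorem card_rearrangements_gapVec_toNat : ∀ x y z : Bool,
    #(rearrangements (gapVec (!x).toNat (!y).toNat (!z).toNat 0)) = multinomial x y z := by
  decide +kernel

theorem card_rearrangements_gapVec (b₁ b₂ b₃ l : ℕ) :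
    #(rearrangements (gapVec b₁ b₂ b₃ l)) = multinomial (b₁ = 0) (b₂ = 0) (b₃ = 0) := by
  rw [← card_rearrangements_gapVec_toNat]
  refine card_rearrangements_congr fun i j => ?_
  by_cases h₁ : b₁ = 0 <;> by_cases h₂ : b₂ = 0 <;> by_cases h₃ : b₃ = 0 <;>
    simp only [h₁, h₂, h₃, decide_true, decide_false, Bool.not_true, Bool.not_false,
      Bool.toNat_true, Bool.toNat_false] <;>
    fin_cases i <;> fin_cases j <;> simp [gapVec] <;> omega

theorem weight_eq (b₁ b₂ b₃ l : ℕ) : weight b₁ b₂ b₃ l =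
    #(rearrangements (gapVec b₁ b₂ b₃ l)) * ∏ i, signWeight (gapVec b₁ b₂ b₃ l i) := by
  rw [card_rearrangements_gapVec, Fin.prod_univ_four]
  have h₁ : 2 * b₁ + 2 * b₂ + 2 * b₃ + l = 0 ↔ b₁ = 0 ∧ b₂ = 0 ∧ b₃ = 0 ∧ l = 0 := by omega
  have h₂ : 2 * b₂ + 2 * b₃ + l = 0 ↔ b₂ = 0 ∧ b₃ = 0 ∧ l = 0 := by omega
  have h₃ : 2 * b₃ + l = 0 ↔ b₃ = 0 ∧ l = 0 := by omega
  simp only [gapVec, Matrix.cons_val, signWeight, h₁, h₂, h₃, weight, signedSum, onStratum,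
    allowed, strata, List.map_cons, List.map_nil, List.sum_cons, List.sum_nil]
  by_cases h₁ : b₁ = 0 <;> by_cases h₂ : b₂ = 0 <;> by_cases h₃ : b₃ = 0 <;>
    by_cases h₄ : l = 0 <;> simp [h₁, h₂, h₃, h₄, multinomial]

theorem card_cubes_eq_sum_rearrangements (m : ℕ) :
    #(cubes m) = ∑ L ∈ Fintype.piFinset fun _ => range (m + 1) with Antitone L,
      #(rearrangements L) * ((∏ i, signWeight (L i)) * #(layer m fun i => (L i : ℤ))) := by
  rw [card_cubes_eq_sum_card_layer, sum_piFinset_Icc_of_abs (card_layer_abs m),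
    sum_piFinset_of_perm]
  · simp only [smul_eq_mul]
  · intro L σ
    exact congrArg₂ (· • ·) (Equiv.prod_comp σ fun i => signWeight (L i))
      (card_layer_perm m (fun i => (L i : ℤ)) σ)

theorem card_cubes_eq_sum_card_fibre (m : ℕ) : (#(cubes m) : ℤ) =
    ∑ v ∈ range (m + 1), ∑ b₁ ∈ range (m + 1), ∑ b₂ ∈ range (m + 1),
      ∑ b₃ ∈ range (m + 1), ∑ l ∈ range (m + 1), if v + 2 * b₁ + 2 * b₂ + 2 * b₃ + l = m then
        weight b₁ b₂ b₃ l * #(fibre v b₁ b₂ b₃ l) else 0 := by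
  rw [card_cubes_eq_sum_rearrangements]
  push_cast
  rw [sum_antitone_eq_sum_gapVec]
  · refine sum_congr rfl fun v _ => sum_congr rfl fun b₁ _ => sum_congr rfl fun b₂ _ =>
      sum_congr rfl fun b₃ _ => sum_congr rfl fun l _ => ?_
    split_ifs with h
    · rw [card_layer h.symm, weight_eq]
      push_cast
      ring
    · rfl
  · intro L hL i j
    have hcard : #(layer m fun i => (L i : ℤ)) ≠ 0 := fun h => hL (by
      simp only [h, Nat.cast_zero, mul_zero])
    exact_mod_cast layer_parity (card_pos.1 (Nat.pos_of_ne_zero hcard)) i j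

end Gaps

section Series

theorem fibreSeries_eq : fibreSeries = C 96 * mk fun m => (#(cubes m) : ℤ) := by
  ext m
  rw [coeff_C_mul, coeff_mk, coeff_fibreSeries_eq_sum_card, card_cubes_eq_sum_card_fibre]

theorem mul_mk_card_cubes : (X + 1) ^ 4 * (X ^ 4 + X ^ 3 + X ^ 2 + X + 1) * (1 - X) ^ 9 *
    (X ^ 2 + X + 1) * (PowerSeries.mk fun m => (#(cubes m) : ℤ)) =
      numCoeffs.foldr (fun a F => C a + X * F) 0 := by
  have h96 : (C 96 : PowerSeries ℤ) ≠ 0 := by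
    rw [Ne, map_eq_zero_iff _ C_injective]
    norm_num
  refine mul_left_cancel₀ h96 ?_
  rw [← mul_fibreSeries, fibreSeries_eq]
  ring

/-- Reversing a diagonal does not change its sum, so the normalisation `ε 0 = false` is harmless. -/
theorem magic_iff_sum_eq {n : ℕ} {a : (Fin 4 → Fin 3) → ℕ} : Magic n a ↔
    (∀ j : Fin 4, ∀ g : Fin 4 → Fin 3, ∑ t : Fin 3, a (Function.update g j t) = n) ∧
    (∀ ε : Fin 4 → Bool, ε 0 = false →
      ∑ t : Fin 3, a (fun j => if ε j then t.rev else t) = n) := by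
  simp only [Magic, LineSum, DiagSum, ← Nat.cast_sum, Nat.cast_inj]
  refine and_congr_right fun _ => ⟨fun h ε _ => h ε, fun h ε => ?_⟩
  cases hε : ε 0
  · exact h ε hε
  · rw [← h (fun j => !ε j) (by simp [hε]), ← Equiv.sum_comp Fin.revPerm]
    refine sum_congr rfl fun t _ => congrArg a (funext fun i => ?_)
    unfold turn
    by_cases hi : ε i <;> simp [hi]

theorem magicCube3333_mul_three (m : ℕ) : magicCube3333 (3 * m) = #(cubes m) :=
  Nat.subtype_card _ fun a => by rw [mem_cubes, magic_iff_sum_eq]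

theorem Magic.three_dvd {n : ℕ} {a : (Fin 4 → Fin 3) → ℕ} (h : Magic n a) : 3 ∣ n := by
  have hc := LineSum.apply_one_eq_zero (A := fun g => 3 * (a g : ℤ) - n) (by decide)
    (fun j g => by simp [sum_sub_distrib, ← mul_sum, h.1 j g])
    (fun T => by simp [sum_sub_distrib, ← mul_sum, h.2 T])
  exact ⟨a fun _ => 1, by have := sub_eq_zero.1 hc; omega⟩

theorem magicCube3333_of_not_dvd {n : ℕ} (h : ¬3 ∣ n) : magicCube3333 n = 0 :=
  Nat.card_eq_zero.2 <| .inl ⟨fun a => h (magic_iff_sum_eq.2 a.2).three_dvd⟩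

theorem expand_mk_card_cubes : expand 3 three_ne_zero (mk fun m => (#(cubes m) : ℤ)) =
    mk fun n => (magicCube3333 n : ℤ) := by
  ext n
  rw [coeff_mk]
  by_cases h : 3 ∣ n
  · obtain ⟨m, rfl⟩ := h
    rw [coeff_expand_mul, coeff_mk, magicCube3333_mul_three]
  · rw [coeff_expand_of_not_dvd _ _ _ h, magicCube3333_of_not_dvd h, Nat.cast_zero]

end Series

end MagicCube

theorem magicCube3333_generating_function :
    ((PowerSeries.X ^ 3 + 1) ^ 4 *
        (PowerSeries.X ^ 12 + PowerSeries.X ^ 9 + PowerSeries.X ^ 6 + PowerSeries.X ^ 3 + 1) *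
        (1 - PowerSeries.X ^ 3) ^ 9 * (PowerSeries.X ^ 6 + PowerSeries.X ^ 3 + 1) :
        PowerSeries ℤ) *
      PowerSeries.mk (fun n => (magicCube3333 n : ℤ)) =
    PowerSeries.X ^ 54 + 150 * PowerSeries.X ^ 51 + 5837 * PowerSeries.X ^ 48 +
      63127 * PowerSeries.X ^ 45 + 331124 * PowerSeries.X ^ 42 +
      1056374 * PowerSeries.X ^ 39 + 2326380 * PowerSeries.X ^ 36 +
      3842273 * PowerSeries.X ^ 33 + 5055138 * PowerSeries.X ^ 30 +
      5512456 * PowerSeries.X ^ 27 + 5055138 * PowerSeries.X ^ 24 +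
      3842273 * PowerSeries.X ^ 21 + 2326380 * PowerSeries.X ^ 18 +
      1056374 * PowerSeries.X ^ 15 + 331124 * PowerSeries.X ^ 12 +
      63127 * PowerSeries.X ^ 9 + 5837 * PowerSeries.X ^ 6 + 150 * PowerSeries.X ^ 3 + 1 := by
  have h := congrArg (expand 3 three_ne_zero) MagicCube.mul_mk_card_cubes
  simp only [MagicCube.numCoeffs, List.foldr, map_mul, map_add, map_sub, map_pow, map_one, expand_X,
    MagicCube.expand_mk_card_cubes, expand_C, map_zero] at h
  simp only [map_ofNat] at h
  linear_combination h
end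

section
/- Let m(s) denote the number of 4×4 magic squares with magic sum s. Then the generating function ∑_{s≥0} m(s) t^s, as a formal power series with integer coefficients, satisfies (1−t)⁴(1−t²)⁴ · ∑_{s≥0} m(s) t^s = t⁸+4t⁷+18t⁶+36t⁵+50t⁴+36t³+18t²+4t+1 in ℤ⟦t⟧. -/
/-!
The magic squares that vanish on a set `Z` of cells form a face of the monoid of magic squares. Let
`v` be a magic square of sum `d` in this face such that `v ≤ x` for each `x` in the face that is
positive on the support of `v`. Adding `v` maps the squares of sum `s` in the face bijectively to
the squares `x ≥ v` of sum `s + d` in the face. Hence the generating function of the face, times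
`1 - X ^ d`, counts the squares in the face that vanish somewhere on the support of `v`, and by
inclusion-exclusion this is a combination of generating functions of smaller faces. Multiplying by
the eight factors of the denominator one after another, and always peeling off irreducible magic
squares in this way, leaves only the face consisting of the zero square.
-/

open PowerSeries Finset

/-- The number of 4×4 magic squares with magic sum `s`: 4×4 arrays of nonnegative
integers all of whose row sums, column sums and two main diagonal sums equal `s`. -/
noncomputable def magic4 (s : ℕ) : ℕ :=
  Nat.card {M : Fin 4 → Fin 4 → ℕ //
    (∀ i, ∑ j, M i j = s) ∧ (∀ j, ∑ i, M i j = s) ∧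
    (∑ i, M i i = s) ∧ (∑ i, M i (Fin.rev i) = s)}

namespace MagicLabeling

/-! ### Generating functions of magic labelings -/

section Series

variable {ι : Type*} {L : Finset (Finset ι)} {d s : ℕ} {v x : ι → ℕ} {S T : Set (ι → ℕ)}

/-- The magic labelings of index `s` of a hypergraph, in the sense of Stanley: labelings of the
vertices with sum `s` on each edge `l ∈ L`. -/
def magicLabelings (L : Finset (Finset ι)) (s : ℕ) : Set (ι → ℕ) :=
  {x | ∀ l ∈ L, ∑ i ∈ l, x i = s}

/-- The generating function, by index, of the magic labelings that lie in `S`. It is meaningful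
if there are finitely many of each index, as `Set.ncard` is `0` on infinite sets. -/
noncomputable def series (L : Finset (Finset ι)) (S : Set (ι → ℕ)) : ℤ⟦X⟧ :=
  PowerSeries.mk fun s => ((magicLabelings L s ∩ S).ncard : ℤ)

lemma add_mem_magicLabelings_iff (hv : v ∈ magicLabelings L d) :
    v + x ∈ magicLabelings L (d + s) ↔ x ∈ magicLabelings L s := by
  refine forall₂_congr fun l hl => ?_
  simp only [Pi.add_apply, sum_add_distrib, hv l hl, add_right_inj]

lemma le_of_mem_magicLabelings (hne : L.Nonempty) (hv : v ∈ magicLabelings L d)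
    (hx : x ∈ magicLabelings L s) (hvx : v ≤ x) : d ≤ s := by
  obtain ⟨l, hl⟩ := hne
  rw [← hv l hl, ← hx l hl]
  exact sum_le_sum fun i _ => hvx i

lemma finite_magicLabelings [Finite ι] (hcover : ∀ i, ∃ l ∈ L, i ∈ l) (s : ℕ) :
    (magicLabelings L s).Finite := by
  refine (Set.Finite.pi' fun _ => Set.finite_Iic s).subset fun x hx i => ?_
  obtain ⟨l, hl, hi⟩ := hcover i
  exact (single_le_sum_of_canonicallyOrdered hi).trans_eq (hx l hl)

lemma series_congr (h : ∀ s, ∀ x ∈ magicLabelings L s, x ∈ S ↔ x ∈ T) :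
    series L S = series L T := by
  have (s : ℕ) : magicLabelings L s ∩ S = magicLabelings L s ∩ T :=
    Set.ext fun x => and_congr_right (h s x)
  simp only [series, this]

lemma series_empty : series L ∅ = 0 := by
  ext s
  simp [series]

lemma series_inter_add_diff [Finite ι] (hcover : ∀ i, ∃ l ∈ L, i ∈ l) (S T : Set (ι → ℕ)) :
    series L (S ∩ T) + series L (S \ T) = series L S := by
  ext s
  simp only [series, map_add, coeff_mk, ← Set.inter_assoc, ← Set.inter_sdiff_assoc]
  exact_mod_cast Set.ncard_inter_add_ncard_sdiff_eq_ncard _ T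
    ((finite_magicLabelings hcover s).inter_of_left S)

lemma X_pow_mul_series (hne : L.Nonempty) (hv : v ∈ magicLabelings L d)
    (hS : ∀ x, v + x ∈ S ↔ x ∈ S) :
    X ^ d * series L S = series L (S ∩ Set.Ici v) := by
  ext s
  simp only [series, coeff_X_pow_mul', coeff_mk]
  split_ifs with hds
  · obtain ⟨k, rfl⟩ := Nat.exists_eq_add_of_le hds
    rw [Nat.add_sub_cancel_left, ← Set.ncard_image_of_injective _ (add_right_injective v)]
    congr 2
    ext y
    constructor
    · rintro ⟨x, ⟨hx, hxS⟩, rfl⟩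
      exact ⟨(add_mem_magicLabelings_iff hv).2 hx, (hS x).2 hxS, Set.mem_Ici.2 le_self_add⟩
    · rintro ⟨hy, hyS, hvy⟩
      obtain ⟨x, rfl⟩ := exists_add_of_le (Set.mem_Ici.1 hvy)
      exact ⟨x, ⟨(add_mem_magicLabelings_iff hv).1 hy, (hS x).1 hyS⟩, rfl⟩
  · have : magicLabelings L s ∩ (S ∩ Set.Ici v) = ∅ :=
      Set.eq_empty_of_forall_notMem fun x hx =>
        hds (le_of_mem_magicLabelings hne hv hx.1 hx.2.2)
    simp [this]

lemma one_sub_X_pow_mul_series [Finite ι] (hcover : ∀ i, ∃ l ∈ L, i ∈ l) (hne : L.Nonempty)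
    (hv : v ∈ magicLabelings L d) (hS : ∀ x, v + x ∈ S ↔ x ∈ S) :
    (1 - X ^ d) * series L S = series L (S \ Set.Ici v) := by
  rw [sub_mul, one_mul, X_pow_mul_series hne hv hS, ← series_inter_add_diff hcover S (Set.Ici v),
    add_sub_cancel_left]

end Series

/-! ### Faces -/

section Face

variable {n : ℕ} {L : Finset (Finset (Fin n))} {Z Y : ℕ} {x : Fin n → ℕ} {c : Fin n}
  {cs : List (Fin n)}

/-- The labelings that vanish on `Z`, where a set of vertices is encoded by the natural number
whose binary digits are its indicator function. -/
def face (n Z : ℕ) : Set (Fin n → ℕ) :=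
  {x | ∀ i : Fin n, Z.testBit i → x i = 0}

/-- The labelings that vanish on `Z` and at some vertex of `cs`. -/
def hitting (Z : ℕ) (cs : List (Fin n)) : Set (Fin n → ℕ) :=
  {x ∈ face n Z | ∃ c ∈ cs, x c = 0}

/-- The encoding of the set of vertices listed in `A`. -/
def mask (A : List (Fin n)) : ℕ :=
  A.foldr (fun i Y => 2 ^ (i : ℕ) ||| Y) 0

lemma mem_face_zero : x ∈ face n 0 := fun i hi => by simp at hi

lemma mem_face_or : x ∈ face n (Z ||| Y) ↔ x ∈ face n Z ∧ x ∈ face n Y := by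
  simp only [face, Set.mem_ofPred_eq, Nat.testBit_or, Bool.or_eq_true, or_imp, forall_and]

lemma mem_face_two_pow : x ∈ face n (2 ^ (c : ℕ)) ↔ x c = 0 := by
  simp [face, Nat.testBit_two_pow, Fin.val_inj]

lemma mem_face_mask {A : List (Fin n)} : x ∈ face n (mask A) ↔ (A.map x).sum = 0 := by
  induction A with
  | nil => exact iff_of_true mem_face_zero rfl
  | cons a A ih =>
    rw [List.map_cons, List.sum_cons, Nat.add_eq_zero_iff, ← ih, ← mem_face_two_pow,
      ← mem_face_or]
    rfl

lemma hitting_cons_of_testBit (hc : Z.testBit c) : hitting Z (c :: cs) = face n Z :=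
  Set.ext fun _ => and_iff_left_of_imp fun hx => ⟨c, List.mem_cons_self, hx c hc⟩

lemma series_hitting_cons (hcover : ∀ i, ∃ l ∈ L, i ∈ l) (Z : ℕ) (c : Fin n) (cs : List (Fin n)) :
    series L (hitting Z (c :: cs)) = series L (face n (Z ||| 2 ^ (c : ℕ))) +
      series L (hitting Z cs) - series L (hitting (Z ||| 2 ^ (c : ℕ)) cs) := by
  let T : Set (Fin n → ℕ) := {x | x c = 0}
  have hface : hitting Z (c :: cs) ∩ T = face n (Z ||| 2 ^ (c : ℕ)) := by
    ext x
    simp only [hitting, T, List.mem_cons, exists_eq_or_imp, Set.mem_inter_iff, Set.mem_ofPred_eq,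
      mem_face_or, mem_face_two_pow]
    tauto
  have hhit : hitting Z cs ∩ T = hitting (Z ||| 2 ^ (c : ℕ)) cs := by
    ext x
    simp only [hitting, T, Set.mem_inter_iff, Set.mem_ofPred_eq, mem_face_or, mem_face_two_pow]
    tauto
  have hdiff : hitting Z (c :: cs) \ T = hitting Z cs \ T := by
    ext x
    simp only [hitting, T, List.mem_cons, exists_eq_or_imp, Set.mem_sdiff, Set.mem_ofPred_eq]
    tauto
  rw [← series_inter_add_diff hcover (hitting Z (c :: cs)) T,
    ← series_inter_add_diff hcover (hitting Z cs) T, hface, hhit, hdiff]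
  ring

lemma series_face_eq_one (hne : L.Nonempty) (hZ : ∀ i : Fin n, Z.testBit i) :
    series L (face n Z) = 1 := by
  have hface : face n Z = {0} := by
    ext x
    simp [face, hZ, funext_iff]
  obtain ⟨l, hl⟩ := hne
  ext s
  rw [series, coeff_mk, coeff_one, hface]
  split_ifs with hs
  · have : (0 : Fin n → ℕ) ∈ magicLabelings L s := fun l _ => by simp [hs]
    rw [Set.inter_eq_right.2 (Set.singleton_subset_iff.2 this), Set.ncard_singleton, Nat.cast_one]
  · have : (0 : Fin n → ℕ) ∉ magicLabelings L s := fun h => hs (by simpa using (h l hl).symm)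
    rw [Set.inter_singleton_eq_empty.2 this, Set.ncard_empty, Nat.cast_zero]

end Face

/-! ### Peeling off labelings -/

section Peel

variable {n : ℕ} {L : Finset (Finset (Fin n))} {Z d : ℕ}
  {R : List (List (Fin n) × List (Fin n))}

/-- Every magic labeling has the same sum over the list `r.1` as over the list `r.2`. -/
def IsRelation (L : Finset (Finset (Fin n))) (r : List (Fin n) × List (Fin n)) : Prop :=
  ∀ s, ∀ x ∈ magicLabelings L s, (r.1.map x).sum = (r.2.map x).sum

/-- The vertices in `Z`, and those at which the relations `R`, each used once, force a labeling
that vanishes on `Z` to vanish. -/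
def saturate (R : List (List (Fin n) × List (Fin n))) (Z : ℕ) : ℕ :=
  -- The kernel evaluates `List.rec` several times faster than a compiled structural recursion.
  List.rec Z (fun r _ Y => if Y ||| mask r.1 = Y then Y ||| mask r.2 else Y) R

lemma mem_face_saturate (hR : ∀ r ∈ R, IsRelation L r) {s : ℕ} {x : Fin n → ℕ}
    (hx : x ∈ magicLabelings L s) : x ∈ face n (saturate R Z) ↔ x ∈ face n Z := by
  induction R with
  | nil => rfl
  | cons r R ih =>
    obtain ⟨hr, hR⟩ := List.forall_mem_cons.1 hR
    rw [← ih hR]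
    change x ∈ face n (if saturate R Z ||| mask r.1 = saturate R Z
      then saturate R Z ||| mask r.2 else saturate R Z) ↔ _
    split_ifs with h
    · rw [mem_face_or, and_iff_left_iff_imp, mem_face_mask, ← hr s x hx, ← mem_face_mask]
      intro hxZ
      rw [← h, mem_face_or] at hxZ
      exact hxZ.2
    · rfl

lemma series_hitting_saturate (hR : ∀ r ∈ R, IsRelation L r) (cs : List (Fin n)) :
    series L (hitting (saturate R Z) cs) = series L (hitting Z cs) :=
  series_congr fun _ _ hx => and_congr_left fun _ => mem_face_saturate hR hx

lemma series_face_saturate (hR : ∀ r ∈ R, IsRelation L r) :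
    series L (face n (saturate R Z)) = series L (face n Z) :=
  series_congr fun _ _ hx => mem_face_saturate hR hx

/-- A sufficient condition for the labeling `g.count` to vanish on `Z` and to be a lower bound of
each magic labeling that vanishes on `Z` and is positive on `g`. If `c` occurs several times in
`g`, then there must be a relation with `c` as the only term outside `Z` on the left, and with
sufficiently many terms from `g` on the right. -/
def Peelable (R : List (List (Fin n) × List (Fin n))) (Z : ℕ) (g : List (Fin n)) : Prop :=
  ∀ c ∈ g, ¬ Z.testBit c ∧ (g.count c ≤ 1 ∨
    ∃ r ∈ R, Z ||| mask (r.1.erase c) = Z ∧ g.count c ≤ r.2.countP (· ∈ g))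

instance (R : List (List (Fin n) × List (Fin n))) (Z : ℕ) (g : List (Fin n)) :
    Decidable (Peelable R Z g) :=
  inferInstanceAs (Decidable (∀ c ∈ g, _))

lemma countP_le_sum_map {ι : Type*} {p : ι → Prop} [DecidablePred p] {x : ι → ℕ}
    (hx : ∀ i, p i → x i ≠ 0) (B : List ι) : B.countP (p ·) ≤ (B.map x).sum := by
  induction B with
  | nil => rfl
  | cons b B ih =>
    rw [List.countP_cons, List.map_cons, List.sum_cons]
    have := hx b
    split_ifs <;> grind

lemma sum_map_le_of_mem_face_mask_erase {x : Fin n → ℕ} {A : List (Fin n)} {c : Fin n}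
    (hx : x ∈ face n (mask (A.erase c))) : (A.map x).sum ≤ x c := by
  rw [mem_face_mask] at hx
  by_cases hc : c ∈ A
  · rw [← List.sum_map_erase x hc, hx, add_zero]
  · rw [List.erase_of_not_mem hc] at hx
    exact hx.trans_le (Nat.zero_le _)

lemma Peelable.count_le {g : List (Fin n)} (hR : ∀ r ∈ R, IsRelation L r) (hg : Peelable R Z g)
    {s : ℕ} {x : Fin n → ℕ} (hx : x ∈ magicLabelings L s) (hxZ : x ∈ face n Z)
    (hpos : ∀ c ∈ g, x c ≠ 0) (c : Fin n) : g.count c ≤ x c := by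
  by_cases hc : c ∈ g
  swap
  · simp [List.count_eq_zero_of_not_mem hc]
  obtain h1 | ⟨r, hr, hrZ, hcount⟩ := (hg c hc).2
  · exact h1.trans (Nat.one_le_iff_ne_zero.2 (hpos c hc))
  · rw [← hrZ, mem_face_or] at hxZ
    calc g.count c ≤ r.2.countP (· ∈ g) := hcount
      _ ≤ (r.2.map x).sum := countP_le_sum_map hpos _
      _ = (r.1.map x).sum := (hR r hr s x hx).symm
      _ ≤ x c := sum_map_le_of_mem_face_mask_erase hxZ.2

lemma Peelable.one_sub_X_pow_mul_series_face {g : List (Fin n)} (hcover : ∀ i, ∃ l ∈ L, i ∈ l)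
    (hne : L.Nonempty) (hR : ∀ r ∈ R, IsRelation L r) (hg : Peelable R Z g)
    (hgd : (fun i => g.count i) ∈ magicLabelings L d) :
    (1 - X ^ d) * series L (face n Z) = series L (hitting Z g) := by
  have hgZ (x : Fin n → ℕ) : (fun i => g.count i) + x ∈ face n Z ↔ x ∈ face n Z := by
    refine forall₂_congr fun i hi => ?_
    have : i ∉ g := fun hig => (hg i hig).1 hi
    simp [List.count_eq_zero_of_not_mem this]
  rw [one_sub_X_pow_mul_series hcover hne hgd hgZ]
  refine series_congr fun s x hx => and_congr_right fun hxZ => ⟨fun h => ?_, ?_⟩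
  · by_contra! hpos
    exact h fun c => hg.count_le hR hx hxZ hpos c
  · rintro ⟨c, hc, hxc⟩ h
    exact (List.count_pos_iff.2 hc).ne' (Nat.le_zero.1 (hxc ▸ h c))

end Peel

/-! ### Combinations of faces -/

section Combination

variable {n : ℕ} {L : Finset (Finset (Fin n))}
  {R : List (List (Fin n) × List (Fin n))} {G : List (ℕ × List (Fin n))}

/-- The polynomial with the given coefficients, starting with the constant one. -/
noncomputable def ofCoeffs (q : List ℤ) : ℤ⟦X⟧ :=
  q.foldr (fun a f => C a + X * f) 0

/-- Coefficientwise addition, with the shorter list padded by zeros. -/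
def addCoeffs : List ℤ → List ℤ → List ℤ
  | [], q => q
  | p, [] => p
  | a :: p, b :: q => (a + b) :: addCoeffs p q

lemma ofCoeffs_cons (a : ℤ) (q : List ℤ) : ofCoeffs (a :: q) = C a + X * ofCoeffs q := rfl

lemma ofCoeffs_addCoeffs (p q : List ℤ) :
    ofCoeffs (addCoeffs p q) = ofCoeffs p + ofCoeffs q := by
  induction p, q using addCoeffs.induct with
  | case1 q => simp [addCoeffs, ofCoeffs]
  | case2 p => simp [addCoeffs, ofCoeffs]
  | case3 a p b q ih =>
    simp only [addCoeffs, ofCoeffs_cons, ih, map_add]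
    ring

lemma ofCoeffs_map_neg (q : List ℤ) : ofCoeffs (q.map Neg.neg) = -ofCoeffs q := by
  induction q with
  | nil => simp [ofCoeffs]
  | cons a q ih =>
    rw [List.map_cons, ofCoeffs_cons, ofCoeffs_cons, ih, map_neg]
    ring

lemma ofCoeffs_replicate_zero_append (d : ℕ) (q : List ℤ) :
    ofCoeffs (List.replicate d 0 ++ q) = X ^ d * ofCoeffs q := by
  induction d with
  | zero => simp
  | succ d ih =>
    rw [List.replicate_succ, List.cons_append, ofCoeffs_cons, ih, map_zero]
    ring

/-- A linear combination of generating functions of faces: a list of encoded sets of vertices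
with the coefficients of polynomials. -/
abbrev Combination := List (ℕ × List ℤ)

/-- The power series that a combination stands for. -/
noncomputable def value (L : Finset (Finset (Fin n))) (W : Combination) : ℤ⟦X⟧ :=
  (W.map fun t => ofCoeffs t.2 * series L (face n t.1)).sum

lemma value_cons (t : ℕ × List ℤ) (W : Combination) :
    value L (t :: W) = ofCoeffs t.2 * series L (face n t.1) + value L W :=
  List.sum_cons

/-- Adds a term to a combination, collecting like terms. -/
def addTerm (Z : ℕ) (q : List ℤ) (W : Combination) : Combination :=
  List.rec [(Z, q)]
    (fun t W V => if t.1 = Z then (t.1, addCoeffs t.2 q) :: W else t :: V) W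

lemma value_addTerm (Z : ℕ) (q : List ℤ) (W : Combination) :
    value L (addTerm Z q W) = ofCoeffs q * series L (face n Z) + value L W := by
  induction W with
  | nil => rfl
  | cons t W ih =>
    change value L (if t.1 = Z then (t.1, addCoeffs t.2 q) :: W else t :: addTerm Z q W) = _
    split_ifs with h
    · simp only [value_cons, ofCoeffs_addCoeffs, ← h]
      ring
    · simp only [value_cons, ih]
      ring

/-- `f m`, in a form that makes the kernel evaluate `m` to a numeral before it unfolds `f`. -/
def applyForced {α : Type*} (f : ℕ → α) : ℕ → α
  | 0 => f 0
  | m + 1 => f (m + 1)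

lemma applyForced_eq {α : Type*} (f : ℕ → α) (m : ℕ) : applyForced f m = f m := by
  cases m <;> rfl

/-- Adds `q` times the generating function of `hitting Z cs` to a combination. -/
def addHitting (R : List (List (Fin n) × List (Fin n))) :
    List (Fin n) → ℕ → List ℤ → Combination → Combination
  | [], _, _, W => W
  | c :: cs, Z, q, W =>
    if Z.testBit c then addTerm Z q W
    else applyForced (fun V =>
      let Y := saturate R (saturate R V)
      addTerm Y q (addHitting R cs Z q (addHitting R cs Y (q.map Neg.neg) W)))
      (Z ||| 2 ^ (c : ℕ))

lemma value_addHitting (hcover : ∀ i, ∃ l ∈ L, i ∈ l) (hR : ∀ r ∈ R, IsRelation L r)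
    (cs : List (Fin n)) (Z : ℕ) (q : List ℤ) (W : Combination) :
    value L (addHitting R cs Z q W) = ofCoeffs q * series L (hitting Z cs) + value L W := by
  induction cs generalizing Z q W with
  | nil => simp [addHitting, hitting, series_empty]
  | cons c cs ih =>
    rw [addHitting]
    split_ifs with hc
    · rw [value_addTerm, hitting_cons_of_testBit hc]
    · simp only [applyForced_eq, value_addTerm, ih, ofCoeffs_map_neg, series_face_saturate hR,
        series_hitting_saturate hR, series_hitting_cons hcover]
      ring

/-- Adds `1 - X ^ d` times a term to a combination. If possible, this is done by peeling off some
`g` from `G` whose index is `d`, or `d / 2` where `1 - X ^ d` has the factor `1 - X ^ (d / 2)`. -/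
def addPeeled (R : List (List (Fin n) × List (Fin n))) (G : List (ℕ × List (Fin n))) (d : ℕ)
    (t : ℕ × List ℤ) (W : Combination) : Combination :=
  match G.find? fun g => (g.1 = d ∨ 2 * g.1 = d) ∧ Peelable R t.1 g.2 with
  | some g =>
    addHitting R g.2 t.1
      (if g.1 = d then t.2 else addCoeffs t.2 (List.replicate g.1 0 ++ t.2)) W
  | none => addTerm t.1 (addCoeffs t.2 (List.replicate d 0 ++ t.2.map Neg.neg)) W

lemma value_addPeeled (hcover : ∀ i, ∃ l ∈ L, i ∈ l) (hne : L.Nonempty)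
    (hR : ∀ r ∈ R, IsRelation L r) (hG : ∀ g ∈ G, (fun i => g.2.count i) ∈ magicLabelings L g.1)
    (d : ℕ) (t : ℕ × List ℤ) (W : Combination) :
    value L (addPeeled R G d t W) =
      (1 - X ^ d) * (ofCoeffs t.2 * series L (face n t.1)) + value L W := by
  rw [addPeeled]
  split
  case h_1 g hg =>
    obtain ⟨hd, hpeel⟩ : (g.1 = d ∨ 2 * g.1 = d) ∧ Peelable R t.1 g.2 := by
      simpa using List.find?_some hg
    have hseries := hpeel.one_sub_X_pow_mul_series_face hcover hne hR
      (hG g (List.mem_of_find?_eq_some hg))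
    rw [value_addHitting hcover hR, ← hseries]
    split_ifs with hgd
    · rw [hgd]
      ring
    · obtain rfl := hd.resolve_left hgd
      rw [ofCoeffs_addCoeffs, ofCoeffs_replicate_zero_append]
      ring
  case h_2 =>
    rw [value_addTerm, ofCoeffs_addCoeffs, ofCoeffs_replicate_zero_append, ofCoeffs_map_neg]
    ring

/-- The generating function of all magic labelings times `∏ d ∈ D, (1 - X ^ d)`, as a
combination. -/
def peel (R : List (List (Fin n) × List (Fin n))) (G : List (ℕ × List (Fin n))) (D : List ℕ) :
    Combination :=
  D.foldl (fun W d => W.foldr (addPeeled R G d) []) [(0, [1])]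

lemma value_foldr_addPeeled (hcover : ∀ i, ∃ l ∈ L, i ∈ l) (hne : L.Nonempty)
    (hR : ∀ r ∈ R, IsRelation L r) (hG : ∀ g ∈ G, (fun i => g.2.count i) ∈ magicLabelings L g.1)
    (d : ℕ) (W : Combination) :
    value L (W.foldr (addPeeled R G d) []) = (1 - X ^ d) * value L W := by
  induction W with
  | nil => simp [value]
  | cons t W ih => rw [List.foldr_cons, value_addPeeled hcover hne hR hG, ih, value_cons, mul_add]

theorem value_peel (hcover : ∀ i, ∃ l ∈ L, i ∈ l) (hne : L.Nonempty)
    (hR : ∀ r ∈ R, IsRelation L r) (hG : ∀ g ∈ G, (fun i => g.2.count i) ∈ magicLabelings L g.1)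
    (D : List ℕ) :
    value L (peel R G D) = (D.map (1 - X ^ ·)).prod * series L Set.univ := by
  have hfold (W : Combination) : value L (D.foldl (fun W d => W.foldr (addPeeled R G d) []) W) =
      (D.map (1 - X ^ ·)).prod * value L W := by
    induction D generalizing W with
    | nil => simp
    | cons d D ih =>
      rw [List.foldl_cons, ih, value_foldr_addPeeled hcover hne hR hG, List.map_cons,
        List.prod_cons]
      ring
  have hface : series L (face n 0) = series L Set.univ :=
    series_congr fun _ _ _ => iff_of_true mem_face_zero trivial
  rw [peel, hfold, value]
  simp [ofCoeffs, hface]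

end Combination

/-! ### Magic squares of order four -/

/-- The rows, columns and main diagonals of a 4×4 square with cells numbered row by row. -/
def lines : Finset (Finset (Fin 16)) :=
  {{0, 1, 2, 3}, {4, 5, 6, 7}, {8, 9, 10, 11}, {12, 13, 14, 15},
    {0, 4, 8, 12}, {1, 5, 9, 13}, {2, 6, 10, 14}, {3, 7, 11, 15},
    {0, 5, 10, 15}, {3, 6, 9, 12}}

/-- Pairs of lists of cells with the same sum in each magic square. -/
def balancedPairs : List (List (Fin 16) × List (Fin 16)) :=
  [([0, 15], [6, 9]), ([3, 12], [5, 10]), ([0, 3], [13, 14]), ([12, 15], [1, 2]),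
    ([0, 12], [7, 11]), ([3, 15], [4, 8]), ([4, 7], [9, 10]), ([8, 11], [5, 6]),
    ([1, 13], [6, 10]), ([2, 14], [5, 9]),
    ([0, 1, 4, 5], [10, 11, 14, 15]), ([2, 3, 6, 7], [8, 9, 12, 13]),
    ([0, 2, 8, 10], [5, 7, 13, 15]), ([1, 3, 9, 11], [4, 6, 12, 14])]

/-- The twenty irreducible magic squares, as lists of cells with multiplicity, with their sums. -/
def irreducibles : List (ℕ × List (Fin 16)) :=
  [(1, [1, 7, 10, 12]), (1, [2, 5, 11, 12]), (1, [3, 4, 10, 13]), (1, [3, 5, 8, 14]),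
    (1, [1, 6, 8, 15]), (1, [2, 4, 9, 15]), (1, [0, 6, 11, 13]), (1, [0, 7, 9, 14]),
    (2, [2, 3, 5, 7, 8, 10, 12, 13]), (2, [1, 3, 4, 5, 10, 11, 12, 14]),
    (2, [4, 6, 10, 11, 12, 15, 1, 1]), (2, [5, 7, 8, 9, 12, 15, 2, 2]),
    (2, [2, 3, 5, 6, 13, 15, 8, 8]), (2, [1, 3, 9, 10, 14, 15, 4, 4]),
    (2, [0, 1, 5, 6, 12, 14, 11, 11]), (2, [0, 2, 9, 10, 12, 13, 7, 7]),
    (2, [0, 3, 6, 7, 8, 10, 13, 13]), (2, [0, 3, 4, 5, 9, 11, 14, 14]),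
    (2, [0, 2, 6, 7, 8, 9, 13, 15]), (2, [0, 1, 4, 6, 9, 11, 14, 15])]

lemma mem_magicLabelings_lines {s : ℕ} {x : Fin 16 → ℕ} :
    x ∈ magicLabelings lines s ↔
      (x 0 + x 1 + x 2 + x 3 = s ∧ x 4 + x 5 + x 6 + x 7 = s ∧
        x 8 + x 9 + x 10 + x 11 = s ∧ x 12 + x 13 + x 14 + x 15 = s) ∧
      (x 0 + x 4 + x 8 + x 12 = s ∧ x 1 + x 5 + x 9 + x 13 = s ∧
        x 2 + x 6 + x 10 + x 14 = s ∧ x 3 + x 7 + x 11 + x 15 = s) ∧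
      x 0 + x 5 + x 10 + x 15 = s ∧ x 3 + x 6 + x 9 + x 12 = s := by
  simp [magicLabelings, lines, add_assoc, and_assoc]

lemma isRelation_balancedPairs : ∀ r ∈ balancedPairs, IsRelation lines r := by
  suffices ∀ s, ∀ x ∈ magicLabelings lines s, ∀ r ∈ balancedPairs,
      (r.1.map x).sum = (r.2.map x).sum from fun r hr s x hx => this s x hx r hr
  intro s x hx
  rw [mem_magicLabelings_lines] at hx
  simp only [balancedPairs, List.forall_mem_cons, List.map_cons, List.map_nil, List.sum_cons,
    List.sum_nil, List.not_mem_nil, IsEmpty.forall_iff, implies_true, and_true]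
  and_intros <;> omega

lemma isRelation_balancedPairs_append_swap :
    ∀ r ∈ balancedPairs ++ balancedPairs.map Prod.swap, IsRelation lines r := by
  refine List.forall_mem_append.2 ⟨isRelation_balancedPairs, List.forall_mem_map.2 ?_⟩
  exact fun r hr s x hx => (isRelation_balancedPairs r hr s x hx).symm

lemma irreducibles_mem_magicLabelings :
    ∀ g ∈ irreducibles, (fun i => g.2.count i) ∈ magicLabelings lines g.1 := by
  simp only [mem_magicLabelings_lines]
  decide

lemma lines_nonempty : lines.Nonempty := ⟨_, mem_insert_self _ _⟩

lemma exists_mem_lines : ∀ i, ∃ l ∈ lines, i ∈ l := by decide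

lemma peel_irreducibles :
    peel (balancedPairs ++ balancedPairs.map Prod.swap) irreducibles [1, 1, 1, 1, 2, 2, 2, 2] =
      [(2 ^ 16 - 1, [1, 4, 18, 36, 50, 36, 18, 4, 1, 0, 0])] := by
  decide +kernel

lemma magic4_eq_ncard (s : ℕ) : magic4 s = (magicLabelings lines s).ncard := by
  let e : (Fin 4 → Fin 4 → ℕ) ≃ (Fin 16 → ℕ) :=
    (Equiv.curry (Fin 4) (Fin 4) ℕ).symm.trans (finProdFinEquiv.arrowCongr (Equiv.refl ℕ))
  refine Nat.card_congr (e.subtypeEquiv fun M => ?_)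
  rw [mem_magicLabelings_lines]
  simp only [Fin.forall_fin_succ, Fin.sum_univ_four, IsEmpty.forall_iff, and_true]
  rfl

lemma series_lines : series lines Set.univ = PowerSeries.mk fun s => (magic4 s : ℤ) := by
  simp only [series, Set.inter_univ, magic4_eq_ncard]

lemma ofCoeffs_eq_prod_mul_series_lines :
    ofCoeffs [1, 4, 18, 36, 50, 36, 18, 4, 1, 0, 0] =
      (([1, 1, 1, 1, 2, 2, 2, 2] : List ℕ).map (1 - X ^ ·)).prod * series lines Set.univ := by
  have hzero : series lines (face 16 (2 ^ 16 - 1)) = 1 :=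
    series_face_eq_one lines_nonempty (by decide)
  rw [← value_peel exists_mem_lines lines_nonempty isRelation_balancedPairs_append_swap
    irreducibles_mem_magicLabelings, peel_irreducibles, value_cons, hzero, value, List.map_nil,
    List.sum_nil, mul_one, add_zero]

end MagicLabeling

theorem magic4_generating_function :
    ((1 - PowerSeries.X) ^ 4 * (1 - PowerSeries.X ^ 2) ^ 4 : PowerSeries ℤ) *
      PowerSeries.mk (fun s => (magic4 s : ℤ)) =
    PowerSeries.X ^ 8 + 4 * PowerSeries.X ^ 7 + 18 * PowerSeries.X ^ 6 +
      36 * PowerSeries.X ^ 5 + 50 * PowerSeries.X ^ 4 + 36 * PowerSeries.X ^ 3 +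
      18 * PowerSeries.X ^ 2 + 4 * PowerSeries.X + 1 := by
  have h := MagicLabeling.ofCoeffs_eq_prod_mul_series_lines
  simp only [MagicLabeling.ofCoeffs, MagicLabeling.series_lines, List.foldr_cons, List.foldr_nil,
    List.map_cons, List.map_nil, List.prod_cons, List.prod_nil, map_zero, map_one, map_ofNat] at h
  linear_combination -h
end

section
/- For every positive integer s, the number of lattice points in the dilation sP of the truncated cube P, namely the cardinality of {x ∈ ℤ³ : 0 ≤ x_i ≤ s for i = 1,2,3, and 3(|x₁−sε₁|+|x₂−sε₂|+|x₃−sε₃|) ≥ s for every ε ∈ {0,1}³}, equals (77/81)s³ + (23/9)s² + (19/9)s + 1 if s ≡ 0 (mod 3); equals (77/81)s³ + (61/27)s² − (7/27)s − 239/81 if s ≡ 1 (mod 3); and equals (77/81)s³ + (65/27)s² + (29/27)s − 31/81 if s ≡ 2 (mod 3). -/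
open Finset

/-!
Cut off each vertex of the cube `[0, s]^ι` by removing the lattice points at ℓ¹-distance at most
`n` from it. Distinct vertices are at ℓ¹-distance at least `s`, so for `2 * n < s` the removed
corners are disjoint, and each is a reflected copy of the simplex `{a ∈ ℕ^ι | ∑ i, a i ≤ n}`,
counted by stars and bars. Cutting at one `k`-th of the edges means
`n = ⌈s / k⌉ - 1 = ⌊(s - 1) / k⌋`; for `k = 3` this is an affine function of `s` on each
residue class modulo `3`.
-/

section

variable {ι : Type*}

theorem card_piAntidiag_nat [DecidableEq ι] (t : Finset ι) (n : ℕ) :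
    #(piAntidiag t n) = (#t).multichoose n := by
  rw [← card_finsuppAntidiag_nat_eq_multichoose, finsuppAntidiag, card_map, card_attach]

theorem pairwiseDisjoint_piAntidiag {μ : Type*} [DecidableEq ι] [AddCommMonoid μ]
    [HasAntidiagonal μ] [DecidableEq μ] (t : Finset ι) (N : Set μ) :
    N.PairwiseDisjoint (piAntidiag t) := by
  refine fun m _ n _ hmn => disjoint_left.mpr fun a ham han => hmn ?_
  exact (mem_piAntidiag.mp ham).1.symm.trans (mem_piAntidiag.mp han).1

/-- The vertex `sε` of the cube `[0, s]^ι`, with `true` encoding the coordinate `1` of `ε`. -/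
def cubeVertex (s : ℕ) (ε : ι → Bool) : ι → ℤ := fun i => if ε i then s else 0

/-- The point of `ℤ^ι` reached from the vertex `sε` of `[0, s]^ι` by moving `a i` steps inwards
along each axis `i`; it lies outside the cube when some `a i` exceeds `s`. -/
def inwardFromVertex (s : ℕ) (ε : ι → Bool) (a : ι → ℕ) : ι → ℤ :=
  fun i => if ε i then s - a i else a i

theorem inwardFromVertex_injective (s : ℕ) (ε : ι → Bool) :
    Function.Injective (inwardFromVertex s ε) := by
  intro a b hab
  funext i
  have hi := congrFun hab i
  cases hε : ε i <;> simpa [inwardFromVertex, hε] using hi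

variable [Fintype ι]

/-- The ℓ¹-distance between two points of the lattice `ℤ^ι`. -/
def l1Dist (x y : ι → ℤ) : ℤ := ∑ i, |x i - y i|

theorem l1Dist_triangle_left (x y z : ι → ℤ) : l1Dist x y ≤ l1Dist z x + l1Dist z y := by
  rw [l1Dist, l1Dist, l1Dist, ← sum_add_distrib]
  gcongr with i
  rw [abs_sub_comm (z i) (x i)]
  exact abs_sub_le (x i) (z i) (y i)

theorem le_l1Dist_cubeVertex (s : ℕ) {ε δ : ι → Bool} (h : ε ≠ δ) :
    (s : ℤ) ≤ l1Dist (cubeVertex s ε) (cubeVertex s δ) := by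
  obtain ⟨i, hi⟩ := Function.ne_iff.mp h
  calc (s : ℤ) = |cubeVertex s ε i - cubeVertex s δ i| := by
        cases hε : ε i <;> cases hδ : δ i <;> simp_all [cubeVertex]
    _ ≤ l1Dist (cubeVertex s ε) (cubeVertex s δ) :=
        single_le_sum (f := fun j => |cubeVertex s ε j - cubeVertex s δ j|)
          (fun j _ => abs_nonneg _) (mem_univ i)

theorem l1Dist_inwardFromVertex (s : ℕ) (ε : ι → Bool) (a : ι → ℕ) :
    l1Dist (inwardFromVertex s ε a) (cubeVertex s ε) = ∑ i, a i := by
  rw [l1Dist, Nat.cast_sum]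
  refine sum_congr rfl fun i _ => ?_
  cases hε : ε i <;> simp [inwardFromVertex, cubeVertex, hε]

variable [DecidableEq ι]

variable (ι) in
/-- The lattice points of the cube `[0, s]^ι`. -/
noncomputable def latticeCube (s : ℕ) : Finset (ι → ℤ) := Icc 0 fun _ => s

/-- The lattice points of `[0, s]^ι` at ℓ¹-distance at most `n` from the vertex `sε`. -/
noncomputable def cubeCorner (s n : ℕ) (ε : ι → Bool) : Finset (ι → ℤ) :=
  {x ∈ latticeCube ι s | l1Dist x (cubeVertex s ε) ≤ n}

variable (ι) in
/-- The lattice points of `[0, s]^ι` at ℓ¹-distance more than `n` from every vertex. -/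
noncomputable def truncatedLatticeCube (s n : ℕ) : Finset (ι → ℤ) :=
  {x ∈ latticeCube ι s | ∀ ε, n < l1Dist x (cubeVertex s ε)}

variable (ι) in
/-- The points of `ℕ^ι` with coordinate sum at most `n`, sliced by coordinate sum. -/
def latticeSimplex (n : ℕ) : Finset (ι → ℕ) := (range (n + 1)).biUnion (piAntidiag univ)

theorem mem_latticeCube {s : ℕ} {x : ι → ℤ} : x ∈ latticeCube ι s ↔ ∀ i, 0 ≤ x i ∧ x i ≤ s := by
  simp [latticeCube, Pi.le_def, forall_and]

theorem mem_latticeSimplex {n : ℕ} {a : ι → ℕ} : a ∈ latticeSimplex ι n ↔ ∑ i, a i ≤ n := by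
  simp [latticeSimplex]

theorem card_latticeCube (s : ℕ) : #(latticeCube ι s) = (s + 1) ^ Fintype.card ι := by
  simp [latticeCube, Pi.card_Icc]

theorem card_latticeSimplex (n : ℕ) :
    #(latticeSimplex ι n) = (Fintype.card ι + n).choose (Fintype.card ι) := by
  rw [latticeSimplex, card_biUnion (pairwiseDisjoint_piAntidiag univ _)]
  simp only [card_piAntidiag_nat, card_univ, Nat.sum_range_multichoose]
  rw [add_comm]

theorem inwardFromVertex_mem_latticeCube {s : ℕ} {ε : ι → Bool} {a : ι → ℕ} :
    inwardFromVertex s ε a ∈ latticeCube ι s ↔ ∀ i, a i ≤ s := by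
  rw [mem_latticeCube]
  refine forall_congr' fun i => ?_
  cases hε : ε i <;> simp [inwardFromVertex, hε]

theorem exists_inwardFromVertex_eq {s : ℕ} (ε : ι → Bool) {x : ι → ℤ} (hx : x ∈ latticeCube ι s) :
    ∃ a, inwardFromVertex s ε a = x := by
  refine ⟨fun i => (x i - cubeVertex s ε i).natAbs, funext fun i => ?_⟩
  have hxi := mem_latticeCube.mp hx i
  cases hε : ε i <;> simp only [inwardFromVertex, cubeVertex, hε] <;> grind

theorem cubeCorner_eq_image {s n : ℕ} (h : n ≤ s) (ε : ι → Bool) :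
    cubeCorner s n ε = (latticeSimplex ι n).image (inwardFromVertex s ε) := by
  ext x
  rw [cubeCorner, mem_filter, mem_image]
  constructor
  · rintro ⟨hx, hdist⟩
    obtain ⟨a, rfl⟩ := exists_inwardFromVertex_eq ε hx
    rw [l1Dist_inwardFromVertex, Nat.cast_le] at hdist
    exact ⟨a, mem_latticeSimplex.mpr hdist, rfl⟩
  · rintro ⟨a, ha, rfl⟩
    rw [mem_latticeSimplex] at ha
    have ha_le : ∀ i, a i ≤ s := fun i =>
      (single_le_sum (fun _ _ => Nat.zero_le _) (mem_univ i)).trans (ha.trans h)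
    rw [l1Dist_inwardFromVertex, Nat.cast_le]
    exact ⟨inwardFromVertex_mem_latticeCube.mpr ha_le, ha⟩

theorem card_cubeCorner {s n : ℕ} (h : n ≤ s) (ε : ι → Bool) :
    #(cubeCorner s n ε) = (Fintype.card ι + n).choose (Fintype.card ι) := by
  rw [cubeCorner_eq_image h, card_image_of_injective _ (inwardFromVertex_injective s ε),
    card_latticeSimplex]

theorem disjoint_cubeCorner {s n : ℕ} (h : 2 * n < s) {ε δ : ι → Bool} (hne : ε ≠ δ) :
    Disjoint (cubeCorner s n ε) (cubeCorner s n δ) := by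
  refine disjoint_left.mpr fun x hxε hxδ => ?_
  have hε := (mem_filter.mp hxε).2
  have hδ := (mem_filter.mp hxδ).2
  have hle := (le_l1Dist_cubeVertex s hne).trans (l1Dist_triangle_left _ _ x)
  lia

theorem truncatedLatticeCube_eq_sdiff (s n : ℕ) :
    truncatedLatticeCube ι s n = latticeCube ι s \ univ.biUnion (cubeCorner s n) := by
  ext x
  simp only [truncatedLatticeCube, cubeCorner, mem_filter, mem_sdiff, mem_biUnion, mem_univ,
    true_and, not_exists, not_and, not_le]
  exact and_congr_right fun hx => forall_congr' fun ε => (imp_iff_right hx).symm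

theorem card_truncatedLatticeCube_add {s n : ℕ} (h : 2 * n < s) :
    #(truncatedLatticeCube ι s n) +
      2 ^ Fintype.card ι * (Fintype.card ι + n).choose (Fintype.card ι) =
      (s + 1) ^ Fintype.card ι := by
  have hcorners : #(univ.biUnion (cubeCorner (ι := ι) s n)) =
      2 ^ Fintype.card ι * (Fintype.card ι + n).choose (Fintype.card ι) := by
    rw [card_biUnion fun ε _ δ _ hne => disjoint_cubeCorner h hne,
      sum_congr rfl fun ε _ => card_cubeCorner (by lia : n ≤ s) ε]
    simp
  have hsub : univ.biUnion (cubeCorner (ι := ι) s n) ⊆ latticeCube ι s :=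
    biUnion_subset.mpr fun ε _ => filter_subset _ _
  rw [truncatedLatticeCube_eq_sdiff, ← hcorners, card_sdiff_add_card_eq_card hsub,
    card_latticeCube]

theorem mem_truncatedLatticeCube_pred_div {s k : ℕ} (hs : 0 < s) (hk : 0 < k) {x : ι → ℤ} :
    x ∈ truncatedLatticeCube ι s ((s - 1) / k) ↔
      (∀ i, 0 ≤ x i ∧ x i ≤ (s : ℤ)) ∧
        ∀ ε : ι → Bool, (s : ℤ) ≤ k * ∑ i, |x i - (if ε i then (s : ℤ) else 0)| := by
  rw [truncatedLatticeCube, mem_filter, mem_latticeCube]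
  refine and_congr_right fun _ => forall_congr' fun ε => ?_
  rw [Int.natCast_div, Int.ediv_lt_iff_lt_mul (by exact_mod_cast hk), mul_comm,
    Nat.cast_pred hs, Int.sub_one_lt_iff]
  rfl

theorem card_truncatedLatticeCube_fin_three {s n : ℕ} (h : 2 * n < s) :
    (#(truncatedLatticeCube (Fin 3) s n) : ℚ) =
      (s + 1) ^ 3 - 4 / 3 * ((n + 1) * (n + 2) * (n + 3)) := by
  have hcard := card_truncatedLatticeCube_add (ι := Fin 3) h
  have hchoose := Nat.ascFactorial_eq_factorial_mul_choose n 3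
  simp only [Fintype.card_fin, add_comm 3 n] at hcard
  simp only [Nat.ascFactorial, Nat.factorial] at hchoose
  qify at hcard hchoose
  linear_combination hcard + 4 / 3 * hchoose

end

theorem truncated_cube_ehrhart (s : ℕ) (hs : 0 < s) :
    (s % 3 = 0 →
      ((Nat.card {x : Fin 3 → ℤ //
          (∀ i, 0 ≤ x i ∧ x i ≤ (s : ℤ)) ∧
          (∀ ε : Fin 3 → Bool,
            (s : ℤ) ≤ 3 * ∑ i, |x i - (if ε i then (s : ℤ) else 0)|)} : ℚ) =
        77 / 81 * (s : ℚ) ^ 3 + 23 / 9 * (s : ℚ) ^ 2 + 19 / 9 * (s : ℚ) + 1)) ∧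
    (s % 3 = 1 →
      ((Nat.card {x : Fin 3 → ℤ //
          (∀ i, 0 ≤ x i ∧ x i ≤ (s : ℤ)) ∧
          (∀ ε : Fin 3 → Bool,
            (s : ℤ) ≤ 3 * ∑ i, |x i - (if ε i then (s : ℤ) else 0)|)} : ℚ) =
        77 / 81 * (s : ℚ) ^ 3 + 61 / 27 * (s : ℚ) ^ 2 - 7 / 27 * (s : ℚ) - 239 / 81)) ∧
    (s % 3 = 2 →
      ((Nat.card {x : Fin 3 → ℤ //
          (∀ i, 0 ≤ x i ∧ x i ≤ (s : ℤ)) ∧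
          (∀ ε : Fin 3 → Bool,
            (s : ℤ) ≤ 3 * ∑ i, |x i - (if ε i then (s : ℤ) else 0)|)} : ℚ) =
        77 / 81 * (s : ℚ) ^ 3 + 65 / 27 * (s : ℚ) ^ 2 + 29 / 27 * (s : ℚ) - 31 / 81)) := by
  have hdepth : 2 * ((s - 1) / 3) < s := by lia
  have hcount := Nat.subtype_card _ fun x : Fin 3 → ℤ =>
    mem_truncatedLatticeCube_pred_div hs three_pos
  simp only [Nat.cast_ofNat] at hcount
  rw [hcount, card_truncatedLatticeCube_fin_three hdepth]
  refine ⟨fun h => ?_, fun h => ?_, fun h => ?_⟩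
  · obtain ⟨n, rfl⟩ : ∃ n, s = 3 * n + 3 := ⟨s / 3 - 1, by lia⟩
    rw [show (3 * n + 3 - 1) / 3 = n by lia]
    push_cast
    ring
  · obtain ⟨n, rfl⟩ : ∃ n, s = 3 * n + 1 := ⟨s / 3, by lia⟩
    rw [show (3 * n + 1 - 1) / 3 = n by lia]
    push_cast
    ring
  · obtain ⟨n, rfl⟩ : ∃ n, s = 3 * n + 2 := ⟨s / 3, by lia⟩
    rw [show (3 * n + 2 - 1) / 3 = n by lia]
    push_cast
    ring
end
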